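/- The squared sub-Riemannian distance of the octonionic Hopf fibration is recovered from the subelliptic heat kernel by d²(r,η) = −lim_{t→0⁺} 4t·ln p_t(r,η); in particular: (1) for every η ∈ [0,π), lim_{t→0⁺} (−4t·ln p_t(0,η)) = 2πη − η², and (2) for every r ∈ [0,π/2), lim_{t→0⁺} (−4t·ln p_t(r,0)) = r². Consequently the sub-Riemannian distance satisfies d(0,η) = √(2πη − η²) and d(r,0) = r, and the sub-Riemannian diameter of S^{15} equals π. -/

import Mathlib

open Real MeasureTheory Filter Topology

/-- Jacobi polynomial `P_k^{3,b}` (with `b = m+3` octonionic, `b = m+1` quaternionic),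
given by the polynomial extension of the Rodrigues formula. -/
noncomputable def jacP (k b : ℕ) : Polynomial ℝ :=
  Polynomial.C ((-1 : ℝ) ^ k / (2 ^ k * (Nat.factorial k : ℝ))) *
    (Polynomial.derivative^[k]
        ((1 - Polynomial.X) ^ (k + 3) * (1 + Polynomial.X) ^ (b + k)) /
      ((1 - Polynomial.X) ^ 3 * (1 + Polynomial.X) ^ b))

/-- Normalized eigenfunction `h_m` of the radial Laplacian on `S^7`. -/
noncomputable def hOct (m : ℕ) (η : ℝ) : ℝ :=
  (Real.Gamma (7 / 2) / (Real.sqrt π * Real.Gamma 3)) *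
    ∫ φ in (0 : ℝ)..π,
      (((Real.cos η : ℂ) + Complex.I * ((Real.sin η * Real.cos φ : ℝ) : ℂ)) ^ m).re *
        (Real.sin φ) ^ 5

/-- Coefficient `α_{k,m}`. -/
noncomputable def alphOct (k m : ℕ) : ℝ :=
  (96 / π ^ 8) * (m + 3) * (2 * k + m + 7) *
    (Nat.choose (k + m + 6) (k + m + 3)) * (Nat.choose (m + 5) m)

/-- Subelliptic heat kernel of the octonionic Hopf fibration, in cylindric coordinates. -/
noncomputable def pOct (t r η : ℝ) : ℝ :=
  ∑' m : ℕ, ∑' k : ℕ,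
    alphOct k m * hOct m η * Real.exp (-(4 * ((k * (k + m + 7) + 2 * m : ℕ) : ℝ)) * t) *
      (Real.cos r) ^ m * (jacP k (m + 3)).eval (Real.cos (2 * r))

/-- Coefficient `β_{k,m}` of the quaternionic heat kernel. -/
noncomputable def betQ (k m : ℕ) : ℝ :=
  (Real.Gamma 4 / (2 * π ^ 6)) * (2 * k + m + 5) * (m + 1) *
    (Nat.choose (k + m + 4) (k + m + 1))

/-- Subelliptic heat kernel of the quaternionic Hopf fibration on `S^11`. -/
noncomputable def pQuat (t r η : ℝ) : ℝ :=
  ∑' m : ℕ, ∑' k : ℕ,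
    betQ k m * Real.exp (-(4 * ((k * (k + m + 5) + 2 * m : ℕ) : ℝ)) * t) *
      (Real.sin ((m + 1) * η) / Real.sin η) *
      (Real.cos r) ^ m * (jacP k (m + 1)).eval (Real.cos (2 * r))

/-- Gegenbauer polynomial `C_m^5` (polynomial extension to all real `x`). -/
noncomputable def geg5 (m : ℕ) (x : ℝ) : ℝ :=
  ∑ j ∈ Finset.range (m / 2 + 1),
    (-1 : ℝ) ^ j * (Nat.factorial (m - j + 4)) /
      ((Nat.factorial 4) * (Nat.factorial j) * (Nat.factorial (m - 2 * j))) * (2 * x) ^ (m - 2 * j)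

/-- Radial heat kernel of the round sphere `S^11`, as a function of `cos δ`. -/
noncomputable def qS11 (t x : ℝ) : ℝ :=
  (Real.Gamma 5 / (2 * π ^ 6)) *
    ∑' m : ℕ, (m + 5) * Real.exp (-((m * (m + 10) : ℕ) : ℝ) * t) * geg5 m x

/-- The kernel `g_t(η,y)` appearing in the integral representation. -/
noncomputable def gInt (t η y : ℝ) : ℝ :=
  (Real.sin η)⁻¹ ^ 3 *
    (Real.cos (η * y / (2 * t)) * (2 * y) * (η - 3 * t * Real.cot η) +
      Real.sin (η * y / (2 * t)) *
        (8 * t ^ 2 * Real.cot η ^ 2 + 4 * t ^ 2 * ((Real.sin η)⁻¹) ^ 2 -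
          6 * t * η * Real.cot η + 2 * t + η ^ 2 - y ^ 2))

/-- Theta-type function `V(t,δ)`. -/
noncomputable def Vtheta (t δ : ℝ) : ℝ :=
  (1 / Real.sqrt (4 * π * t)) * ∑' k : ℤ, Real.exp (-(δ - 2 * k * π) ^ 2 / (4 * t))

/-- The operator `f ↦ -(1/(2π sin δ)) f'`. -/
noncomputable def Dop (f : ℝ → ℝ) : ℝ → ℝ :=
  fun δ => -(1 / (2 * π * Real.sin δ)) * deriv f δ

/-!
On the vertical axis `r = 0` the eigenvalues are `4(ab - 10)` with `a = k + 2` and `b = k + m + 5`.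
After symmetrization `pOct t 0 η` is a double sum over `a, b ≥ 1` of a polynomial in `a, b` times
`exp(-4tab) cos(a x + b y - phase)`, where `x = η` and `y = 2π - η`. Lipschitz' formula, applied in
each of the two variables, turns it into a series of derivatives of `X^ν exp(-XY/(4t))` at the
points `X ∈ x + 2πℕ`, `Y ∈ y + 2πℕ` and their reflections. The smallest exponent is
`xy = 2πη - η²`, and the leading coefficient does not vanish for `0 < η < π`.

On the horizontal axis `η = 0` the Jacobi polynomials are expanded in powers of `cos² r`. Summing
over `k` first, one obtains the Taylor coefficients of `Θ_t(x) = ∑ⱼ exp(-t j²) Tⱼ(x)`, which are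
nonnegative by the Jacobi triple product, so that the alternating series becomes a series of
nonnegative terms. By Poisson summation `Θ_t(cos δ)` is comparable to `√(π/t) exp(-δ²/(4t))`. The
rows `m = 0, 1` alone bound the kernel below by `Θ_t(cos r₁)` for any `r₁ > r`. For the upper bound,
tilting the binomial weights by `exp(2t(m+3))` absorbs the growing factor `exp(t(m+3)²)` of the
`m`-th row, since `cos r · cosh y ≤ cos √(r² - y²)`.
-/

/-! ### Jacobi polynomials -/

section JacobiPolynomials

open Polynomial

theorem coeff_one_add_C_mul_X_pow {R : Type*} [CommRing R] (z : R) (n k : ℕ) :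
    ((1 + C z * X) ^ n).coeff k = n.choose k * z ^ k := by
  have h : (1 + C z * X) ^ n = ((1 + X : R[X]) ^ n).comp (C z * X) := by simp
  rw [h, comp_C_mul_X_coeff, coeff_one_add_X_pow]

-- Both sides are the coefficient of `X ^ k` in `(1 + (z - 1) X) ^ n * (1 + z X) ^ a`; on the right
-- the first factor is expanded as `((1 + z X) - X) ^ n`.
theorem sum_choose_mul_choose_mul_sub_one_pow {R : Type*} [CommRing R] (z : R) (a n k : ℕ) :
    ∑ j ∈ Finset.range (k + 1),
        (n.choose j * (z - 1) ^ j) * (a.choose (k - j) * z ^ (k - j)) =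
      ∑ l ∈ Finset.range (k + 1),
        (-1) ^ l * n.choose l * (n - l + a).choose (k - l) * z ^ (k - l) := by
  have hexpand : ((1 + C (z - 1) * X) ^ n * (1 + C z * X) ^ a : R[X]) =
      ∑ l ∈ Finset.range (n + 1),
        C ((-1) ^ l * (n.choose l : R)) * ((1 + C z * X) ^ (n - l + a) * X ^ l) := by
    rw [show (1 + C (z - 1) * X : R[X]) = -X + (1 + C z * X) by simp; ring, add_pow (-X),
      Finset.sum_mul]
    refine Finset.sum_congr rfl fun l _ ↦ ?_
    rw [neg_pow, pow_add]
    simp only [map_mul, map_pow, map_neg, map_one, map_natCast]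
    ring
  have hcoeff := congr_arg (coeff · k) hexpand
  simp only [finsetSum_coeff, coeff_C_mul, coeff_mul_X_pow', coeff_one_add_C_mul_X_pow] at hcoeff
  simp only [coeff_mul, coeff_one_add_C_mul_X_pow,
    Finset.Nat.sum_antidiagonal_eq_sum_range_succ_mk] at hcoeff
  refine hcoeff.trans ?_
  refine Finset.sum_congr_of_eq_on_inter (fun l _ hl ↦ ?_) (fun l _ hl ↦ ?_) fun l _ hl ↦ ?_
  · rw [if_neg (by simpa using hl), mul_zero]
  · rw [Nat.choose_eq_zero_of_lt (by simpa using hl)]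
    simp
  · rw [if_pos (Finset.mem_range_succ_iff.1 hl)]
    ring

theorem iterate_derivative_C_add_C_mul_X_pow {R : Type*} [CommRing R] (c l : R) (n j : ℕ) :
    derivative^[j] ((C c + C l * X) ^ n) =
      C (l ^ j * n.descFactorial j) * (C c + C l * X) ^ (n - j) := by
  induction j with
  | zero => simp
  | succ j ih =>
    rw [Function.iterate_succ_apply', ih, Nat.descFactorial_succ]
    simp [derivative_pow, pow_succ, Nat.sub_sub]
    ring

theorem choose_mul_descFactorial_mul_descFactorial (m n : ℕ) {j k : ℕ} (hj : j ≤ k) :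
    k.choose j * (m.descFactorial (k - j) * n.descFactorial j) =
      k.factorial * (m.choose (k - j) * n.choose j) := by
  rw [Nat.descFactorial_eq_factorial_mul_choose, Nat.descFactorial_eq_factorial_mul_choose,
    ← Nat.choose_mul_factorial_mul_factorial hj]
  ring

theorem iterate_derivative_jacobiWeight {R : Type*} [CommRing R] (a b k : ℕ) :
    derivative^[k] ((1 - X : R[X]) ^ (k + a) * (1 + X) ^ (b + k)) =
      ((1 - X) ^ a * (1 + X) ^ b) *
        ((-1) ^ k * (k.factorial : R[X]) *
          ∑ j ∈ Finset.range (k + 1), ((b + k).choose j : R[X]) * (X - 1) ^ j *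
            (((k + a).choose (k - j) : R[X]) * (1 + X) ^ (k - j))) := by
  rw [iterate_derivative_mul, Finset.mul_sum, Finset.mul_sum]
  refine Finset.sum_congr rfl fun j hj ↦ ?_
  have hj : j ≤ k := Finset.mem_range_succ_iff.1 hj
  obtain ⟨u, rfl⟩ := Nat.exists_eq_add_of_le hj
  have hfactor := congr_arg (Nat.cast : ℕ → R[X])
    (choose_mul_descFactorial_mul_descFactorial (j + u + a) (b + (j + u)) hj)
  have hright := iterate_derivative_X_add_pow (b + (j + u)) j (1 : R)
  rw [map_one, add_comm X] at hright
  rw [Nat.add_sub_cancel_left] at hfactor ⊢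
  have hsign : (X - 1 : R[X]) ^ j = (-1) ^ j * (1 - X) ^ j := by
    rw [← neg_sub, neg_pow]
  have hsq : (-1 : R[X]) ^ j * (-1) ^ j = 1 := by rw [← mul_pow]; simp
  have hleft := iterate_derivative_C_add_C_mul_X_pow (1 : R) (-1) (j + u + a) u
  simp only [map_one, map_neg, map_mul, map_pow, map_natCast, neg_one_mul, ← sub_eq_add_neg]
    at hleft
  rw [hleft, hright, nsmul_eq_mul, hsign,
    show j + u + a - u = a + j by omega, show b + (j + u) - j = b + u by omega]
  push_cast at hfactor
  simp only [pow_add]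
  linear_combination (-1 : R[X]) ^ u * (1 - X) ^ a * (1 - X) ^ j * (1 + X) ^ b * (1 + X) ^ u *
    (hfactor - ((j + u).factorial : R[X]) * (j + u + a).choose u * (b + (j + u)).choose j * hsq)

theorem jacP_eq_sum (k b : ℕ) :
    jacP k b = C ((2 ^ k : ℝ)⁻¹) * ∑ j ∈ Finset.range (k + 1),
      ((b + k).choose j : ℝ[X]) * (X - 1) ^ j *
        (((k + 3).choose (k - j) : ℝ[X]) * (1 + X) ^ (k - j)) := by
  have hweight : ((1 - X : ℝ[X]) ^ 3 * (1 + X) ^ b) ≠ 0 := by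
    intro h
    simpa using congr_arg (Polynomial.eval 0) h
  have hconst : C ((-1 : ℝ) ^ k / (2 ^ k * (k.factorial : ℝ))) *
      ((-1) ^ k * (k.factorial : ℝ[X])) = C ((2 ^ k : ℝ)⁻¹) := by
    rw [← C_1, ← C_neg, ← C_pow, ← C_eq_natCast, ← C_mul, ← C_mul]
    congr 1
    have hk : (k.factorial : ℝ) ≠ 0 := by positivity
    have hsq : (-1 : ℝ) ^ k * (-1) ^ k = 1 := by rw [← mul_pow]; simp
    field_simp
    linear_combination hsq
  rw [jacP, iterate_derivative_jacobiWeight, mul_div_cancel_left₀ _ hweight, ← mul_assoc, hconst]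

theorem jacP_eval_one (k b : ℕ) : (jacP k b).eval 1 = (k + 3).choose 3 := by
  rw [jacP_eq_sum, eval_mul, eval_finsetSum, Finset.sum_eq_single 0]
  · have hone : (1 + 1 : ℝ) = 2 := by norm_num
    have hsymm : (k + 3).choose k = (k + 3).choose 3 := Nat.choose_symm_add
    simp [hsymm, hone]
    field_simp
  · intro j _ hj
    simp [hj]
  · simp

theorem jacP_eval_cos_two_mul (k b : ℕ) (r : ℝ) :
    (jacP k b).eval (cos (2 * r)) = ∑ l ∈ Finset.range (k + 1),
      (-1) ^ l * (b + k).choose l * (b + k - l + (k + 3)).choose (k - l) *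
        (cos r ^ 2) ^ (k - l) := by
  rw [← sum_choose_mul_choose_mul_sub_one_pow, jacP_eq_sum, eval_mul, eval_C, eval_finsetSum,
    Finset.mul_sum]
  refine Finset.sum_congr rfl fun j hj ↦ ?_
  obtain ⟨u, rfl⟩ := Nat.exists_eq_add_of_le (Finset.mem_range_succ_iff.1 hj)
  simp only [eval_mul, eval_natCast, eval_pow, eval_sub, eval_add, eval_one, eval_X, cos_two_mul]
  rw [Nat.add_sub_cancel_left, show 2 * cos r ^ 2 - 1 - 1 = 2 * (cos r ^ 2 - 1) by ring,
    show 1 + (2 * cos r ^ 2 - 1) = 2 * cos r ^ 2 by ring, mul_pow 2, mul_pow 2, pow_add]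
  field_simp

end JacobiPolynomials

/-! ### The spherical function `hOct` -/

section SphericalFunction

open Polynomial in
-- Repeated integration by parts: `∑ (-1) ^ i q⁽ⁱ⁾ P⁽⁴⁻ⁱ⁾` with `q = (1 - X ^ 2) ^ 2`.
theorem integral_one_sub_sq_sq_mul_iterate_derivative (P : ℂ[X]) :
    ∫ u in (-1 : ℝ)..1, (1 - (u : ℂ) ^ 2) ^ 2 * (derivative^[5] P).eval (u : ℂ) =
      (8 * (derivative^[2] P).eval 1 - 24 * (derivative P).eval 1 + 24 * P.eval 1) -
        (8 * (derivative^[2] P).eval (-1) + 24 * (derivative P).eval (-1) + 24 * P.eval (-1)) := by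
  set F : ℂ[X] := (1 - X ^ 2) ^ 2 * derivative^[4] P - (4 * X ^ 3 - 4 * X) * derivative^[3] P +
    (12 * X ^ 2 - 4) * derivative^[2] P - 24 * X * derivative P + 24 * P with hF
  have hderiv : derivative F = (1 - X ^ 2) ^ 2 * derivative^[5] P := by
    have hofNat (n : ℕ) [n.AtLeastTwo] : derivative (ofNat(n) : ℂ[X]) = 0 :=
      derivative_ofNat n
    simp only [hF, Function.iterate_succ_apply', Function.iterate_zero, id, derivative_add,
      derivative_sub, derivative_mul, derivative_pow, derivative_X, derivative_one, hofNat,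
      Nat.cast_ofNat, map_ofNat]
    ring
  have hF' (u : ℝ) : HasDerivAt (fun u : ℝ ↦ F.eval (u : ℂ))
      ((1 - (u : ℂ) ^ 2) ^ 2 * (derivative^[5] P).eval (u : ℂ)) u := by
    refine (F.hasDerivAt (u : ℂ)).comp_ofReal.congr_deriv ?_
    simp [hderiv]
  rw [intervalIntegral.integral_eq_sub_of_hasDerivAt (fun u _ ↦ hF' u)
    (by apply Continuous.intervalIntegrable; fun_prop)]
  simp [hF]
  ring

theorem integral_affine_pow_mul_one_sub_sq_sq (m : ℕ) (c l : ℂ) :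
    (m + 5).descFactorial 5 * l ^ 5 *
        ∫ u in (-1 : ℝ)..1, (c + l * u) ^ m * (1 - (u : ℂ) ^ 2) ^ 2 =
      8 * (m + 5) * (m + 4) * l ^ 2 * ((c + l) ^ (m + 3) - (c - l) ^ (m + 3)) -
        24 * (m + 5) * l * ((c + l) ^ (m + 4) + (c - l) ^ (m + 4)) +
        24 * ((c + l) ^ (m + 5) - (c - l) ^ (m + 5)) := by
  have h := integral_one_sub_sq_sq_mul_iterate_derivative
    ((Polynomial.C c + Polynomial.C l * Polynomial.X) ^ (m + 5))
  have hfirst := iterate_derivative_C_add_C_mul_X_pow c l (m + 5) 1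
  rw [Function.iterate_one] at hfirst
  simp only [iterate_derivative_C_add_C_mul_X_pow, hfirst, Polynomial.eval_mul,
    Polynomial.eval_pow, Polynomial.eval_add, Polynomial.eval_C, Polynomial.eval_X, mul_one,
    mul_neg, Nat.add_sub_cancel, show m + 5 - 2 = m + 3 by omega, show m + 5 - 1 = m + 4 by omega,
    ← sub_eq_add_neg] at h
  rw [← intervalIntegral.integral_const_mul]
  refine Eq.trans (intervalIntegral.integral_congr fun u _ ↦ ?_) (h.trans ?_)
  · ring
  · simp [Nat.descFactorial_succ]
    ring

theorem hOct_eq_re_integral (m : ℕ) (η : ℝ) :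
    hOct m η = 15 / 16 * (∫ u in (-1 : ℝ)..1,
      (cos η + Complex.I * sin η * u) ^ m * (1 - (u : ℂ) ^ 2) ^ 2).re := by
  set f : ℝ → ℂ := fun u ↦ (cos η + Complex.I * sin η * u) ^ m * (1 - (u : ℂ) ^ 2) ^ 2 with hf
  have hfc : Continuous f := by fun_prop
  have hre : (∫ u in (-1 : ℝ)..1, f u).re = ∫ u in (-1 : ℝ)..1, (f u).re :=
    (Complex.reCLM.intervalIntegral_comp_comm (hfc.intervalIntegrable _ _)).symm
  have hsubst := intervalIntegral.integral_comp_mul_deriv (g := fun u ↦ (f u).re) (a := 0) (b := π)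
    (fun φ _ ↦ hasDerivAt_cos φ) (by fun_prop) (Complex.continuous_re.comp hfc)
  rw [cos_zero, cos_pi, intervalIntegral.integral_symm (-1) 1, ← hre] at hsubst
  have hconst : Gamma (7 / 2) / (√π * Gamma 3) = 15 / 16 := by
    have hhalf : Gamma (7 / 2) = 15 / 8 * √π := by
      rw [show (7 / 2 : ℝ) = 5 / 2 + 1 by norm_num, Gamma_add_one (by norm_num),
        show (5 / 2 : ℝ) = 3 / 2 + 1 by norm_num, Gamma_add_one (by norm_num),
        show (3 / 2 : ℝ) = 1 / 2 + 1 by norm_num, Gamma_add_one (by norm_num), Gamma_one_half_eq]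
      ring
    have hthree : Gamma 3 = 2 := by
      rw [show (3 : ℝ) = 2 + 1 by norm_num, Gamma_add_one (by norm_num), Gamma_two, mul_one]
    rw [hhalf, hthree]
    field_simp
    norm_num
  rw [hOct, hconst, ← neg_eq_iff_eq_neg.2 hsubst, ← intervalIntegral.integral_neg]
  congr 1
  refine intervalIntegral.integral_congr fun φ _ ↦ ?_
  have hsin : (1 - (cos φ : ℂ) ^ 2) ^ 2 = ((sin φ ^ 4 : ℝ) : ℂ) := by
    exact_mod_cast show (1 - cos φ ^ 2) ^ 2 = sin φ ^ 4 by rw [← sin_sq]; ring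
  simp only [hf, hsin, Function.comp, Complex.re_mul_ofReal]
  push_cast
  ring_nf

theorem hOct_zero (m : ℕ) : hOct m 0 = 1 := by
  have hint : ∫ u in (-1 : ℝ)..1, (1 - u ^ 2) ^ 2 = 16 / 15 := by
    rw [show (fun u : ℝ ↦ (1 - u ^ 2) ^ 2) = fun u ↦ 1 - 2 * u ^ 2 + u ^ 4 by ext; ring,
      intervalIntegral.integral_add, intervalIntegral.integral_sub]
    · norm_num
    all_goals exact Continuous.intervalIntegrable (by fun_prop) _ _
  have hcast : ∫ u in (-1 : ℝ)..1, (1 - (u : ℂ) ^ 2) ^ 2 = ((16 / 15 : ℝ) : ℂ) := by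
    rw [← hint, ← intervalIntegral.integral_ofReal]
    simp
  simp [hOct_eq_re_integral, hcast]

/-- The third derivative `T_j'''` of the Chebyshev polynomial at `cos η`, in closed form. -/
noncomputable def chebyshevThirdDeriv (j η : ℝ) : ℝ :=
  -j ^ 3 * sin (j * η) / sin η ^ 3 - 3 * j ^ 2 * cos η * cos (j * η) / sin η ^ 4 +
    j * sin (j * η) * (sin η ^ 2 + 3 * cos η ^ 2) / sin η ^ 5

theorem descFactorial_mul_sin_pow_mul_hOct (m : ℕ) (η : ℝ) :
    (m + 5).descFactorial 5 * sin η ^ 5 * hOct m η =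
      15 * (-((m + 5) * (m + 4) * sin η ^ 2 * sin ((m + 3) * η)) -
        3 * (m + 5) * sin η * cos ((m + 4) * η) + 3 * sin ((m + 5) * η)) := by
  have hpow (n : ℕ) (x : ℝ) : (cos x + Complex.I * sin x : ℂ) ^ n =
      cos (n * x) + Complex.I * sin (n * x) := by
    push_cast
    rw [mul_comm Complex.I, Complex.cos_add_sin_mul_I_pow, mul_comm Complex.I]
  have hminus (n : ℕ) : (cos η - Complex.I * sin η : ℂ) ^ n =
      cos (n * η) - Complex.I * sin (n * η) := by
    simpa [← sub_eq_add_neg] using hpow n (-η)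
  have h := integral_affine_pow_mul_one_sub_sq_sq m (cos η) (Complex.I * sin η)
  rw [hOct_eq_re_integral]
  set J := ∫ u in (-1 : ℝ)..1, (cos η + Complex.I * sin η * u) ^ m * (1 - (u : ℂ) ^ 2) ^ 2
  have hI5 : Complex.I ^ 5 = Complex.I := by
    rw [pow_succ, Complex.I_pow_four, one_mul]
  have hJ : (((m + 5).descFactorial 5 * sin η ^ 5 : ℝ) : ℂ) * J =
      ((16 * (-((m + 5) * (m + 4) * sin η ^ 2 * sin ((m + 3) * η)) -
        3 * (m + 5) * sin η * cos ((m + 4) * η) + 3 * sin ((m + 5) * η)) : ℝ) : ℂ) := by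
    apply mul_left_cancel₀ Complex.I_ne_zero
    rw [mul_pow, hI5, hpow, hpow, hpow, hminus, hminus, hminus] at h
    push_cast at h ⊢
    linear_combination h + 16 * Complex.I * Complex.I_sq * (m + 5) * (m + 4) *
      Complex.sin η ^ 2 * Complex.sin ((m + 3) * η)
  have hre := congr_arg Complex.re hJ
  rw [Complex.re_ofReal_mul, Complex.ofReal_re] at hre
  linear_combination 15 / 16 * hre

theorem mul_choose_mul_hOct (m : ℕ) {η : ℝ} (hη : sin η ≠ 0) :
    (m + 3) * (m + 5).choose m * hOct m η = chebyshevThirdDeriv (m + 3) η / 8 := by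
  have h := descFactorial_mul_sin_pow_mul_hOct m η
  have hchoose : ((m + 5).descFactorial 5 : ℝ) = 120 * (m + 5).choose m := by
    rw [Nat.descFactorial_eq_factorial_mul_choose, ← Nat.choose_symm_add]
    norm_num [Nat.factorial]
  have hcos : cos η ^ 2 = 1 - sin η ^ 2 := by rw [cos_sq']
  rw [hchoose, show ((m : ℝ) + 5) * η = (m + 3) * η + 2 * η by ring,
    show ((m : ℝ) + 4) * η = (m + 3) * η + η by ring, sin_add _ (2 * η), cos_add,
    sin_two_mul, cos_two_mul] at h
  rw [chebyshevThirdDeriv]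
  field_simp
  linear_combination h / 15 + 3 * sin ((m + 3) * η) * hcos

end SphericalFunction

/-! ### Lipschitz' formula and its double version -/

section Lipschitz

theorem tendsto_pow_mul_cexp_neg_mul_atTop {w : ℂ} (hw : 0 < w.re) (k : ℕ) :
    Tendsto (fun s : ℝ ↦ (s : ℂ) ^ k * Complex.exp (-w * s)) atTop (𝓝 0) := by
  rw [tendsto_zero_iff_norm_tendsto_zero]
  refine ((isLittleO_pow_exp_pos_mul_atTop (k := k) hw).tendsto_div_nhds_zero).congr' ?_
  filter_upwards [eventually_ge_atTop 0] with s hs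
  simp [Complex.norm_exp, exp_neg, div_eq_mul_inv, abs_of_nonneg hs]

theorem integrableOn_pow_mul_cexp_neg_mul {w : ℂ} (hw : 0 < w.re) (k : ℕ) :
    IntegrableOn (fun s : ℝ ↦ (s : ℂ) ^ k * Complex.exp (-w * s)) (Set.Ioi 0) := by
  have h := integrableOn_rpow_mul_exp_neg_mul_rpow (p := 1) (s := k) (b := w.re)
    (by linarith [k.cast_nonneg (α := ℝ)]) one_pos hw
  refine Integrable.mono' h (Continuous.aestronglyMeasurable (by fun_prop)) ?_
  filter_upwards [ae_restrict_mem measurableSet_Ioi] with s hs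
  simp [Complex.norm_exp, abs_of_pos (Set.mem_Ioi.1 hs)]

theorem integral_pow_mul_cexp_neg_mul {w : ℂ} (hw : 0 < w.re) (k : ℕ) :
    ∫ s in Set.Ioi (0 : ℝ), (s : ℂ) ^ k * Complex.exp (-w * s) = k.factorial / w ^ (k + 1) := by
  have hw0 : w ≠ 0 := fun h ↦ hw.ne' (by simp [h])
  have hexp (s : ℝ) : HasDerivAt (fun s : ℝ ↦ Complex.exp (-w * s))
      (Complex.exp (-w * s) * -w) s := by
    simpa using (((hasDerivAt_id (s : ℂ)).const_mul (-w)).cexp).comp_ofReal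
  induction k with
  | zero =>
    have h := integral_exp_mul_complex_Ioi (a := -w) (by simpa using hw) 0
    simpa [neg_div, div_neg] using h
  | succ k ih =>
    have hpow (s : ℝ) : HasDerivAt (fun s : ℝ ↦ (s : ℂ) ^ (k + 1)) ((k + 1) * (s : ℂ) ^ k) s := by
      simpa using ((hasDerivAt_id (s : ℂ)).pow (k + 1)).comp_ofReal
    have hparts := integral_Ioi_of_hasDerivAt_of_tendsto' (a := 0) (m := (0 : ℂ))
      (fun s _ ↦ (hpow s).mul (hexp s)) ?_
      (tendsto_pow_mul_cexp_neg_mul_atTop hw (k + 1))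
    · rw [integral_congr_ae (g := fun s : ℝ ↦ (k + 1) * ((s : ℂ) ^ k * Complex.exp (-w * s)) -
          w * ((s : ℂ) ^ (k + 1) * Complex.exp (-w * s))) (ae_of_all _ fun s ↦ by ring),
        integral_sub ((integrableOn_pow_mul_cexp_neg_mul hw k).const_mul _)
          ((integrableOn_pow_mul_cexp_neg_mul hw (k + 1)).const_mul _),
        integral_const_mul, integral_const_mul, ih] at hparts
      simp only [Complex.ofReal_zero, Pi.mul_apply, zero_pow k.succ_ne_zero, zero_mul,
        sub_zero] at hparts
      have hcancel := div_mul_cancel₀ (k.factorial : ℂ) (pow_ne_zero (k + 1) hw0)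
      rw [Nat.factorial_succ, eq_div_iff (pow_ne_zero _ hw0)]
      push_cast
      linear_combination -w ^ (k + 1) * hparts + (k + 1) * hcancel
    · refine (((integrableOn_pow_mul_cexp_neg_mul hw k).const_mul (k + 1 : ℂ)).sub
        ((integrableOn_pow_mul_cexp_neg_mul hw (k + 1)).const_mul w)).congr
        (ae_of_all _ fun s ↦ ?_)
      simp only [Pi.sub_apply]
      ring

theorem summable_inv_add_two_pi_I_mul_pow (w : ℂ) {k : ℕ} (hk : 2 ≤ k) :
    Summable fun n : ℤ ↦ ((w + 2 * π * Complex.I * n) ^ k)⁻¹ := by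
  have hpi : (2 * π * Complex.I : ℂ) ≠ 0 := by simp [pi_ne_zero]
  have h := (EisensteinSeries.linear_right_summable (w / (2 * π * Complex.I)) 1
    (k := k) (by exact_mod_cast hk)).mul_left ((2 * π * Complex.I) ^ k)⁻¹
  refine h.congr fun n ↦ ?_
  rw [zpow_natCast, Int.cast_one, one_mul, ← mul_inv, ← mul_pow, mul_add, mul_div_cancel₀ _ hpi]

/-- The function `s ↦ s ^ k * exp (-w * s)` cut off to the positive half-line, to which Poisson
summation is applied in Lipschitz' formula; the cut-off is written `max s 0` so that continuity is
visible for `0 < k`. -/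
noncomputable def halfLinePowExp (k : ℕ) (w : ℂ) (s : ℝ) : ℂ :=
  ((max s 0 : ℝ) : ℂ) ^ k * Complex.exp (-w * s)

theorem fourier_halfLinePowExp {k : ℕ} (hk : k ≠ 0) {w : ℂ} (hw : 0 < w.re) (n : ℝ) :
    FourierTransform.fourier (halfLinePowExp k w) n =
      k.factorial / (w + 2 * π * Complex.I * n) ^ (k + 1) := by
  rw [fourier_real_eq_integral_exp_smul, ← integral_pow_mul_cexp_neg_mul (by simpa using hw),
    ← integral_indicator measurableSet_Ioi]
  congr 1 with s
  rcases lt_or_ge 0 s with hs | hs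
  · rw [Set.indicator_of_mem (Set.mem_Ioi.2 hs), halfLinePowExp, smul_eq_mul, max_eq_left hs.le,
      mul_left_comm, ← Complex.exp_add]
    congr 2
    push_cast
    ring
  · rw [Set.indicator_of_notMem (by simpa using hs), halfLinePowExp, max_eq_right hs]
    simp [hk]

theorem halfLinePowExp_isBigO {k : ℕ} (hk : k ≠ 0) {w : ℂ} (hw : 0 < w.re) :
    halfLinePowExp k w =O[cocompact ℝ] fun s ↦ |s| ^ (-2 : ℝ) := by
  rw [cocompact_eq_atBot_atTop, Asymptotics.isBigO_sup]
  constructor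
  · refine (Asymptotics.isBigO_zero (E' := ℂ) _ _).congr' ?_ EventuallyEq.rfl
    filter_upwards [eventually_le_atBot 0] with s hs
    simp [halfLinePowExp, max_eq_right hs, hk]
  · refine Asymptotics.IsBigO.of_bound 1 ?_
    filter_upwards [eventually_gt_atTop 0, (tendsto_zero_iff_norm_tendsto_zero.1
      (tendsto_pow_mul_cexp_neg_mul_atTop hw (k + 2))).eventually
      (eventually_le_nhds zero_lt_one)] with s hs hdecay
    rw [halfLinePowExp, max_eq_left hs.le, one_mul, norm_of_nonneg (by positivity),
      abs_of_pos hs, rpow_neg hs.le, ← one_div, le_div_iff₀ (by positivity), rpow_two]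
    refine le_of_eq_of_le ?_ hdecay
    rw [norm_mul, norm_mul, norm_pow, norm_pow, Complex.norm_real, norm_of_nonneg hs.le]
    ring

theorem tsum_int_halfLinePowExp {k : ℕ} (hk : k ≠ 0) (w : ℂ) {θ : ℝ} (h0 : 0 ≤ θ) (h1 : θ < 1) :
    ∑' n : ℤ, halfLinePowExp k w (θ + n) =
      ∑' n : ℕ, (θ + n : ℂ) ^ k * Complex.exp (-w * (θ + n)) := by
  rw [← Nat.cast_injective (R := ℤ).tsum_eq]
  · refine tsum_congr fun n ↦ ?_
    rw [Int.cast_natCast, halfLinePowExp, max_eq_left (by positivity)]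
    push_cast
    rfl
  · refine Function.support_subset_iff'.2 fun n hn ↦ ?_
    have hneg : n + 1 ≤ 0 := by
      by_contra! h
      exact hn ⟨n.toNat, by simp; lia⟩
    have : (n : ℝ) + 1 ≤ 0 := by exact_mod_cast hneg
    simp [halfLinePowExp, max_eq_right (show θ + n ≤ 0 by linarith), hk]

theorem lipschitz_summation_formula {k : ℕ} (hk : k ≠ 0) {w : ℂ} (hw : 0 < w.re) {θ : ℝ}
    (h0 : 0 ≤ θ) (h1 : θ < 1) :
    ∑' n : ℕ, (θ + n : ℂ) ^ k * Complex.exp (-w * (θ + n)) =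
      k.factorial * ∑' a : ℤ, Complex.exp (2 * π * Complex.I * a * θ) /
        (w + 2 * π * Complex.I * a) ^ (k + 1) := by
  have hfourier (n : ℤ) := fourier_halfLinePowExp hk hw n
  simp only [Complex.ofReal_intCast] at hfourier
  have hcont : Continuous (halfLinePowExp k w) := by unfold halfLinePowExp; fun_prop
  have hpoisson := tsum_eq_tsum_fourier_of_rpow_decay_of_summable hcont
    (b := 2) one_lt_two (halfLinePowExp_isBigO hk hw) ?_ θ
  · simp only [hfourier, fourier_coe_apply] at hpoisson
    rw [← tsum_int_halfLinePowExp hk w h0 h1, hpoisson, ← tsum_mul_left]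
    refine tsum_congr fun a ↦ ?_
    simp only [Complex.ofReal_one, div_one]
    ring
  · simp only [hfourier, div_eq_mul_inv]
    exact (summable_inv_add_two_pi_I_mul_pow w (by lia)).mul_left _

end Lipschitz

section LatticeSum

theorem summable_pow_mul_pow_mul_exp_neg (i j : ℕ) {c δ : ℝ} (hc : 0 < c) (hδ : 0 < δ) :
    Summable fun p : ℕ × ℕ ↦ (p.1 + 1 : ℝ) ^ i * (p.2 + 1 : ℝ) ^ j *
      exp (-(c * ((p.1 + δ) * (p.2 + δ)))) := by
  have hone (i : ℕ) : Summable fun n : ℕ ↦ (n + 1 : ℝ) ^ i * exp (-(c * δ) * n) := by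
    refine (((summable_nat_add_iff 1).2 (summable_pow_mul_exp_neg_nat_mul i
      (mul_pos hc hδ))).mul_left (exp (c * δ))).congr fun n ↦ ?_
    rw [mul_left_comm, ← exp_add]
    push_cast
    ring_nf
  refine ((hone i).mul_of_nonneg (hone j) (fun n ↦ by positivity) fun n ↦ by positivity)
    |>.of_nonneg_of_le (fun p ↦ by positivity) fun p ↦ ?_
  have hle : -(c * ((p.1 + δ) * (p.2 + δ))) ≤ -(c * δ) * p.1 + -(c * δ) * p.2 := by
    have : 0 ≤ c * (p.1 * p.2 + δ * δ) := by positivity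
    linarith
  calc _ ≤ (p.1 + 1 : ℝ) ^ i * (p.2 + 1 : ℝ) ^ j *
        exp (-(c * δ) * p.1 + -(c * δ) * p.2) := by gcongr
    _ = _ := by rw [exp_add]; ring

/-- The general term `a ^ μ * b ^ ν * exp (-4tab) * cos (ax + by - (μ + ν + 1)π/2)` of the
oscillating series over `a, b ≥ 1` into which the heat kernel on the vertical axis is expanded; here
`(a, b) = (p.1 + 1, p.2 + 1)`. The phase is chosen so that `∂ₓ` maps the `(μ, ν)` term to minus the
`(μ + 1, ν)` term. -/
noncomputable def oscTerm (μ ν : ℕ) (t x y : ℝ) (p : ℕ × ℕ) : ℝ :=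
  (p.1 + 1) ^ μ * (p.2 + 1) ^ ν * exp (-(4 * t * ((p.1 + 1) * (p.2 + 1)))) *
    cos ((p.1 + 1) * x + (p.2 + 1) * y - (μ + ν + 1) * (π / 2))

theorem abs_oscTerm_le (μ ν : ℕ) (t x y : ℝ) (p : ℕ × ℕ) :
    |oscTerm μ ν t x y p| ≤
      (p.1 + 1) ^ μ * (p.2 + 1) ^ ν * exp (-(4 * t * ((p.1 + 1) * (p.2 + 1)))) := by
  rw [oscTerm, abs_mul, abs_of_nonneg (by positivity)]
  exact mul_le_of_le_one_right (by positivity) (abs_cos_le_one _)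

theorem summable_oscTerm (μ ν : ℕ) {t : ℝ} (ht : 0 < t) (x y : ℝ) :
    Summable (oscTerm μ ν t x y) :=
  .of_norm_bounded (summable_pow_mul_pow_mul_exp_neg μ ν (by positivity) one_pos)
    (abs_oscTerm_le μ ν t x y)

/-- The term of the absolutely convergent lattice sum over `(a, N) ∈ ℤ²` whose two iterated
summations, each evaluated by Lipschitz' formula, are the two sides of the duality. -/
noncomputable def latticeTerm (k : ℕ) (t x y : ℝ) (a N : ℤ) : ℂ :=
  Complex.exp (Complex.I * (a * x)) / (4 * t * a - Complex.I * y + 2 * π * Complex.I * N) ^ k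

theorem latticeTerm_neg_neg (k : ℕ) (t x y : ℝ) (a N : ℤ) :
    latticeTerm k t x y (-a) (-N) = (-1) ^ k * latticeTerm k t (-x) (-y) a N := by
  have hden : (4 * t * ↑(-a) - Complex.I * y + 2 * π * Complex.I * ↑(-N) : ℂ) =
      -1 * (4 * t * a - Complex.I * ↑(-y) + 2 * π * Complex.I * N) := by
    push_cast
    ring
  have hsign : ((-1 : ℂ) ^ k)⁻¹ = (-1) ^ k := by rw [← inv_pow, inv_neg_one]
  rw [latticeTerm, latticeTerm, hden, mul_pow, div_eq_mul_inv, mul_inv, hsign]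
  push_cast
  ring_nf

theorem latticeTerm_add_two_pi_left (k : ℕ) (t x y : ℝ) (a N : ℤ) :
    latticeTerm k t (x + 2 * π) y a N = latticeTerm k t x y a N := by
  have hphase : Complex.I * (a * ((x + 2 * π : ℝ) : ℂ)) =
      Complex.I * (a * x) + a * (2 * π * Complex.I) := by
    push_cast
    ring
  rw [latticeTerm, latticeTerm, hphase, Complex.exp_add, Complex.exp_int_mul_two_pi_mul_I, mul_one]

theorem latticeTerm_add_two_pi_right (k : ℕ) (t x y : ℝ) (a N M : ℤ) :
    latticeTerm k t x (y + 2 * π * M) a N = latticeTerm k t x y a (N - M) := by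
  rw [latticeTerm, latticeTerm]
  push_cast
  ring_nf

theorem sq_norm_latticeTerm_denom (t y : ℝ) (a N : ℤ) :
    ‖(4 * t * a - Complex.I * y + 2 * π * Complex.I * N : ℂ)‖ ^ 2 =
      (4 * t * a) ^ 2 + (2 * π * N - y) ^ 2 := by
  rw [show (4 * t * a - Complex.I * y + 2 * π * Complex.I * N : ℂ) =
    ((4 * t * a : ℝ) : ℂ) + ((2 * π * N - y : ℝ) : ℂ) * Complex.I by push_cast; ring,
    Complex.sq_norm, Complex.normSq_add_mul_I]

theorem exists_mul_le_sq_norm_latticeTerm_denom {t y : ℝ} (ht : 0 < t)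
    (hy : y ∈ Set.Ioo 0 (2 * π)) :
    ∃ κ : ℝ, 0 < κ ∧ ∀ a N : ℤ, κ * ((1 + |(a : ℝ)|) * (1 + |(N : ℝ)|)) ≤
      ‖(4 * t * a - Complex.I * y + 2 * π * Complex.I * N : ℂ)‖ ^ 2 := by
  obtain ⟨hy0, hy1⟩ := hy
  obtain ⟨κ, hκ, hκt, hκy, hκy'⟩ : ∃ κ : ℝ, 0 < κ ∧ κ ≤ 4 * t ∧ κ ≤ y / 2 ∧ κ ≤ (2 * π - y) / 2 :=
    ⟨min (4 * t) (min (y / 2) ((2 * π - y) / 2)),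
      lt_min (by linarith) (lt_min (by linarith) (by linarith)), min_le_left _ _,
      (min_le_right _ _).trans (min_le_left _ _), (min_le_right _ _).trans (min_le_right _ _)⟩
  refine ⟨2 / 3 * κ ^ 2, by positivity, fun a N ↦ ?_⟩
  have ha : (κ * |(a : ℝ)|) ^ 2 ≤ (4 * t * a) ^ 2 := by
    rw [← sq_abs (4 * t * a), abs_mul, abs_of_pos (by positivity : 0 < 4 * t)]
    gcongr
  have hN : κ * (1 + |(N : ℝ)|) ≤ |2 * π * N - y| := by
    rcases le_or_gt N 0 with h | h
    · have h' : (N : ℝ) ≤ 0 := by exact_mod_cast h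
      rw [abs_of_nonpos h', abs_of_nonpos (by nlinarith [pi_pos])]
      nlinarith [pi_pos]
    · have h' : (1 : ℝ) ≤ N := by exact_mod_cast h
      rw [abs_of_nonneg (by linarith : (0 : ℝ) ≤ N), abs_of_nonneg (by nlinarith [pi_pos])]
      nlinarith [pi_pos]
  have hquad (u v : ℝ) (hv : 0 ≤ v) : 2 / 3 * ((1 + u) * (1 + v)) ≤ u ^ 2 + (1 + v) ^ 2 := by
    nlinarith [sq_nonneg (u - v), sq_nonneg (u - 1)]
  rw [sq_norm_latticeTerm_denom, ← sq_abs (2 * π * N - y)]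
  calc _ = κ ^ 2 * (2 / 3 * ((1 + |(a : ℝ)|) * (1 + |(N : ℝ)|))) := by ring
    _ ≤ κ ^ 2 * (|(a : ℝ)| ^ 2 + (1 + |(N : ℝ)|) ^ 2) := by gcongr; exact hquad _ _ (abs_nonneg _)
    _ = (κ * |(a : ℝ)|) ^ 2 + (κ * (1 + |(N : ℝ)|)) ^ 2 := by ring
    _ ≤ _ := by gcongr

theorem summable_one_add_abs_int_rpow {s : ℝ} (hs : s < -1) :
    Summable fun n : ℤ ↦ (1 + |(n : ℝ)|) ^ s := by
  have h : Summable fun n : ℕ ↦ (1 + |((n : ℤ) : ℝ)|) ^ s := by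
    refine ((summable_nat_add_iff 1).2 (summable_nat_rpow.2 hs)).congr fun n ↦ ?_
    simp [add_comm]
  exact .of_nat_of_neg h (by simpa using h)

theorem summable_latticeTerm {k : ℕ} (hk : 3 ≤ k) {t y : ℝ} (ht : 0 < t) (x : ℝ)
    (hy : y ∈ Set.Ioo 0 (2 * π)) :
    Summable (Function.uncurry (latticeTerm k t x y)) := by
  obtain ⟨κ, hκ, hlow⟩ := exists_mul_le_sq_norm_latticeTerm_denom ht hy
  have hs : -(k / 2 : ℝ) < -1 := by
    have : (3 : ℝ) ≤ k := by exact_mod_cast hk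
    linarith
  have hsum := (summable_one_add_abs_int_rpow hs).mul_of_nonneg (summable_one_add_abs_int_rpow hs)
    (fun n ↦ by positivity) fun n ↦ by positivity
  refine .of_norm_bounded (hsum.mul_left (κ ^ (-(k / 2 : ℝ)))) ?_
  rintro ⟨a, N⟩
  have hexp : ‖Complex.exp (Complex.I * (a * x))‖ = 1 := by
    rw [mul_comm]
    exact_mod_cast Complex.norm_exp_ofReal_mul_I (a * x)
  simp only [Function.uncurry_apply_pair, latticeTerm]
  set W : ℂ := 4 * t * a - Complex.I * y + 2 * π * Complex.I * N
  have hpow : ‖W‖ ^ k = (‖W‖ ^ 2) ^ (k / 2 : ℝ) := by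
    rw [← rpow_natCast, ← rpow_natCast, ← rpow_mul (norm_nonneg _)]
    push_cast
    ring_nf
  rw [norm_div, norm_pow, hexp, hpow, one_div, ← rpow_neg (by positivity),
    ← mul_rpow (by positivity) (by positivity), ← mul_rpow (by positivity) (by positivity)]
  exact rpow_le_rpow_of_nonpos (by positivity) (hlow a N) (by linarith)

end LatticeSum

section Duality

theorem tsum_latticeTerm_right {ν : ℕ} (hν : ν ≠ 0) {t : ℝ} (ht : 0 < t) (x y : ℝ) {a : ℤ}
    (ha : 0 < a) :
    ∑' N : ℤ, latticeTerm (ν + 1) t x y a N = (ν.factorial : ℂ)⁻¹ *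
      ∑' b : ℕ, (b + 1 : ℂ) ^ ν * Complex.exp (-(4 * t * a * (b + 1)) +
        Complex.I * (a * x + (b + 1) * y)) := by
  have hw : 0 < (4 * t * a - Complex.I * y : ℂ).re := by
    have : 0 < 4 * t * a := by have : (0 : ℝ) < a := mod_cast ha; positivity
    simpa using this
  have hsum : Summable fun b : ℕ ↦ (b : ℂ) ^ ν *
      Complex.exp (-(4 * t * a - Complex.I * y : ℂ) * b) := by
    refine .of_norm_bounded (summable_pow_mul_exp_neg_nat_mul ν hw) fun b ↦ ?_
    rw [norm_mul, norm_pow, Complex.norm_exp]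
    simp
  have h := lipschitz_summation_formula hν hw le_rfl one_pos
  simp only [Complex.ofReal_zero, mul_zero, Complex.exp_zero, zero_add, one_div] at h
  rw [hsum.tsum_eq_zero_add, Nat.cast_zero, zero_pow hν, zero_mul, zero_add] at h
  simp only [latticeTerm, div_eq_mul_inv (Complex.exp _), tsum_mul_left]
  rw [eq_inv_mul_iff_mul_eq₀ (by exact_mod_cast ν.factorial_ne_zero), mul_left_comm,
    ← h, ← tsum_mul_left]
  refine tsum_congr fun b ↦ ?_
  rw [mul_left_comm, ← Complex.exp_add]
  push_cast
  ring_nf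

theorem tsum_latticeTerm_left {ν : ℕ} (hν : ν ≠ 0) {t x Y : ℝ} (ht : 0 < t)
    (hx : x ∈ Set.Ioo 0 (2 * π)) (hY : 0 < Y) :
    ∑' a : ℤ, latticeTerm (ν + 1) t x Y a 0 =
      2 * π * (Complex.I * (1 / (4 * t) : ℝ)) ^ (ν + 1) / ν.factorial *
        ∑' n : ℕ, ((x + 2 * π * n) ^ ν * exp (-(1 / (4 * t) * Y * (x + 2 * π * n))) : ℝ) := by
  obtain ⟨hx0, hx1⟩ := hx
  have htC : (t : ℂ) ≠ 0 := by exact_mod_cast ht.ne'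
  have hpiC : (π : ℂ) ≠ 0 := by exact_mod_cast pi_ne_zero
  set w : ℂ := ((2 * π * (1 / (4 * t)) * Y : ℝ) : ℂ) with hw
  have h := lipschitz_summation_formula (θ := x / (2 * π)) hν (w := w)
    (by rw [hw, Complex.ofReal_re]; positivity) (by positivity)
    (by rwa [div_lt_one (by positivity)])
  have hden (a : ℤ) : (4 * t * a - Complex.I * Y : ℂ) =
      (2 * π * (Complex.I * (1 / (4 * t) : ℝ)))⁻¹ * (w + 2 * π * Complex.I * a) := by
    rw [hw]
    push_cast
    field_simp
    linear_combination -(Y : ℂ) * Complex.I_sq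
  have hterm (a : ℤ) : latticeTerm (ν + 1) t x Y a 0 =
      (2 * π * (Complex.I * (1 / (4 * t) : ℝ))) ^ (ν + 1) *
        (Complex.exp (2 * π * Complex.I * a * (x / (2 * π) : ℝ)) /
          (w + 2 * π * Complex.I * a) ^ (ν + 1)) := by
    rw [latticeTerm, Int.cast_zero, mul_zero, add_zero, hden, mul_pow, inv_pow, div_mul_eq_div_div,
      div_inv_eq_mul, mul_comm (Complex.exp _), mul_div_assoc]
    congr 3
    push_cast
    field_simp
  rw [tsum_congr hterm, tsum_mul_left, Complex.ofReal_tsum, eq_comm, div_mul_eq_mul_div,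
    div_eq_iff (by exact_mod_cast ν.factorial_ne_zero), mul_comm _ (ν.factorial : ℂ), mul_left_comm,
    ← h, ← tsum_mul_left, ← tsum_mul_left]
  refine tsum_congr fun n ↦ ?_
  have hX : (x + 2 * π * n : ℂ) = 2 * π * ((x / (2 * π) : ℝ) + n) := by
    push_cast
    field_simp
  push_cast [hw]
  push_cast at hX
  rw [hX, mul_pow (2 * π : ℂ) _ ν, mul_pow (2 * π : ℂ) _ (ν + 1)]
  ring_nf

end Duality

/-- The building block `X ↦ X ^ ν * exp (-cX)` of the series dual to the oscillating one. -/
noncomputable def powExp (ν : ℕ) (c X : ℝ) : ℝ := X ^ ν * exp (-c * X)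

theorem contDiff_powExp (ν : ℕ) (c : ℝ) {n : WithTop ℕ∞} : ContDiff ℝ n (powExp ν c) := by
  unfold powExp
  fun_prop

theorem iteratedDeriv_powExp (μ ν : ℕ) (c X : ℝ) :
    iteratedDeriv μ (powExp ν c) X = (∑ l ∈ Finset.range (μ + 1),
      μ.choose l * (ν.descFactorial l * X ^ (ν - l)) * (-c) ^ (μ - l)) * exp (-c * X) := by
  unfold powExp
  rw [iteratedDeriv_fun_mul (by fun_prop) (by fun_prop), Finset.sum_mul]
  refine Finset.sum_congr rfl fun l _ ↦ ?_
  rw [iteratedDeriv_pow, iteratedDeriv_exp_const_mul]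
  ring

theorem abs_iteratedDeriv_powExp_le (μ ν : ℕ) {c X : ℝ} (hc : 0 ≤ c) (hX : 0 ≤ X) :
    |iteratedDeriv μ (powExp ν c) X| ≤ (ν + c) ^ μ * (1 + X) ^ ν * exp (-c * X) := by
  rw [iteratedDeriv_powExp, abs_mul, abs_of_pos (exp_pos _), add_pow, Finset.sum_mul]
  gcongr
  refine (Finset.abs_sum_le_sum_abs _ _).trans (Finset.sum_le_sum fun l _ ↦ ?_)
  rw [abs_mul, abs_pow, abs_neg, abs_of_nonneg hc, abs_of_nonneg (by positivity)]
  have hX' : X ^ (ν - l) ≤ (1 + X) ^ ν :=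
    (pow_le_pow_left₀ hX (by linarith) _).trans (pow_le_pow_right₀ (by linarith) (Nat.sub_le _ _))
  calc _ ≤ μ.choose l * ((ν : ℝ) ^ l * (1 + X) ^ ν) * c ^ (μ - l) := by
        gcongr
        exact_mod_cast Nat.descFactorial_le_pow ν l
    _ = _ := by ring

/-- The general term, indexed by `ℕ × ℕ`, of the series dual to `oscTerm`: the `μ`-th derivative of
`X ^ ν * exp (-τXY)` at the lattice translates `X = x + 2π p.1`, `Y = y + 2π p.2`. -/
noncomputable def dualTerm (μ ν : ℕ) (τ x y : ℝ) (p : ℕ × ℕ) : ℝ :=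
  iteratedDeriv μ (powExp ν (τ * (y + 2 * π * p.2))) (x + 2 * π * p.1)

theorem hasDerivAt_dualTerm (μ ν : ℕ) (τ x y : ℝ) (p : ℕ × ℕ) :
    HasDerivAt (fun x ↦ dualTerm μ ν τ x y p) (dualTerm (μ + 1) ν τ x y p) x := by
  have hdiff := (contDiff_powExp ν (τ * (y + 2 * π * p.2))
    (n := (μ + 1 : ℕ))).differentiable_iteratedDeriv μ (mod_cast μ.lt_succ_self)
  rw [dualTerm, iteratedDeriv_succ]
  exact (hdiff _).hasDerivAt.comp_add_const x _

theorem summable_dualBound (μ ν : ℕ) {τ y ε R : ℝ} (hτ : 0 < τ) (hy : 0 < y) (hε : 0 < ε)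
    (hR : 0 ≤ R) : Summable fun p : ℕ × ℕ ↦ (ν + τ * (y + 2 * π * p.2)) ^ μ *
      (1 + (R + 2 * π * p.1)) ^ ν * exp (-(τ * (y + 2 * π * p.2)) * (ε + 2 * π * p.1)) := by
  obtain ⟨δ, hδ, hδε, hδy⟩ : ∃ δ : ℝ, 0 < δ ∧ 2 * π * δ ≤ ε ∧ 2 * π * δ ≤ y := by
    refine ⟨min ε y / (2 * π), by positivity, ?_, ?_⟩ <;> rw [mul_div_cancel₀ _ (by positivity)]
    exacts [min_le_left _ _, min_le_right _ _]
  refine .of_nonneg_of_le (fun p ↦ by positivity) (fun p ↦ ?_)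
    ((summable_pow_mul_pow_mul_exp_neg ν μ (c := τ * (2 * π) ^ 2) (by positivity)
      hδ).mul_left ((ν + τ * (y + 2 * π)) ^ μ * (1 + R + 2 * π) ^ ν))
  have hX : 1 + (R + 2 * π * p.1) ≤ (1 + R + 2 * π) * (p.1 + 1) := by
    have : 0 ≤ (1 + R) * p.1 := by positivity
    linarith [pi_pos]
  have hY : ν + τ * (y + 2 * π * p.2) ≤ (ν + τ * (y + 2 * π)) * (p.2 + 1) := by
    have : 0 ≤ ν * p.2 + τ * (y * p.2 + 2 * π) := by positivity
    linarith
  have hXY : -(τ * (y + 2 * π * p.2)) * (ε + 2 * π * p.1) ≤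
      -(τ * (2 * π) ^ 2 * ((p.1 + δ) * (p.2 + δ))) := by
    calc _ ≤ -(τ * (2 * π * δ + 2 * π * p.2)) * (2 * π * δ + 2 * π * p.1) := by
          simp only [neg_mul, neg_le_neg_iff]
          gcongr
      _ = _ := by ring
  calc _ ≤ ((ν + τ * (y + 2 * π)) * (p.2 + 1)) ^ μ * ((1 + R + 2 * π) * (p.1 + 1)) ^ ν *
        exp (-(τ * (2 * π) ^ 2 * ((p.1 + δ) * (p.2 + δ)))) := by gcongr
    _ = _ := by rw [mul_pow, mul_pow]; ring

theorem exists_summable_bound_dualTerm (μ ν : ℕ) {τ y ε R : ℝ} (hτ : 0 < τ) (hy : 0 < y)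
    (hε : 0 < ε) (hR : 0 ≤ R) : ∃ u : ℕ × ℕ → ℝ, Summable u ∧
      ∀ p, ∀ x ∈ Set.Ioo ε R, |dualTerm μ ν τ x y p| ≤ u p := by
  refine ⟨_, summable_dualBound μ ν hτ hy hε hR, fun p x ⟨hεx, hxR⟩ ↦ ?_⟩
  have hx : 0 < x := hε.trans hεx
  refine (abs_iteratedDeriv_powExp_le μ ν (by positivity) (by positivity)).trans ?_
  simp only [neg_mul]
  gcongr

theorem summable_dualTerm (μ ν : ℕ) {τ x y : ℝ} (hτ : 0 < τ) (hx : 0 < x) (hy : 0 < y) :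
    Summable (dualTerm μ ν τ x y) := by
  obtain ⟨u, hu, hbound⟩ := exists_summable_bound_dualTerm μ ν hτ hy (half_pos hx)
    (R := x + 1) (by positivity)
  exact .of_norm_bounded hu fun p ↦ hbound p x ⟨by linarith, by linarith⟩

theorem hasDerivAt_tsum_dualTerm (μ ν : ℕ) {τ x y : ℝ} (hτ : 0 < τ) (hx : 0 < x) (hy : 0 < y) :
    HasDerivAt (fun x ↦ ∑' p, dualTerm μ ν τ x y p) (∑' p, dualTerm (μ + 1) ν τ x y p) x := by
  obtain ⟨u, hu, hbound⟩ :=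
    exists_summable_bound_dualTerm (μ + 1) ν hτ hy (half_pos hx)
    (R := x + 1) (by positivity)
  have hmem : x ∈ Set.Ioo (x / 2) (x + 1) := ⟨by linarith, by linarith⟩
  exact hasDerivAt_tsum_of_isPreconnected hu isOpen_Ioo isPreconnected_Ioo
    (fun p x _ ↦ hasDerivAt_dualTerm μ ν τ x y p) hbound hmem (summable_dualTerm μ ν hτ hx hy) hmem

theorem hasDerivAt_oscTerm (μ ν : ℕ) (t x y : ℝ) (p : ℕ × ℕ) :
    HasDerivAt (fun x ↦ oscTerm μ ν t x y p) (-oscTerm (μ + 1) ν t x y p) x := by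
  have h := ((((((hasDerivAt_id x).const_mul (p.1 + 1 : ℝ)).add_const ((p.2 + 1) * y)).sub_const
    ((μ + ν + 1) * (π / 2)))).cos).const_mul
    ((p.1 + 1 : ℝ) ^ μ * (p.2 + 1) ^ ν * exp (-(4 * t * ((p.1 + 1) * (p.2 + 1)))))
  refine h.congr_deriv ?_
  have hphase : (p.1 + 1) * x + (p.2 + 1) * y - ((μ + 1 : ℕ) + ν + 1) * (π / 2) =
      (p.1 + 1) * x + (p.2 + 1) * y - (μ + ν + 1) * (π / 2) - π / 2 := by
    push_cast
    ring
  simp only [oscTerm, hphase, cos_sub_pi_div_two, id]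
  ring

theorem hasDerivAt_tsum_oscTerm (μ ν : ℕ) {t : ℝ} (ht : 0 < t) (x y : ℝ) :
    HasDerivAt (fun x ↦ ∑' p, oscTerm μ ν t x y p) (-∑' p, oscTerm (μ + 1) ν t x y p) x := by
  rw [← tsum_neg]
  exact hasDerivAt_tsum
    (summable_pow_mul_pow_mul_exp_neg (μ + 1) ν (c := 4 * t) (by positivity) one_pos)
    (fun p x ↦ hasDerivAt_oscTerm μ ν t x y p)
    (fun p x ↦ by rw [norm_neg]; exact abs_oscTerm_le (μ + 1) ν t x y p)
    (summable_oscTerm μ ν ht x y) x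

theorem two_mul_I_pow_mul_cos_sub (k : ℕ) (θ : ℂ) :
    2 * Complex.I ^ k * Complex.cos (θ - k * (π / 2)) =
      Complex.exp (Complex.I * θ) + (-1) ^ k * Complex.exp (-(Complex.I * θ)) := by
  have hI : Complex.exp (k * (π / 2 * Complex.I)) = Complex.I ^ k := by
    rw [Complex.exp_nat_mul, Complex.exp_pi_div_two_mul_I]
  have hneg : (-1 : ℂ) ^ k = Complex.I ^ k * Complex.I ^ k := by
    rw [← mul_pow, Complex.I_mul_I]
  have hl : (θ - k * (π / 2)) * Complex.I = Complex.I * θ - k * (π / 2 * Complex.I) := by ring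
  have hr : -(θ - k * (π / 2)) * Complex.I = -(Complex.I * θ) + k * (π / 2 * Complex.I) := by ring
  rw [Complex.cos, hl, hr, Complex.exp_sub, Complex.exp_add, hI, hneg]
  have := pow_ne_zero k Complex.I_ne_zero
  field_simp

theorem two_mul_I_pow_mul_oscTerm_zero (ν : ℕ) (t x y : ℝ) (n b : ℕ) :
    (2 * Complex.I ^ (ν + 1) * oscTerm 0 ν t x y (n, b) : ℂ) =
      (b + 1) ^ ν * Complex.exp (-(4 * t * ((n + 1 : ℤ) : ℂ) * (b + 1)) +
        Complex.I * (((n + 1 : ℤ) : ℂ) * x + (b + 1) * y)) +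
      (-1) ^ (ν + 1) * ((b + 1) ^ ν * Complex.exp (-(4 * t * ((n + 1 : ℤ) : ℂ) * (b + 1)) +
        Complex.I * (((n + 1 : ℤ) : ℂ) * (-x : ℝ) + (b + 1) * (-y : ℝ)))) := by
  have h := two_mul_I_pow_mul_cos_sub (ν + 1) ((n + 1) * x + (b + 1) * y)
  have hneg : Complex.I * ((n + 1) * -x + (b + 1) * -y : ℂ) =
      -(Complex.I * ((n + 1) * x + (b + 1) * y)) := by ring
  rw [oscTerm]
  push_cast at h ⊢
  rw [Complex.exp_add, Complex.exp_add, hneg, zero_add, pow_zero, one_mul]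
  simp only [← mul_assoc (4 * t : ℂ)] at h ⊢
  linear_combination (b + 1 : ℂ) ^ ν * Complex.exp (-(4 * t * (n + 1) * (b + 1))) * h

theorem summable_pow_mul_cexp_add (ν : ℕ) {t : ℝ} (ht : 0 < t) (x y : ℝ) (n : ℕ) :
    Summable fun b : ℕ ↦ (b + 1 : ℂ) ^ ν *
      Complex.exp (-(4 * t * ((n + 1 : ℤ) : ℂ) * (b + 1)) +
        Complex.I * (((n + 1 : ℤ) : ℂ) * x + (b + 1) * y)) := by
  have h := (summable_pow_mul_pow_mul_exp_neg 0 ν (c := 4 * t) (by positivity)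
    one_pos).prod_factor n
  refine .of_norm_bounded h fun b ↦ le_of_eq ?_
  have hb : ‖(b + 1 : ℂ)‖ = b + 1 := by exact_mod_cast Complex.norm_natCast (b + 1)
  rw [norm_mul, norm_pow, Complex.norm_exp, hb]
  simp [mul_assoc]

theorem tsum_latticeTerm_right_add_neg {ν : ℕ} (hν : ν ≠ 0) {t : ℝ} (ht : 0 < t) (x y : ℝ)
    (n : ℕ) :
    ∑' N : ℤ, latticeTerm (ν + 1) t x y (n + 1) N +
      ∑' N : ℤ, latticeTerm (ν + 1) t x y (-(n + 1)) N =
      2 * Complex.I ^ (ν + 1) / ν.factorial * (∑' b, oscTerm 0 ν t x y (n, b) : ℝ) := by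
  have hswap : ∑' N : ℤ, latticeTerm (ν + 1) t x y (-(n + 1)) N =
      (-1) ^ (ν + 1) * ∑' N : ℤ, latticeTerm (ν + 1) t (-x) (-y) (n + 1) N := by
    rw [← (Equiv.neg ℤ).tsum_eq, ← tsum_mul_left]
    exact tsum_congr fun N ↦ latticeTerm_neg_neg _ _ _ _ _ _
  have hfac : (ν.factorial : ℂ) ≠ 0 := by exact_mod_cast ν.factorial_ne_zero
  rw [hswap, tsum_latticeTerm_right hν ht x y (by lia),
    tsum_latticeTerm_right hν ht (-x) (-y) (by lia), mul_left_comm, ← mul_add,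
    ← tsum_mul_left, ← (summable_pow_mul_cexp_add ν ht x y n).tsum_add
      ((summable_pow_mul_cexp_add ν ht (-x) (-y) n).mul_left _),
    div_mul_eq_mul_div, eq_div_iff hfac, mul_comm,
    mul_inv_cancel_left₀ hfac, Complex.ofReal_tsum, ← tsum_mul_left]
  exact tsum_congr fun b ↦ (two_mul_I_pow_mul_oscTerm_zero ν t x y n b).symm

theorem tsum_int_eq_zero_add_tsum_nat {f : ℤ → ℂ} (hf : Summable f) :
    ∑' a, f a = f 0 + ∑' n : ℕ, (f (n + 1) + f (-(n + 1))) := by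
  have hpos : Summable fun n : ℕ ↦ f (n + 1) :=
    hf.comp_injective (i := fun n : ℕ ↦ (n + 1 : ℤ)) fun _ _ h ↦ by simpa using h
  have hneg : Summable fun n : ℕ ↦ f (-(n + 1)) :=
    hf.comp_injective (i := fun n : ℕ ↦ -(n + 1 : ℤ)) fun _ _ h ↦ by simpa using h
  rw [tsum_of_add_one_of_neg_add_one hpos hneg, hpos.tsum_add hneg]
  ring

theorem tsum_tsum_latticeTerm_eq_oscTerm {ν : ℕ} (hν : 2 ≤ ν) {t y : ℝ} (ht : 0 < t) (x : ℝ)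
    (hy : y ∈ Set.Ioo 0 (2 * π)) :
    ∑' a : ℤ, ∑' N : ℤ, latticeTerm (ν + 1) t x y a N =
      ∑' N : ℤ, latticeTerm (ν + 1) t x y 0 N +
        2 * Complex.I ^ (ν + 1) / ν.factorial * (∑' p, oscTerm 0 ν t x y p : ℝ) := by
  have hsum : Summable fun a : ℤ ↦ ∑' N : ℤ, latticeTerm (ν + 1) t x y a N :=
    (summable_latticeTerm (by lia : 3 ≤ ν + 1) ht x hy).prod
  rw [tsum_int_eq_zero_add_tsum_nat hsum,
    tsum_congr (tsum_latticeTerm_right_add_neg (by lia) ht x y), tsum_mul_left,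
    ← Complex.ofReal_tsum, (summable_oscTerm 0 ν ht x y).tsum_prod]

theorem tsum_latticeTerm_add_two_pi_eq_dualTerm {ν : ℕ} (hν : ν ≠ 0) {t x y : ℝ} (ht : 0 < t)
    (hx : x ∈ Set.Ioo 0 (2 * π)) (hy : 0 < y) :
    ∑' n : ℕ, ∑' a : ℤ, latticeTerm (ν + 1) t x (y + 2 * π * n) a 0 =
      2 * π * (Complex.I * (1 / (4 * t) : ℝ)) ^ (ν + 1) / ν.factorial *
        (∑' p, dualTerm 0 ν (1 / (4 * t)) x y p : ℝ) := by
  have hsum : Summable (dualTerm 0 ν (1 / (4 * t)) x y) :=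
    summable_dualTerm 0 ν (by positivity) hx.1 hy
  have hrow (n : ℕ) := tsum_latticeTerm_left hν ht hx (Y := y + 2 * π * n) (by positivity)
  have hswap : ∑' p, dualTerm 0 ν (1 / (4 * t)) x y p =
      ∑' n : ℕ, ∑' k : ℕ, dualTerm 0 ν (1 / (4 * t)) x y (k, n) := by
    rw [← (Equiv.prodComm ℕ ℕ).tsum_eq]
    exact hsum.prod_symm.tsum_prod
  rw [tsum_congr hrow, tsum_mul_left, ← Complex.ofReal_tsum, hswap]
  simp only [dualTerm, iteratedDeriv_zero, powExp, neg_mul]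

theorem tsum_int_eq_tsum_neg_add_tsum_nat {f : ℤ → ℂ} (hf : Summable f) :
    ∑' N, f N = ∑' n : ℕ, f (-n) + ∑' n : ℕ, f (n + 1) := by
  rw [← (Equiv.neg ℤ).tsum_eq]
  rw [← (Equiv.neg ℤ).summable_iff] at hf
  rw [tsum_of_nat_of_neg_add_one (f := fun N ↦ f (Equiv.neg ℤ N))
    (hf.comp_injective Nat.cast_injective)
    (hf.comp_injective (i := fun n : ℕ ↦ -(n + 1 : ℤ)) fun _ _ h ↦ by simpa using h)]
  simp only [Equiv.neg_apply, neg_neg]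

theorem latticeTerm_add_one_right (k : ℕ) (t x y : ℝ) (a : ℤ) (n : ℕ) :
    latticeTerm k t x y (-a) (n + 1) =
      (-1) ^ k * latticeTerm k t (2 * π - x) (2 * π - y + 2 * π * n) a 0 := by
  have h := latticeTerm_add_two_pi_right k t (2 * π - x) (-y) a 0 (n + 1)
  rw [show -y + 2 * π * (n + 1 : ℤ) = 2 * π - y + 2 * π * n by push_cast; ring] at h
  rw [h, sub_eq_neg_add (2 * π) x, latticeTerm_add_two_pi_left, ← latticeTerm_neg_neg]
  simp

theorem tsum_tsum_latticeTerm_eq_dualTerm {ν : ℕ} (hν : 2 ≤ ν) {t x y : ℝ} (ht : 0 < t)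
    (hx : x ∈ Set.Ioo 0 (2 * π)) (hy : y ∈ Set.Ioo 0 (2 * π)) :
    ∑' N : ℤ, ∑' a : ℤ, latticeTerm (ν + 1) t x y a N =
      2 * π * (Complex.I * (1 / (4 * t) : ℝ)) ^ (ν + 1) / ν.factorial *
        (∑' p, dualTerm 0 ν (1 / (4 * t)) x y p + (-1) ^ (ν + 1) *
          ∑' p, dualTerm 0 ν (1 / (4 * t)) (2 * π - x) (2 * π - y) p : ℝ) := by
  have hν0 : ν ≠ 0 := by lia
  have hx' : 2 * π - x ∈ Set.Ioo 0 (2 * π) := ⟨by linarith [hx.2], by linarith [hx.1]⟩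
  have hy' : 0 < 2 * π - y := by linarith [hy.2]
  have hsum : Summable fun N : ℤ ↦ ∑' a : ℤ, latticeTerm (ν + 1) t x y a N :=
    (summable_latticeTerm (by lia : 3 ≤ ν + 1) ht x hy).prod_symm.prod
  have hnonpos : ∑' n : ℕ, ∑' a : ℤ, latticeTerm (ν + 1) t x y a (-n) =
      ∑' n : ℕ, ∑' a : ℤ, latticeTerm (ν + 1) t x (y + 2 * π * n) a 0 :=
    tsum_congr fun n ↦ tsum_congr fun a ↦ by
      simpa using (latticeTerm_add_two_pi_right (ν + 1) t x y a 0 n).symm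
  have hpos : ∑' n : ℕ, ∑' a : ℤ, latticeTerm (ν + 1) t x y a (n + 1) = (-1) ^ (ν + 1) *
      ∑' n : ℕ, ∑' a : ℤ, latticeTerm (ν + 1) t (2 * π - x) (2 * π - y + 2 * π * n) a 0 := by
    rw [← tsum_mul_left]
    refine tsum_congr fun n ↦ ?_
    rw [← (Equiv.neg ℤ).tsum_eq, ← tsum_mul_left]
    exact tsum_congr fun a ↦ latticeTerm_add_one_right (ν + 1) t x y a n
  rw [tsum_int_eq_tsum_neg_add_tsum_nat hsum, hnonpos, hpos,
    tsum_latticeTerm_add_two_pi_eq_dualTerm hν0 ht hx hy.1,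
    tsum_latticeTerm_add_two_pi_eq_dualTerm hν0 ht hx' hy']
  push_cast
  ring

/-- The series dual to `∑' p, oscTerm μ ν t x y p`, with `τ = 1 / (4t)`. -/
noncomputable def dualSum (μ ν : ℕ) (τ x y : ℝ) : ℝ :=
  ∑' p, dualTerm μ ν τ x y p +
    (-1) ^ (μ + ν + 1) * ∑' p, dualTerm μ ν τ (2 * π - x) (2 * π - y) p

theorem hasDerivAt_dualSum (μ ν : ℕ) {τ x y : ℝ} (hτ : 0 < τ) (hx : x ∈ Set.Ioo 0 (2 * π))
    (hy : y ∈ Set.Ioo 0 (2 * π)) :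
    HasDerivAt (fun x ↦ dualSum μ ν τ x y) (dualSum (μ + 1) ν τ x y) x := by
  refine ((hasDerivAt_tsum_dualTerm μ ν hτ hx.1 hy.1).add
    (((hasDerivAt_tsum_dualTerm μ ν hτ (sub_pos.2 hx.2) (sub_pos.2 hy.2)).comp_const_sub
      (2 * π) x).const_mul ((-1) ^ (μ + ν + 1)))).congr_deriv ?_
  rw [dualSum]
  ring

theorem tsum_oscTerm_zero_eq_dualSum_add_const {ν : ℕ} (hν : 2 ≤ ν) {t y : ℝ} (ht : 0 < t)
    (hy : y ∈ Set.Ioo 0 (2 * π)) :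
    ∃ z : ℝ, ∀ x ∈ Set.Ioo 0 (2 * π), ∑' p, oscTerm 0 ν t x y p =
      π * (1 / (4 * t)) ^ (ν + 1) * dualSum 0 ν (1 / (4 * t)) x y + z := by
  have hI : Complex.I ^ (ν + 1) ≠ 0 := pow_ne_zero _ Complex.I_ne_zero
  have hfac : (ν.factorial : ℂ) ≠ 0 := by exact_mod_cast ν.factorial_ne_zero
  refine ⟨(-(ν.factorial / (2 * Complex.I ^ (ν + 1)) *
    ∑' N : ℤ, latticeTerm (ν + 1) t 0 y 0 N)).re, fun x hx ↦ ?_⟩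
  have hzero : ∑' N : ℤ, latticeTerm (ν + 1) t x y 0 N =
      ∑' N : ℤ, latticeTerm (ν + 1) t 0 y 0 N := by simp [latticeTerm]
  have hcomm := Summable.tsum_comm (f := latticeTerm (ν + 1) t x y)
    (summable_latticeTerm (by lia : 3 ≤ ν + 1) ht x hy)
  rw [tsum_tsum_latticeTerm_eq_oscTerm hν ht x hy, tsum_tsum_latticeTerm_eq_dualTerm hν ht hx hy,
    hzero, mul_pow] at hcomm
  have hC : ((∑' p, oscTerm 0 ν t x y p : ℝ) : ℂ) =
      (π * (1 / (4 * t)) ^ (ν + 1) * dualSum 0 ν (1 / (4 * t)) x y : ℝ) +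
        -(ν.factorial / (2 * Complex.I ^ (ν + 1)) *
          ∑' N : ℤ, latticeTerm (ν + 1) t 0 y 0 N) := by
    rw [dualSum, zero_add, Complex.ofReal_mul, Complex.ofReal_mul, Complex.ofReal_pow]
    generalize ∑' p, oscTerm 0 ν t x y p = O at hcomm ⊢
    generalize ∑' N : ℤ, latticeTerm (ν + 1) t 0 y 0 N = Z at hcomm ⊢
    field_simp at hcomm ⊢
    linear_combination -hcomm
  have hre := congrArg Complex.re hC
  rwa [Complex.add_re, Complex.ofReal_re, Complex.ofReal_re] at hre

theorem exists_neg_one_pow_mul_tsum_oscTerm_eq {ν : ℕ} (hν : 2 ≤ ν) (μ : ℕ) {t y : ℝ} (ht : 0 < t)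
    (hy : y ∈ Set.Ioo 0 (2 * π)) :
    ∃ z : ℝ, ∀ x ∈ Set.Ioo 0 (2 * π), (-1) ^ μ * ∑' p, oscTerm μ ν t x y p =
      π * (1 / (4 * t)) ^ (ν + 1) * dualSum μ ν (1 / (4 * t)) x y + if μ = 0 then z else 0 := by
  induction μ with
  | zero => simpa using tsum_oscTerm_zero_eq_dualSum_add_const hν ht hy
  | succ μ ih =>
    obtain ⟨z, hz⟩ := ih
    refine ⟨0, fun x hx ↦ ?_⟩
    have hleft := (hasDerivAt_tsum_oscTerm μ ν ht x y).const_mul ((-1) ^ μ)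
    have hright := ((hasDerivAt_dualSum μ ν (τ := 1 / (4 * t)) (by positivity) hx hy).const_mul
      (π * (1 / (4 * t)) ^ (ν + 1))).add_const (if μ = 0 then z else 0)
    have heq := hleft.unique (hright.congr_of_eventuallyEq
      (Filter.mem_of_superset (isOpen_Ioo.mem_nhds hx) hz))
    rw [ite_self, add_zero, ← heq, pow_succ]
    ring

theorem neg_one_pow_mul_tsum_oscTerm {μ ν : ℕ} (hμ : μ ≠ 0) (hν : 2 ≤ ν) {t x y : ℝ} (ht : 0 < t)
    (hx : x ∈ Set.Ioo 0 (2 * π)) (hy : y ∈ Set.Ioo 0 (2 * π)) :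
    (-1) ^ μ * ∑' p, oscTerm μ ν t x y p =
      π * (1 / (4 * t)) ^ (ν + 1) * dualSum μ ν (1 / (4 * t)) x y := by
  obtain ⟨z, hz⟩ := exists_neg_one_pow_mul_tsum_oscTerm_eq hν μ ht hy
  rw [hz x hx, if_neg hμ, add_zero]

/-! ### Short-time asymptotics on the vertical axis -/

theorem inv_pow_mul_iteratedDeriv_powExp (μ ν : ℕ) {τ : ℝ} (hτ : τ ≠ 0) (X Y : ℝ) :
    (τ ^ μ)⁻¹ * iteratedDeriv μ (powExp ν (τ * Y)) X = (∑ l ∈ Finset.range (μ + 1),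
      μ.choose l * (ν.descFactorial l * X ^ (ν - l)) * (-Y) ^ (μ - l) * τ⁻¹ ^ l) *
        exp (-(τ * (X * Y))) := by
  rw [iteratedDeriv_powExp, ← mul_assoc, Finset.mul_sum, neg_mul, mul_right_comm, mul_assoc τ,
    mul_comm X]
  congr 1
  refine Finset.sum_congr rfl fun l hl ↦ ?_
  rw [← Nat.sub_add_cancel (Finset.mem_range_succ_iff.1 hl), pow_add, Nat.add_sub_cancel, inv_pow,
    ← mul_neg, mul_pow]
  field_simp

theorem tendsto_inv_pow_mul_exp_mul_dualTerm (μ ν : ℕ) {x y : ℝ} (hx : 0 < x) (hy : 0 < y)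
    (p : ℕ × ℕ) :
    Tendsto (fun τ ↦ (τ ^ μ)⁻¹ * exp (τ * (x * y)) * dualTerm μ ν τ x y p) atTop
      (𝓝 (if p = 0 then x ^ ν * (-y) ^ μ else 0)) := by
  set X : ℝ := x + 2 * π * p.1 with hX
  set Y : ℝ := y + 2 * π * p.2 with hY
  have hpoly : Tendsto (fun τ : ℝ ↦ ∑ l ∈ Finset.range (μ + 1),
      μ.choose l * (ν.descFactorial l * X ^ (ν - l)) * (-Y) ^ (μ - l) * τ⁻¹ ^ l) atTop
      (𝓝 (X ^ ν * (-Y) ^ μ)) := by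
    have h := tendsto_finsetSum (Finset.range (μ + 1)) fun l _ ↦
      (tendsto_inv_atTop_zero.pow l).const_mul
        ((μ.choose l * (ν.descFactorial l * X ^ (ν - l)) * (-Y) ^ (μ - l) : ℝ))
    simpa [Finset.sum_range_succ', zero_pow] using h
  have hexp : Tendsto (fun τ : ℝ ↦ exp (τ * (x * y - X * Y))) atTop
      (𝓝 (if p = 0 then 1 else 0)) := by
    split_ifs with hp
    · simp [hX, hY, hp]
    · refine tendsto_exp_atBot.comp (tendsto_id.atTop_mul_const_of_neg ?_)
      have hp' : 0 < p.1 ∨ 0 < p.2 := by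
        contrapose! hp
        exact Prod.ext (by simpa using hp.1) (by simpa using hp.2)
      have hpos : 0 < 2 * π * p.1 * y + 2 * π * p.2 * x := by
        rcases hp' with h | h
        · exact add_pos_of_pos_of_nonneg (by positivity) (by positivity)
        · exact add_pos_of_nonneg_of_pos (by positivity) (by positivity)
      have : 0 ≤ 2 * π * p.1 * (2 * π * p.2) := by positivity
      linarith
  refine ((hpoly.mul hexp).congr' ?_).trans_eq ?_
  · filter_upwards [eventually_gt_atTop 0] with τ hτ
    rw [dualTerm, ← hX, ← hY, mul_right_comm, inv_pow_mul_iteratedDeriv_powExp μ ν hτ.ne',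
      mul_assoc, ← exp_add]
    congr 2
    ring
  · split_ifs with hp
    · simp [hX, hY, hp]
    · rw [mul_zero]

theorem tendsto_inv_pow_mul_exp_mul_tsum_dualTerm (μ ν : ℕ) {x y : ℝ} (hx : 0 < x) (hy : 0 < y) :
    Tendsto (fun τ ↦ (τ ^ μ)⁻¹ * exp (τ * (x * y)) * ∑' p, dualTerm μ ν τ x y p) atTop
      (𝓝 (x ^ ν * (-y) ^ μ)) := by
  have hlim := tendsto_tsum_of_dominated_convergence
    ((summable_dualBound μ ν one_pos hy hx hx.le).mul_left (exp (x * y)))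
    (tendsto_inv_pow_mul_exp_mul_dualTerm μ ν hx hy) ?_
  · simpa [tsum_mul_left] using hlim
  filter_upwards [eventually_ge_atTop 1] with τ hτ p
  have hτ0 : 0 < τ := by linarith
  set X : ℝ := x + 2 * π * p.1 with hX
  set Y : ℝ := y + 2 * π * p.2 with hY
  have hXY : x * y ≤ X * Y := by
    have hx' : x ≤ X := by rw [hX]; exact le_add_of_nonneg_right (by positivity)
    have hy' : y ≤ Y := by rw [hY]; exact le_add_of_nonneg_right (by positivity)
    gcongr
  have : 0 ≤ Y := by positivity
  have hpow : (τ ^ μ)⁻¹ * (ν + τ * Y) ^ μ ≤ (ν + 1 * Y) ^ μ := by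
    rw [inv_mul_le_iff₀ (by positivity), ← mul_pow]
    gcongr
    nlinarith [(ν.cast_nonneg : (0 : ℝ) ≤ ν)]
  have hexp : exp (τ * (x * y)) * exp (-(τ * Y) * X) ≤ exp (x * y) * exp (-(1 * Y) * X) := by
    rw [← exp_add, ← exp_add, exp_le_exp]
    nlinarith
  rw [norm_mul, norm_mul, norm_inv, norm_pow, norm_of_nonneg hτ0.le, norm_of_nonneg (exp_pos _).le]
  calc _ ≤ (τ ^ μ)⁻¹ * exp (τ * (x * y)) *
        ((ν + τ * Y) ^ μ * (1 + X) ^ ν * exp (-(τ * Y) * X)) := by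
        gcongr
        exact abs_iteratedDeriv_powExp_le μ ν (by positivity) (by positivity)
    _ = (τ ^ μ)⁻¹ * (ν + τ * Y) ^ μ * (1 + X) ^ ν *
        (exp (τ * (x * y)) * exp (-(τ * Y) * X)) := by ring
    _ ≤ (ν + 1 * Y) ^ μ * (1 + X) ^ ν * (exp (x * y) * exp (-(1 * Y) * X)) := by gcongr
    _ = _ := by ring

theorem oscTerm_swap (μ ν : ℕ) (t x y : ℝ) (p : ℕ × ℕ) :
    oscTerm μ ν t x y p.swap = oscTerm ν μ t y x p := by
  simp only [oscTerm, Prod.fst_swap, Prod.snd_swap]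
  ring_nf

theorem tsum_oscTerm_swap (μ ν : ℕ) (t x y : ℝ) :
    ∑' p, oscTerm μ ν t x y p = ∑' p, oscTerm ν μ t y x p := by
  rw [← (Equiv.prodComm ℕ ℕ).tsum_eq]
  exact tsum_congr (oscTerm_swap μ ν t x y)

theorem tendsto_inv_four_mul_atTop :
    Tendsto (fun t : ℝ ↦ 1 / (4 * t)) (𝓝[>] 0) atTop := by
  simp only [one_div, mul_inv]
  exact tendsto_inv_nhdsGT_zero.const_mul_atTop (by norm_num)

theorem tendsto_tsum_oscTerm_of_two_le {μ ν : ℕ} (hμ : μ ≠ 0) (hν : 2 ≤ ν) {x y : ℝ} (hx : 0 < x)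
    (hy : 0 < y) (hxy : x + y = 2 * π) :
    Tendsto (fun t ↦ ((1 / (4 * t)) ^ (μ + ν + 1))⁻¹ * exp (1 / (4 * t) * (x * y)) *
      ∑' p, oscTerm μ ν t x y p) (𝓝[>] 0)
      (𝓝 (π * (x ^ ν * y ^ μ - (-1) ^ (μ + ν) * (y ^ ν * x ^ μ)))) := by
  have hleft := tendsto_inv_pow_mul_exp_mul_tsum_dualTerm μ ν hx hy
  have hright := tendsto_inv_pow_mul_exp_mul_tsum_dualTerm μ ν hy hx
  have hlim := ((hleft.add (hright.const_mul ((-1) ^ (μ + ν + 1)))).const_mul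
    ((-1) ^ μ * π)).comp tendsto_inv_four_mul_atTop
  have hsign : (-1 : ℝ) ^ μ * (-1) ^ μ = 1 := by rw [← mul_pow]; norm_num
  refine (hlim.congr' ?_).trans_eq ?_
  · filter_upwards [self_mem_nhdsWithin] with t (ht : 0 < t)
    have h := neg_one_pow_mul_tsum_oscTerm hμ hν ht (x := x) (y := y) ⟨hx, by linarith⟩
      ⟨hy, by linarith⟩
    rw [dualSum, sub_eq_of_eq_add' hxy.symm, sub_eq_of_eq_add hxy.symm] at h
    have hpow : (1 / (4 * t)) ^ (μ + ν + 1) = (1 / (4 * t)) ^ μ * (1 / (4 * t)) ^ (ν + 1) := by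
      rw [add_assoc, pow_add]
    have hτ : 1 / (4 * t) ≠ 0 := by positivity
    simp only [Function.comp_apply, mul_comm y x]
    generalize 1 / (4 * t) = τ at h hpow hτ ⊢
    have hO := congrArg ((-1) ^ μ * ·) h
    simp only [← mul_assoc ((-1 : ℝ) ^ μ), hsign, one_mul] at hO
    rw [hpow, hO]
    field_simp
  · rw [neg_pow y, neg_pow x, pow_succ, pow_add]
    congr 1
    linear_combination π * (x ^ ν * y ^ μ - (-1) ^ μ * (-1) ^ ν * (y ^ ν * x ^ μ)) * hsign

theorem tendsto_tsum_oscTerm {μ ν : ℕ} (hμ : μ ≠ 0) (hν : ν ≠ 0) (hμν : 3 ≤ μ + ν) {x y : ℝ}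
    (hx : 0 < x) (hy : 0 < y) (hxy : x + y = 2 * π) :
    Tendsto (fun t ↦ ((1 / (4 * t)) ^ (μ + ν + 1))⁻¹ * exp (1 / (4 * t) * (x * y)) *
      ∑' p, oscTerm μ ν t x y p) (𝓝[>] 0)
      (𝓝 (π * (x ^ ν * y ^ μ - (-1) ^ (μ + ν) * (y ^ ν * x ^ μ)))) := by
  by_cases h : 2 ≤ ν
  · exact tendsto_tsum_oscTerm_of_two_le hμ h hx hy hxy
  · simp only [tsum_oscTerm_swap μ ν, add_comm μ ν, mul_comm x y]
    refine (tendsto_tsum_oscTerm_of_two_le hν (by lia) hy hx (by rwa [add_comm])).trans_eq ?_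
    congr 1
    ring

/-- The oscillating series with the monomial of `oscTerm` replaced by `ab * Q(a, b)`, for a binary
form `Q` of degree `d`. -/
noncomputable def oscFormTerm (d : ℕ) (Q : MvPolynomial (Fin 2) ℝ) (t x y : ℝ) (p : ℕ × ℕ) : ℝ :=
  (p.1 + 1) * (p.2 + 1) * MvPolynomial.eval ![(p.1 + 1 : ℝ), p.2 + 1] Q *
    exp (-(4 * t * ((p.1 + 1) * (p.2 + 1)))) *
      cos ((p.1 + 1) * x + (p.2 + 1) * y - (d + 3) * (π / 2))

section BinaryForm

variable {d : ℕ} {Q : MvPolynomial (Fin 2) ℝ}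

theorem add_eq_of_mem_support (hQ : Q.IsHomogeneous d) {m : Fin 2 →₀ ℕ} (hm : m ∈ Q.support) :
    m 0 + m 1 = d := by
  simpa [Finsupp.weight_apply, Finsupp.sum_fintype] using hQ (MvPolynomial.mem_support_iff.1 hm)

theorem oscFormTerm_eq_sum (hQ : Q.IsHomogeneous d) (t x y : ℝ) (p : ℕ × ℕ) :
    oscFormTerm d Q t x y p =
      ∑ m ∈ Q.support, Q.coeff m * oscTerm (m 0 + 1) (m 1 + 1) t x y p := by
  rw [oscFormTerm, MvPolynomial.eval_eq', Finset.mul_sum, Finset.sum_mul, Finset.sum_mul]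
  refine Finset.sum_congr rfl fun m hm ↦ ?_
  have hd : (d + 3 : ℝ) = (m 0 + 1 : ℕ) + (m 1 + 1 : ℕ) + 1 := by
    rw [← add_eq_of_mem_support hQ hm]
    push_cast
    ring
  rw [oscTerm, hd, Fin.prod_univ_two]
  simp only [Matrix.cons_val_zero, Matrix.cons_val_one]
  ring

theorem summable_oscFormTerm (hQ : Q.IsHomogeneous d) {t : ℝ} (ht : 0 < t) (x y : ℝ) :
    Summable (oscFormTerm d Q t x y) := by
  simp only [funext (oscFormTerm_eq_sum hQ t x y)]
  exact summable_sum fun m _ ↦ (summable_oscTerm _ _ ht x y).mul_left _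

theorem tsum_oscFormTerm (hQ : Q.IsHomogeneous d) {t : ℝ} (ht : 0 < t) (x y : ℝ) :
    ∑' p, oscFormTerm d Q t x y p =
      ∑ m ∈ Q.support, Q.coeff m * ∑' p, oscTerm (m 0 + 1) (m 1 + 1) t x y p := by
  simp only [oscFormTerm_eq_sum hQ]
  rw [Summable.tsum_finsetSum fun m _ ↦ (summable_oscTerm _ _ ht x y).mul_left _]
  simp only [tsum_mul_left]

theorem tendsto_tsum_oscFormTerm (hQ : Q.IsHomogeneous d) (hd : d ≠ 0) {x y : ℝ} (hx : 0 < x)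
    (hy : 0 < y) (hxy : x + y = 2 * π) :
    Tendsto (fun t ↦ ((1 / (4 * t)) ^ (d + 3))⁻¹ * exp (1 / (4 * t) * (x * y)) *
      ∑' p, oscFormTerm d Q t x y p) (𝓝[>] 0)
      (𝓝 (π * (x * y) *
        (MvPolynomial.eval ![y, x] Q - (-1) ^ d * MvPolynomial.eval ![x, y] Q))) := by
  have hlim := tendsto_finsetSum Q.support fun m hm ↦
    (tendsto_tsum_oscTerm (m 0).add_one_ne_zero (m 1).add_one_ne_zero
      (by have := add_eq_of_mem_support hQ hm; lia) hx hy hxy).const_mul (Q.coeff m)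
  refine (hlim.congr' ?_).trans_eq ?_
  · filter_upwards [self_mem_nhdsWithin] with t (ht : 0 < t)
    rw [tsum_oscFormTerm hQ ht, Finset.mul_sum]
    refine Finset.sum_congr rfl fun m hm ↦ ?_
    rw [← add_eq_of_mem_support hQ hm]
    ring_nf
  · rw [MvPolynomial.eval_eq', MvPolynomial.eval_eq', Finset.mul_sum, ← Finset.sum_sub_distrib,
      Finset.mul_sum]
    congr 1
    refine Finset.sum_congr rfl fun m hm ↦ ?_
    rw [← add_eq_of_mem_support hQ hm, Fin.prod_univ_two, Fin.prod_univ_two]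
    simp only [Matrix.cons_val_zero, Matrix.cons_val_one]
    ring

end BinaryForm

/-- The binary form `(a + b)(a - b) ^ k`. -/
noncomputable def skewForm (k : ℕ) : MvPolynomial (Fin 2) ℝ :=
  (MvPolynomial.X 0 + MvPolynomial.X 1) * (MvPolynomial.X 0 - MvPolynomial.X 1) ^ k

theorem isHomogeneous_skewForm (k : ℕ) : (skewForm k).IsHomogeneous (k + 1) := by
  have h0 := MvPolynomial.isHomogeneous_X ℝ (0 : Fin 2)
  have h1 := MvPolynomial.isHomogeneous_X ℝ (1 : Fin 2)
  simpa [skewForm, add_comm] using (h0.add h1).mul ((h0.sub h1).pow k)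

theorem eval_skewForm (k : ℕ) (a b : ℝ) :
    MvPolynomial.eval ![a, b] (skewForm k) = (a + b) * (a - b) ^ k := by
  simp [skewForm]

/-- The factor of the heat kernel series on the vertical axis that depends on the eigenvalue only,
at `(a, b) = (p.1 + 1, p.2 + 1)`. -/
noncomputable def axisWeight (t : ℝ) (p : ℕ × ℕ) : ℝ :=
  (p.1 + 1 + (p.2 + 1)) * ((p.1 + 1) ^ 3 - (p.1 + 1)) * ((p.2 + 1) ^ 3 - (p.2 + 1)) *
    exp (-(4 * t * ((p.1 + 1) * (p.2 + 1))))

/-- The part of the heat kernel series on the vertical axis coming from the `j ^ k` term of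
`chebyshevThirdDeriv j η`, where `j = a - b`. -/
noncomputable def axisTerm (k : ℕ) (t η : ℝ) (p : ℕ × ℕ) : ℝ :=
  axisWeight t p * ((p.1 - p.2) ^ k * cos ((p.1 - p.2) * η - k * (π / 2)))

theorem isHomogeneous_sq_mul_sq :
    (MvPolynomial.X 0 ^ 2 * MvPolynomial.X 1 ^ 2 : MvPolynomial (Fin 2) ℝ).IsHomogeneous 4 :=
  ((MvPolynomial.isHomogeneous_X ℝ 0).pow 2).mul ((MvPolynomial.isHomogeneous_X ℝ 1).pow 2)

theorem isHomogeneous_sq_add_sq :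
    (MvPolynomial.X 0 ^ 2 + MvPolynomial.X 1 ^ 2 : MvPolynomial (Fin 2) ℝ).IsHomogeneous 2 :=
  ((MvPolynomial.isHomogeneous_X ℝ 0).pow 2).add ((MvPolynomial.isHomogeneous_X ℝ 1).pow 2)

theorem axisTerm_eq_add (k : ℕ) (t η : ℝ) (p : ℕ × ℕ) :
    axisTerm k t η p =
      oscFormTerm (k + 1 + 4) (skewForm k * (MvPolynomial.X 0 ^ 2 * MvPolynomial.X 1 ^ 2))
          t η (2 * π - η) p +
      oscFormTerm (k + 1 + 2) (skewForm k * (MvPolynomial.X 0 ^ 2 + MvPolynomial.X 1 ^ 2))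
          t η (2 * π - η) p +
      oscFormTerm (k + 1) (skewForm k) t η (2 * π - η) p := by
  have hcos (n : ℕ) : cos ((p.1 + 1) * η + (p.2 + 1) * (2 * π - η) - (k + 4 + 2 * n) * (π / 2)) =
      (-1) ^ n * cos ((p.1 - p.2) * η - k * (π / 2)) := by
    rw [← cos_sub_nat_mul_pi, ← cos_add_nat_mul_two_pi (_ - n * π) p.2]
    ring_nf
  have h4 := hcos 2
  have h2 := hcos 1
  have h0 := hcos 0
  simp only [oscFormTerm, axisTerm, axisWeight, map_mul, map_add, map_pow, MvPolynomial.eval_X,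
    eval_skewForm, Matrix.cons_val_zero, Matrix.cons_val_one]
  push_cast at h4 h2 h0 ⊢
  ring_nf at h4 h2 h0 ⊢
  rw [h4, h2, h0]
  ring

theorem isHomogeneous_skewForm_mul_sq_mul_sq (k : ℕ) :
    (skewForm k * (MvPolynomial.X 0 ^ 2 * MvPolynomial.X 1 ^ 2)).IsHomogeneous (k + 1 + 4) :=
  (isHomogeneous_skewForm k).mul isHomogeneous_sq_mul_sq

theorem isHomogeneous_skewForm_mul_sq_add_sq (k : ℕ) :
    (skewForm k * (MvPolynomial.X 0 ^ 2 + MvPolynomial.X 1 ^ 2)).IsHomogeneous (k + 1 + 2) :=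
  (isHomogeneous_skewForm k).mul isHomogeneous_sq_add_sq

theorem summable_axisTerm (k : ℕ) {t : ℝ} (ht : 0 < t) (η : ℝ) : Summable (axisTerm k t η) := by
  simp only [funext (axisTerm_eq_add k t η)]
  exact ((summable_oscFormTerm (isHomogeneous_skewForm_mul_sq_mul_sq k) ht _ _).add
    (summable_oscFormTerm (isHomogeneous_skewForm_mul_sq_add_sq k) ht _ _)).add
    (summable_oscFormTerm (isHomogeneous_skewForm k) ht _ _)

theorem tsum_axisTerm (k : ℕ) {t : ℝ} (ht : 0 < t) (η : ℝ) :
    ∑' p, axisTerm k t η p =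
      ∑' p, oscFormTerm (k + 1 + 4) (skewForm k * (MvPolynomial.X 0 ^ 2 * MvPolynomial.X 1 ^ 2))
          t η (2 * π - η) p +
      ∑' p, oscFormTerm (k + 1 + 2) (skewForm k * (MvPolynomial.X 0 ^ 2 + MvPolynomial.X 1 ^ 2))
          t η (2 * π - η) p +
      ∑' p, oscFormTerm (k + 1) (skewForm k) t η (2 * π - η) p := by
  have h4 := summable_oscFormTerm (isHomogeneous_skewForm_mul_sq_mul_sq k) ht η (2 * π - η)
  have h2 := summable_oscFormTerm (isHomogeneous_skewForm_mul_sq_add_sq k) ht η (2 * π - η)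
  have h0 := summable_oscFormTerm (isHomogeneous_skewForm k) ht η (2 * π - η)
  rw [← h4.tsum_add h2, ← (h4.add h2).tsum_add h0]
  exact tsum_congr (axisTerm_eq_add k t η)

theorem tendsto_tsum_axisTerm (k : ℕ) {η : ℝ} (h0 : 0 < η) (h1 : η < 2 * π) :
    Tendsto (fun t ↦ ((1 / (4 * t)) ^ (k + 8))⁻¹ * exp (1 / (4 * t) * (η * (2 * π - η))) *
      ∑' p, axisTerm k t η p) (𝓝[>] 0)
      (𝓝 (4 * π ^ 2 * (η * (2 * π - η)) ^ 3 * (2 * π - 2 * η) ^ k)) := by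
  have h1' : 0 < 2 * π - η := by linarith
  have hadd : η + (2 * π - η) = 2 * π := by ring
  have hinv : Tendsto (fun t : ℝ ↦ (1 / (4 * t))⁻¹) (𝓝[>] 0) (𝓝 0) :=
    tendsto_inv_atTop_zero.comp tendsto_inv_four_mul_atTop
  have h4 := tendsto_tsum_oscFormTerm (isHomogeneous_skewForm_mul_sq_mul_sq k) (by lia) h0 h1' hadd
  have h2 := (hinv.pow 2).mul
    (tendsto_tsum_oscFormTerm (isHomogeneous_skewForm_mul_sq_add_sq k) (by lia) h0 h1' hadd)
  have h0 := (hinv.pow 4).mul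
    (tendsto_tsum_oscFormTerm (isHomogeneous_skewForm k) (by lia) h0 h1' hadd)
  refine (((h4.add h2).add h0).congr' ?_).trans_eq ?_
  · filter_upwards [self_mem_nhdsWithin] with t (ht : 0 < t)
    rw [tsum_axisTerm k ht]
    ring
  · simp only [map_mul, map_pow, MvPolynomial.eval_X, eval_skewForm, Matrix.cons_val_zero,
      Matrix.cons_val_one]
    have hneg : (η - (2 * π - η)) ^ k = (-1) ^ k * (2 * π - η - η) ^ k := by
      rw [← mul_pow]
      ring_nf
    have hsign : (-1 : ℝ) ^ k * (-1) ^ k = 1 := by rw [← mul_pow]; norm_num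
    rw [hneg]
    congr 1
    linear_combination (2 * π ^ 2 * (η * (2 * π - η)) ^ 3 * (2 * π - 2 * η) ^ k) * hsign

theorem tsum_eq_two_mul_tsum_tsum {f : ℕ × ℕ → ℝ} (hf : Summable f)
    (hswap : ∀ p, f p.swap = f p) {d : ℕ} (hd : d ≠ 0) (hband : ∀ i, ∀ l < d, f (i, i + l) = 0) :
    ∑' p, f p = 2 * ∑' m, ∑' k, f (k, k + m + d) := by
  let upper : ℕ × ℕ → ℕ × ℕ := fun q ↦ (q.2, q.2 + q.1 + d)
  let fold : (ℕ × ℕ) ⊕ (ℕ × ℕ) → ℕ × ℕ := Sum.elim upper fun q ↦ (upper q).swap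
  have hupper : upper.Injective := fun p q h ↦ by
    simp only [upper, Prod.mk.injEq] at h
    exact Prod.ext (by lia) (by lia)
  have hfold : fold.Injective :=
    hupper.sumElim (Prod.swap_injective.comp hupper) fun p q h ↦ by
      simp only [upper, Prod.swap_prod_mk, Prod.mk.injEq] at h
      lia
  have hsupp : f.support ⊆ Set.range fold := by
    rintro ⟨i, j⟩ hp
    rcases le_total i j with hij | hij <;> obtain ⟨l, rfl⟩ := Nat.exists_eq_add_of_le hij
    · have hl : d ≤ l := not_lt.1 fun h ↦ hp (hband i l h)
      exact ⟨Sum.inl (l - d, i), Prod.ext rfl (by simp only [fold, upper, Sum.elim_inl]; lia)⟩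
    · have hl : d ≤ l := not_lt.1 fun h ↦ hp ((hswap (j, j + l)).trans (hband j l h))
      exact ⟨Sum.inr (l - d, j),
        Prod.ext (by simp only [fold, upper, Sum.elim_inr, Prod.swap_prod_mk]; lia) rfl⟩
  have hl : Summable fun q ↦ f (upper q) := hf.comp_injective hupper
  have hr : Summable fun q ↦ f (upper q).swap := hl.congr fun q ↦ (hswap _).symm
  calc
    ∑' p, f p = ∑' s, f (fold s) := (hfold.tsum_eq hsupp).symm
    _ = ∑' q, f (upper q) + ∑' q, f (upper q).swap :=
      Summable.tsum_sum (f := fun s ↦ f (fold s)) hl hr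
    _ = 2 * ∑' q, f (upper q) := by rw [tsum_congr fun q ↦ hswap (upper q), two_mul]
    _ = 2 * ∑' m, ∑' k, f (k, k + m + d) := by rw [hl.tsum_prod]

section ChebyshevThirdDeriv

variable (j : ℝ)

theorem chebyshevThirdDeriv_neg (η : ℝ) :
    chebyshevThirdDeriv (-j) η = chebyshevThirdDeriv j η := by
  simp only [chebyshevThirdDeriv, neg_mul, sin_neg, cos_neg]
  ring

theorem chebyshevThirdDeriv_eq_zero {l : ℕ} (hl : l < 3) {η : ℝ} (hη : sin η ≠ 0) :
    chebyshevThirdDeriv l η = 0 := by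
  have hsq := sin_sq η
  interval_cases l
  · simp [chebyshevThirdDeriv]
  · simp only [chebyshevThirdDeriv, Nat.cast_one, one_mul]
    field_simp
    ring
  · simp only [chebyshevThirdDeriv, Nat.cast_ofNat, sin_two_mul, cos_two_mul]
    field_simp
    simp only [hsq]
    ring

theorem chebyshevThirdDeriv_eq_add (η : ℝ) :
    chebyshevThirdDeriv j η =
      1 / sin η ^ 3 * (j ^ 3 * cos (j * η - (3 : ℕ) * (π / 2))) +
      3 * cos η / sin η ^ 4 * (j ^ 2 * cos (j * η - (2 : ℕ) * (π / 2))) +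
      (sin η ^ 2 + 3 * cos η ^ 2) / sin η ^ 5 * (j ^ 1 * cos (j * η - (1 : ℕ) * (π / 2))) := by
  have h3 : cos (j * η - (3 : ℕ) * (π / 2)) = -sin (j * η) := by
    rw [← cos_add_pi_div_two, ← cos_add_two_pi]
    congr 1
    push_cast
    ring
  have h2 : cos (j * η - (2 : ℕ) * (π / 2)) = -cos (j * η) := by
    rw [← cos_sub_pi]
    congr 1
    push_cast
    ring
  have h1 : cos (j * η - (1 : ℕ) * (π / 2)) = sin (j * η) := by
    rw [← cos_sub_pi_div_two, Nat.cast_one, one_mul]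
  rw [h3, h2, h1, chebyshevThirdDeriv]
  ring

end ChebyshevThirdDeriv

theorem axisWeight_swap (t : ℝ) (p : ℕ × ℕ) : axisWeight t p.swap = axisWeight t p := by
  simp only [axisWeight, Prod.fst_swap, Prod.snd_swap]
  ring_nf

theorem axisWeight_zero_left (t : ℝ) (n : ℕ) : axisWeight t (0, n) = 0 := by simp [axisWeight]

theorem alphOct_mul_exp_mul_choose (k m : ℕ) (t : ℝ) :
    alphOct k m * exp (-(4 * ((k * (k + m + 7) + 2 * m : ℕ) : ℝ)) * t) * (k + 3).choose 3 =
      8 / (3 * π ^ 8) * exp (40 * t) * axisWeight t (k + 1, k + m + 4) *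
        ((m + 3) * (m + 5).choose m) := by
  have hthree (n : ℕ) : ((n + 3).choose 3 : ℝ) = (n + 1) * (n + 2) * (n + 3) / 6 := by
    rw [Nat.cast_choose_eq_ascPochhammer_div]
    simp [ascPochhammer, Nat.factorial]
    ring
  have hexp : exp (-(4 * ((k * (k + m + 7) + 2 * m : ℕ) : ℝ)) * t) = exp (40 * t) *
      exp (-(4 * t * (((k + 1 : ℕ) + 1) * ((k + m + 4 : ℕ) + 1)))) := by
    rw [← exp_add]
    congr 1
    push_cast
    ring
  rw [alphOct, axisWeight, hexp, hthree, Nat.choose_symm_of_eq_add (show k + m + 6 = k + m + 3 + 3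
    by ring), show k + m + 6 = k + m + 3 + 3 by ring, hthree]
  push_cast
  field_simp
  ring

/-- The heat kernel series on the vertical axis, symmetrized and extended by the terms that vanish,
as a lattice sum over `(a, b) = (p.1 + 1, p.2 + 1)`. -/
noncomputable def axisSeriesTerm (t η : ℝ) (p : ℕ × ℕ) : ℝ :=
  axisWeight t p * chebyshevThirdDeriv (p.1 - p.2) η

theorem axisSeriesTerm_eq_add (t η : ℝ) (p : ℕ × ℕ) :
    axisSeriesTerm t η p = 1 / sin η ^ 3 * axisTerm 3 t η p +
      3 * cos η / sin η ^ 4 * axisTerm 2 t η p +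
      (sin η ^ 2 + 3 * cos η ^ 2) / sin η ^ 5 * axisTerm 1 t η p := by
  rw [axisSeriesTerm, chebyshevThirdDeriv_eq_add, axisTerm, axisTerm, axisTerm]
  ring

theorem axisSeriesTerm_swap (t η : ℝ) (p : ℕ × ℕ) :
    axisSeriesTerm t η p.swap = axisSeriesTerm t η p := by
  rw [axisSeriesTerm, axisWeight_swap, axisSeriesTerm, Prod.fst_swap, Prod.snd_swap,
    ← chebyshevThirdDeriv_neg, neg_sub]

theorem axisSeriesTerm_add_eq_zero (t : ℝ) {η : ℝ} (hη : sin η ≠ 0) (i : ℕ) {l : ℕ} (hl : l < 3) :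
    axisSeriesTerm t η (i, i + l) = 0 := by
  rw [axisSeriesTerm, ← chebyshevThirdDeriv_neg]
  push_cast
  rw [sub_add_cancel_left, neg_neg, chebyshevThirdDeriv_eq_zero hl hη, mul_zero]

theorem axisSeriesTerm_succ (t : ℝ) {η : ℝ} (hη : sin η ≠ 0) (m k : ℕ) :
    exp (40 * t) / (3 * π ^ 8) * axisSeriesTerm t η (k + 1, k + m + 4) =
      alphOct k m * hOct m η * exp (-(4 * ((k * (k + m + 7) + 2 * m : ℕ) : ℝ)) * t) *
        (k + 3).choose 3 := by
  have hsub : ((k + 1 : ℕ) : ℝ) - (k + m + 4 : ℕ) = -(m + 3) := by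
    push_cast
    ring
  have hcoeff := alphOct_mul_exp_mul_choose k m t
  have hder := mul_choose_mul_hOct m hη
  rw [axisSeriesTerm, hsub, chebyshevThirdDeriv_neg]
  linear_combination -hOct m η * hcoeff -
    8 / (3 * π ^ 8) * exp (40 * t) * axisWeight t (k + 1, k + m + 4) * hder

theorem summable_axisSeriesTerm {t : ℝ} (ht : 0 < t) (η : ℝ) : Summable (axisSeriesTerm t η) := by
  simp only [funext (axisSeriesTerm_eq_add t η)]
  exact (((summable_axisTerm 3 ht η).mul_left _).add ((summable_axisTerm 2 ht η).mul_left _)).add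
    ((summable_axisTerm 1 ht η).mul_left _)

theorem tsum_axisSeriesTerm {t : ℝ} (ht : 0 < t) (η : ℝ) :
    ∑' p, axisSeriesTerm t η p = 1 / sin η ^ 3 * ∑' p, axisTerm 3 t η p +
      3 * cos η / sin η ^ 4 * ∑' p, axisTerm 2 t η p +
      (sin η ^ 2 + 3 * cos η ^ 2) / sin η ^ 5 * ∑' p, axisTerm 1 t η p := by
  have h3 := (summable_axisTerm 3 ht η).mul_left (1 / sin η ^ 3)
  have h2 := (summable_axisTerm 2 ht η).mul_left (3 * cos η / sin η ^ 4)
  have h1 := (summable_axisTerm 1 ht η).mul_left ((sin η ^ 2 + 3 * cos η ^ 2) / sin η ^ 5)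
  rw [← tsum_mul_left, ← tsum_mul_left, ← tsum_mul_left, ← h3.tsum_add h2,
    ← (h3.add h2).tsum_add h1]
  exact tsum_congr (axisSeriesTerm_eq_add t η)

theorem tendsto_tsum_axisSeriesTerm {η : ℝ} (h0 : 0 < η) (h1 : η < 2 * π) :
    Tendsto (fun t ↦ ((1 / (4 * t)) ^ 11)⁻¹ * exp (1 / (4 * t) * (η * (2 * π - η))) *
      ∑' p, axisSeriesTerm t η p) (𝓝[>] 0)
      (𝓝 (1 / sin η ^ 3 * (4 * π ^ 2 * (η * (2 * π - η)) ^ 3 * (2 * π - 2 * η) ^ 3))) := by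
  have hinv : Tendsto (fun t : ℝ ↦ (1 / (4 * t))⁻¹) (𝓝[>] 0) (𝓝 0) :=
    tendsto_inv_atTop_zero.comp tendsto_inv_four_mul_atTop
  have h3 := (tendsto_tsum_axisTerm 3 h0 h1).const_mul (1 / sin η ^ 3)
  have h2 := (hinv.mul (tendsto_tsum_axisTerm 2 h0 h1)).const_mul (3 * cos η / sin η ^ 4)
  have h1 := ((hinv.pow 2).mul (tendsto_tsum_axisTerm 1 h0 h1)).const_mul
    ((sin η ^ 2 + 3 * cos η ^ 2) / sin η ^ 5)
  refine (((h3.add h2).add h1).congr' ?_).trans_eq (by ring_nf)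
  filter_upwards [self_mem_nhdsWithin] with t (ht : 0 < t)
  rw [tsum_axisSeriesTerm ht]
  ring

theorem pOct_zero_left_eq_tsum {t : ℝ} (ht : 0 < t) {η : ℝ} (hη : sin η ≠ 0) :
    pOct t 0 η = exp (40 * t) / (6 * π ^ 8) * ∑' p, axisSeriesTerm t η p := by
  have hs := summable_axisSeriesTerm ht η
  have hshift (m : ℕ) : ∑' k, axisSeriesTerm t η (k, k + m + 3) =
      ∑' k, axisSeriesTerm t η (k + 1, k + m + 4) := by
    have hinj : Function.Injective fun k ↦ (k, k + m + 3) := fun i j h ↦ congrArg Prod.fst h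
    have htail : Summable fun k ↦ axisSeriesTerm t η (k, k + m + 3) := hs.comp_injective hinj
    rw [htail.tsum_eq_zero_add]
    have hindex (k : ℕ) : k + 1 + m + 3 = k + m + 4 := by ring
    simp only [hindex, axisSeriesTerm, axisWeight_zero_left, zero_mul, zero_add]
  rw [tsum_eq_two_mul_tsum_tsum hs (axisSeriesTerm_swap t η) three_ne_zero fun i l ↦
    axisSeriesTerm_add_eq_zero t hη i, tsum_congr hshift, ← mul_assoc, ← tsum_mul_left, pOct]
  refine tsum_congr fun m ↦ ?_
  rw [← tsum_mul_left]
  refine tsum_congr fun k ↦ ?_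
  rw [mul_zero, cos_zero, one_pow, mul_one, jacP_eval_one]
  linear_combination -axisSeriesTerm_succ t hη m k

theorem tendsto_neg_four_mul_mul_log {p : ℝ → ℝ} {N : ℕ} {c D : ℝ} (hc : 0 < c)
    (hp : Tendsto (fun t ↦ ((1 / (4 * t)) ^ N)⁻¹ * exp (1 / (4 * t) * D) * p t) (𝓝[>] 0) (𝓝 c)) :
    Tendsto (fun t ↦ -(4 * t) * log (p t)) (𝓝[>] 0) (𝓝 D) := by
  have hτ := tendsto_inv_four_mul_atTop
  have hlog := isLittleO_log_id_atTop.tendsto_div_nhds_zero.comp hτ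
  have hinv := tendsto_inv_atTop_zero.comp hτ
  refine ((hlog.const_mul (-N : ℝ)).add ((hinv.mul (hp.log hc.ne')).const_sub D)).congr' ?_
    |>.trans_eq (by simp)
  filter_upwards [self_mem_nhdsWithin, hp.eventually (lt_mem_nhds hc)] with t (ht : 0 < t) hpos
  have hpt : 0 < p t := pos_of_mul_pos_right hpos (by positivity)
  simp only [Function.comp_apply, id_eq]
  rw [log_mul (by positivity) hpt.ne', log_mul (by positivity) (by positivity), log_inv, log_pow,
    log_exp]
  field_simp
  ring

theorem tendsto_neg_log_pOct_zero_left_of_pos {η : ℝ} (h0 : 0 < η) (hπ : η < π) :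
    Tendsto (fun t ↦ -(4 * t) * log (pOct t 0 η)) (𝓝[>] 0) (𝓝 (η * (2 * π - η))) := by
  have hsin : 0 < sin η := sin_pos_of_pos_of_lt_pi h0 hπ
  have hη1 : 0 < 2 * π - η := by linarith
  have hη2 : 0 < 2 * π - 2 * η := by linarith
  have hexp : Tendsto (fun t ↦ exp (40 * t) / (6 * π ^ 8)) (𝓝[>] 0) (𝓝 (1 / (6 * π ^ 8))) := by
    have : ContinuousAt (fun t ↦ exp (40 * t) / (6 * π ^ 8)) 0 := by fun_prop
    simpa using this.tendsto.mono_left nhdsWithin_le_nhds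
  refine tendsto_neg_four_mul_mul_log (N := 11) ?_
    ((hexp.mul (tendsto_tsum_axisSeriesTerm h0 (by linarith))).congr' ?_)
  · positivity
  · filter_upwards [self_mem_nhdsWithin] with t (ht : 0 < t)
    rw [pOct_zero_left_eq_tsum ht hsin.ne']
    ring

theorem eventually_mul_pow_le_exp (C : ℝ) (K : ℕ) {ε : ℝ} (hε : 0 < ε) :
    ∀ᶠ t in 𝓝[>] (0 : ℝ), C * (1 / (4 * t)) ^ K ≤ exp (ε / (4 * t)) := by
  have hlim := ((isLittleO_pow_exp_pos_mul_atTop K hε).tendsto_div_nhds_zero.comp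
    tendsto_inv_four_mul_atTop).const_mul C
  rw [mul_zero] at hlim
  filter_upwards [hlim.eventually_le_const one_pos] with t ht
  rwa [Function.comp_apply, ← mul_div_assoc, div_le_one (exp_pos _), mul_one_div] at ht

theorem tendsto_neg_four_mul_mul_log_of_le {p : ℝ → ℝ} {D : ℝ}
    (hlower : ∀ ε > 0, ∀ᶠ t in 𝓝[>] (0 : ℝ), exp (-(D + ε) / (4 * t)) ≤ p t)
    (hupper : ∀ ε > 0, ∀ᶠ t in 𝓝[>] (0 : ℝ), p t ≤ exp (-(D - ε) / (4 * t))) :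
    Tendsto (fun t ↦ -(4 * t) * log (p t)) (𝓝[>] 0) (𝓝 D) := by
  rw [Metric.tendsto_nhds]
  intro ε hε
  filter_upwards [hlower _ (half_pos hε), hupper _ (half_pos hε), self_mem_nhdsWithin]
    with t hl hu (ht : 0 < t)
  have hp : 0 < p t := (exp_pos _).trans_le hl
  rw [← le_log_iff_exp_le hp, div_le_iff₀ (by positivity)] at hl
  rw [← log_le_iff_le_exp hp, le_div_iff₀ (by positivity)] at hu
  rw [Real.dist_eq, abs_lt]
  constructor <;> linarith

theorem pow_mul_exp_neg_le_factorial (n : ℕ) {x : ℝ} (hx : 0 ≤ x) :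
    x ^ n * exp (-x) ≤ n.factorial := by
  rw [exp_neg, ← div_eq_mul_inv, div_le_iff₀ (exp_pos _), ← div_le_iff₀' (by positivity)]
  exact pow_div_factorial_le_exp x hx n

theorem summable_one_div_add_one_sq : Summable fun k : ℕ ↦ 1 / ((k : ℝ) + 1) ^ 2 := by
  simpa using (summable_nat_add_iff 1).2 (summable_one_div_nat_pow.2 one_lt_two)

/-- The terms of the heat kernel series at the origin `r = η = 0`, indexed by `(m, k)`. -/
noncomputable def originTerm (t : ℝ) (p : ℕ × ℕ) : ℝ :=
  alphOct p.2 p.1 * exp (-(4 * ((p.2 * (p.2 + p.1 + 7) + 2 * p.1 : ℕ) : ℝ)) * t) *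
    (p.2 + 3).choose 3

theorem alphOct_pos (k m : ℕ) : 0 < alphOct k m := by
  have hk : 0 < (k + m + 6).choose (k + m + 3) := Nat.choose_pos (by lia)
  have hm : 0 < (m + 5).choose m := Nat.choose_pos (by lia)
  unfold alphOct
  positivity

theorem originTerm_pos (t : ℝ) (p : ℕ × ℕ) : 0 < originTerm t p := by
  have hα := alphOct_pos p.2 p.1
  have hchoose : 0 < (p.2 + 3).choose 3 := Nat.choose_pos (by lia)
  unfold originTerm
  positivity

theorem originTerm_zero (t : ℝ) : originTerm t (0, 0) = alphOct 0 0 := by simp [originTerm]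

theorem pOct_zero_zero (t : ℝ) : pOct t 0 0 = ∑' m, ∑' k, originTerm t (m, k) := by
  refine tsum_congr fun m ↦ tsum_congr fun k ↦ ?_
  rw [mul_zero, cos_zero, one_pow, mul_one, jacP_eval_one, hOct_zero, mul_one]
  rfl

theorem axisWeight_mul_choose_le (t : ℝ) (k m : ℕ) :
    axisWeight t (k + 1, k + m + 4) * ((m + 3) * (m + 5).choose m) ≤
      2 * (((k + 2) * (k + m + 5)) ^ 11 * exp (-(4 * t * ((k + 2) * (k + m + 5))))) := by
  have hchoose : ((m + 5).choose m : ℝ) ≤ (k + m + 5) ^ 5 := by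
    rw [Nat.choose_symm_add]
    have h : ((m + 5).choose 5 : ℝ) ≤ ((m + 5 : ℕ) : ℝ) ^ 5 := mod_cast Nat.choose_le_pow _ _
    refine h.trans (pow_le_pow_left₀ (by positivity) ?_ 5)
    push_cast
    linarith [k.cast_nonneg (α := ℝ)]
  set a : ℝ := k + 2
  set b : ℝ := k + m + 5
  have ha : 1 ≤ a := by simp only [a]; linarith [k.cast_nonneg (α := ℝ)]
  have hab : a ≤ b := by simp only [a, b]; linarith [m.cast_nonneg (α := ℝ)]
  have hm : (m + 3 : ℝ) ≤ b := by simp only [b]; linarith [k.cast_nonneg (α := ℝ)]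
  have hb : 1 ≤ b := ha.trans hab
  have haeq : ((k + 1 : ℕ) : ℝ) + 1 = a := by simp only [a]; push_cast; ring
  have hbeq : ((k + m + 4 : ℕ) : ℝ) + 1 = b := by simp only [b]; push_cast; ring
  rw [axisWeight, haeq, hbeq]
  calc (a + b) * (a ^ 3 - a) * (b ^ 3 - b) * exp (-(4 * t * (a * b))) *
        ((m + 3) * (m + 5).choose m)
      ≤ (b + b) * a ^ 3 * b ^ 3 * exp (-(4 * t * (a * b))) * (b * b ^ 5) := by
        have ha3 : 0 ≤ a ^ 3 - a := sub_nonneg.2 (le_self_pow₀ ha three_ne_zero)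
        have hb3 : 0 ≤ b ^ 3 - b := sub_nonneg.2 (le_self_pow₀ hb three_ne_zero)
        gcongr <;> linarith
    _ = 2 * (a ^ 3 * b ^ 10 * exp (-(4 * t * (a * b)))) := by ring
    _ ≤ 2 * (a ^ 11 * b ^ 11 * exp (-(4 * t * (a * b)))) := by
        gcongr <;> first | assumption | norm_num
    _ = _ := by ring

/-- A constant for which the polynomial bound `originTerm_le` holds. -/
noncomputable def originConst : ℝ := 8 / (3 * π ^ 8) * (2 * (13).factorial)

theorem originTerm_le {t : ℝ} (ht : 0 < t) (m k : ℕ) :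
    originTerm t (m, k) ≤ originConst * exp (40 * t) * (1 / (4 * t)) ^ 13 *
      (1 / ((m : ℝ) + 1) ^ 2 * (1 / ((k : ℝ) + 1) ^ 2)) := by
  set x : ℝ := (k + 2) * (k + m + 5)
  have hx : 0 < x := by positivity
  have hmk : ((m : ℝ) + 1) * (k + 1) ≤ x := by
    rw [mul_comm]
    refine mul_le_mul ?_ ?_ (by positivity) (by positivity) <;>
      linarith [k.cast_nonneg (α := ℝ)]
  have hdecay : x ^ 11 * exp (-(4 * t * x)) ≤
      (13).factorial * (1 / (4 * t)) ^ 13 * (1 / ((m : ℝ) + 1) ^ 2 * (1 / ((k : ℝ) + 1) ^ 2)) :=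
    calc x ^ 11 * exp (-(4 * t * x))
        = (4 * t * x) ^ 13 * exp (-(4 * t * x)) * (1 / (4 * t)) ^ 13 * (1 / x ^ 2) := by
          field_simp
      _ ≤ (13).factorial * (1 / (4 * t)) ^ 13 * (1 / (((m : ℝ) + 1) * (k + 1)) ^ 2) := by
          gcongr
          exact pow_mul_exp_neg_le_factorial 13 (by positivity)
      _ = _ := by
          rw [mul_pow, one_div_mul_one_div]
  calc originTerm t (m, k)
      = 8 / (3 * π ^ 8) * exp (40 * t) *
          (axisWeight t (k + 1, k + m + 4) * ((m + 3) * (m + 5).choose m)) := by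
        rw [originTerm, alphOct_mul_exp_mul_choose, mul_assoc]
    _ ≤ 8 / (3 * π ^ 8) * exp (40 * t) * (2 * ((13).factorial * (1 / (4 * t)) ^ 13 *
          (1 / ((m : ℝ) + 1) ^ 2 * (1 / ((k : ℝ) + 1) ^ 2)))) := by
        exact mul_le_mul_of_nonneg_left ((axisWeight_mul_choose_le t k m).trans (by gcongr))
          (by positivity)
    _ = _ := by
        rw [originConst]
        ring

theorem summable_originTerm {t : ℝ} (ht : 0 < t) : Summable (originTerm t) :=
  .of_nonneg_of_le (fun p ↦ (originTerm_pos t p).le) (fun p ↦ originTerm_le ht p.1 p.2)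
    ((summable_one_div_add_one_sq.mul_of_nonneg summable_one_div_add_one_sq
      (fun _ ↦ by positivity) fun _ ↦ by positivity).mul_left _)

theorem tsum_originTerm_le {t : ℝ} (ht : 0 < t) (ht1 : t ≤ 1) :
    ∑' p, originTerm t p ≤ originConst * exp 40 *
      (∑' k : ℕ, 1 / ((k : ℝ) + 1) ^ 2) ^ 2 * (1 / (4 * t)) ^ 13 := by
  have hprod := summable_one_div_add_one_sq.mul_of_nonneg summable_one_div_add_one_sq
    (fun _ ↦ by positivity) fun _ ↦ by positivity
  have hC : 0 < originConst := by unfold originConst; positivity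
  calc ∑' p, originTerm t p
      ≤ ∑' p : ℕ × ℕ, originConst * exp (40 * t) * (1 / (4 * t)) ^ 13 *
          (1 / ((p.1 : ℝ) + 1) ^ 2 * (1 / ((p.2 : ℝ) + 1) ^ 2)) :=
        (summable_originTerm ht).tsum_le_tsum (fun p ↦ originTerm_le ht p.1 p.2)
          (hprod.mul_left _)
    _ = originConst * exp (40 * t) * (∑' k : ℕ, 1 / ((k : ℝ) + 1) ^ 2) ^ 2 *
          (1 / (4 * t)) ^ 13 := by
        rw [tsum_mul_left, sq, summable_one_div_add_one_sq.tsum_mul_tsum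
          summable_one_div_add_one_sq hprod]
        ring
    _ ≤ _ := by
        gcongr
        linarith

theorem tendsto_neg_log_pOct_zero_zero :
    Tendsto (fun t ↦ -(4 * t) * log (pOct t 0 0)) (𝓝[>] 0) (𝓝 0) := by
  have hsum {t : ℝ} (ht : 0 < t) : pOct t 0 0 = ∑' p, originTerm t p := by
    rw [pOct_zero_zero, (summable_originTerm ht).tsum_prod]
  refine tendsto_neg_four_mul_mul_log_of_le (fun ε hε ↦ ?_) fun ε hε ↦ ?_
  · filter_upwards [self_mem_nhdsWithin, eventually_mul_pow_le_exp (alphOct 0 0)⁻¹ 0 hε]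
      with t (ht : 0 < t) hexp
    rw [zero_add, neg_div, exp_neg, hsum ht]
    rw [pow_zero, mul_one] at hexp
    refine (inv_le_of_inv_le₀ (alphOct_pos 0 0) hexp).trans ?_
    rw [← originTerm_zero t]
    exact (summable_originTerm ht).le_tsum _ fun p _ ↦ (originTerm_pos t p).le
  · filter_upwards [Ioo_mem_nhdsGT one_pos, eventually_mul_pow_le_exp _ 13 hε]
      with t ⟨ht, ht1⟩ hexp
    rw [zero_sub, neg_neg, hsum ht]
    exact (tsum_originTerm_le ht ht1.le).trans hexp

theorem tendsto_neg_log_pOct_zero_left {η : ℝ} (h0 : 0 ≤ η) (hπ : η < π) :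
    Tendsto (fun t ↦ -(4 * t) * log (pOct t 0 η)) (𝓝[>] 0) (𝓝 (2 * π * η - η ^ 2)) := by
  rcases h0.eq_or_lt with rfl | h0
  · simpa using tendsto_neg_log_pOct_zero_zero
  · exact (tendsto_neg_log_pOct_zero_left_of_pos h0 hπ).trans_eq (by ring_nf)

/-! ### The Chebyshev theta series -/

section ChebyshevCoeff

open Polynomial Polynomial.Chebyshev

theorem coeff_T_add_two_zero (n : ℕ) :
    (T ℝ ((n + 2 : ℕ) : ℤ)).coeff 0 = -(T ℝ n).coeff 0 := by
  push_cast
  rw [T_add_two, coeff_sub, mul_assoc, ← C_ofNat, coeff_C_mul, coeff_X_mul_zero, mul_zero, zero_sub]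

theorem coeff_T_add_two_succ (n k : ℕ) : (T ℝ ((n + 2 : ℕ) : ℤ)).coeff (k + 1) =
    2 * (T ℝ ((n + 1 : ℕ) : ℤ)).coeff k - (T ℝ n).coeff (k + 1) := by
  push_cast
  rw [T_add_two, coeff_sub, mul_assoc, ← C_ofNat, coeff_C_mul, coeff_X_mul]

theorem coeff_T_eq_zero {n k : ℕ} (h : ∀ l, n ≠ k + 2 * l) : (T ℝ n).coeff k = 0 := by
  induction n using Nat.twoStepInduction generalizing k with
  | zero => simpa [coeff_one] using (h 0).symm
  | one => simpa [coeff_X] using h 0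
  | more n ih0 ih1 =>
    cases k with
    | zero =>
      rw [coeff_T_add_two_zero, ih0 fun l hl ↦ h (l + 1) (by lia), neg_zero]
    | succ k =>
      rw [coeff_T_add_two_succ, ih1 fun l hl ↦ h l (by lia), ih0 fun l hl ↦ h (l + 1) (by lia)]
      simp

theorem two_mul_coeff_T (k l : ℕ) : 2 * (T ℝ ((k + 2 * l : ℕ) : ℤ)).coeff k =
    (-1) ^ l * 2 ^ k * ((k + l).choose l + (k + l - 1).choose k) := by
  induction h : k + 2 * l using Nat.twoStepInduction generalizing k l with
  | zero =>
    obtain ⟨rfl, rfl⟩ : k = 0 ∧ l = 0 := by lia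
    norm_num
  | one =>
    obtain ⟨rfl, rfl⟩ : k = 1 ∧ l = 0 := by lia
    norm_num
  | more n ih0 ih1 =>
    cases k with
    | zero =>
      obtain ⟨l, rfl⟩ : ∃ i, l = i + 1 := ⟨l - 1, by lia⟩
      have h0 := ih0 0 l (by lia)
      rw [coeff_T_add_two_zero, mul_neg, h0]
      simp [pow_succ]
    | succ k =>
      have h1 := ih1 k l (by lia)
      rw [coeff_T_add_two_succ, mul_sub, h1]
      cases l with
      | zero =>
        rw [coeff_T_eq_zero fun i hi ↦ by lia]
        obtain ⟨k, rfl⟩ : ∃ i, k = i + 1 := ⟨k - 1, by lia⟩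
        simp [pow_succ]
        ring
      | succ l =>
        have h0 := ih0 (k + 1) l (by lia)
        have hl : (k + 1 + (l + 1)).choose (l + 1) =
            (k + 1 + l).choose l + (k + (l + 1)).choose (l + 1) := by
          rw [← add_assoc (k + 1), Nat.choose_succ_succ', add_right_comm k 1 l, add_assoc k l 1]
        have hk : (k + 1 + (l + 1) - 1).choose (k + 1) =
            (k + (l + 1) - 1).choose k + (k + 1 + l - 1).choose (k + 1) := by
          rw [show k + 1 + (l + 1) - 1 = k + l + 1 by lia, Nat.choose_succ_succ]
          congr 2
          lia
        rw [h0, hl, hk]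
        push_cast
        ring

theorem abs_coeff_T_mul_pow_le {y : ℝ} (hy : 0 ≤ y) (j : ℤ) (k : ℕ) :
    |(T ℝ j).coeff k| * y ^ k ≤ (2 * y + 1) ^ j.natAbs := by
  rw [← T_natAbs]
  induction j.natAbs using Nat.twoStepInduction generalizing k with
  | zero =>
    rcases k with - | k <;> simp [coeff_one]
  | one =>
    rcases k with - | - | k <;> simp [coeff_X] <;> linarith
  | more n ih0 ih1 =>
    have hpow : (2 * y + 1) ^ n ≤ (2 * y + 1) ^ (n + 2) :=
      pow_le_pow_right₀ (by linarith) (by lia)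
    cases k with
    | zero =>
      rw [coeff_T_add_two_zero, abs_neg]
      exact (ih0 0).trans hpow
    | succ k =>
      rw [coeff_T_add_two_succ]
      calc |2 * (T ℝ ((n + 1 : ℕ) : ℤ)).coeff k - (T ℝ n).coeff (k + 1)| * y ^ (k + 1)
          ≤ (|2 * (T ℝ ((n + 1 : ℕ) : ℤ)).coeff k| + |(T ℝ n).coeff (k + 1)|) * y ^ (k + 1) := by
            gcongr
            exact abs_sub _ _
        _ = 2 * y * (|(T ℝ ((n + 1 : ℕ) : ℤ)).coeff k| * y ^ k) +
              |(T ℝ n).coeff (k + 1)| * y ^ (k + 1) := by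
            rw [abs_mul, abs_two]
            ring
        _ ≤ 2 * y * (2 * y + 1) ^ (n + 1) + (2 * y + 1) ^ n := by
            gcongr
            · exact ih1 k
            · exact ih0 (k + 1)
        _ ≤ 2 * y * (2 * y + 1) ^ (n + 1) + (2 * y + 1) ^ (n + 1) := by
            gcongr
            · linarith
            · lia
        _ = (2 * y + 1) ^ (n + 2) := by ring

end ChebyshevCoeff

theorem summable_exp_neg_mul_sq_mul_pow {t A : ℝ} (ht : 0 < t) (hA : 0 < A) :
    Summable fun j : ℤ ↦ exp (-(t * j ^ 2)) * A ^ j.natAbs := by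
  refine (summable_pow_mul_jacobiTheta₂_term_bound (log A / (2 * π)) (div_pos ht pi_pos) 0).congr
    fun j ↦ ?_
  rw [pow_zero, one_mul, ← exp_log (pow_pos hA j.natAbs), ← exp_add, log_pow, Nat.cast_natAbs]
  congr 1
  push_cast
  field_simp
  ring

section ChebyshevTheta

open Polynomial.Chebyshev

/-- The theta series `∑ⱼ exp(-t j²) Tⱼ(x)`, which is the theta function `∑ⱼ exp(-t j²) cos(j δ)`
in the variable `x = cos δ`. -/
noncomputable def chebyshevTheta (t x : ℝ) : ℝ := ∑' j : ℤ, exp (-(t * j ^ 2)) * (T ℝ j).eval x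

/-- The Taylor coefficients of `chebyshevTheta t` at `0`. -/
noncomputable def chebyshevThetaCoeff (t : ℝ) (k : ℕ) : ℝ :=
  ∑' j : ℤ, exp (-(t * j ^ 2)) * (T ℝ j).coeff k

theorem summable_exp_mul_coeff_T_mul_pow {t : ℝ} (ht : 0 < t) (x : ℝ) :
    Summable fun p : ℤ × ℕ ↦ exp (-(t * p.1 ^ 2)) * ((T ℝ p.1).coeff p.2 * x ^ p.2) := by
  have hA : 0 < 2 * (2 * |x|) + 1 := by positivity
  refine .of_norm_bounded ((summable_exp_neg_mul_sq_mul_pow ht hA).mul_of_nonneg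
    summable_geometric_two (fun _ ↦ by positivity) fun _ ↦ by positivity) fun p ↦ ?_
  have hcoeff : |(T ℝ p.1).coeff p.2| * |x| ^ p.2 ≤
      (2 * (2 * |x|) + 1) ^ p.1.natAbs * (1 / 2) ^ p.2 := by
    have h := abs_coeff_T_mul_pow_le (y := 2 * |x|) (by positivity) p.1 p.2
    rw [one_div, inv_pow, ← div_eq_mul_inv, le_div_iff₀ (by positivity)]
    rw [mul_pow] at h
    linarith
  rw [norm_mul, norm_mul, norm_pow, Real.norm_eq_abs, Real.norm_eq_abs, Real.norm_eq_abs,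
    abs_exp, mul_assoc]
  gcongr

theorem abs_coeff_T_le (j : ℤ) (k : ℕ) : |(T ℝ j).coeff k| ≤ 3 ^ j.natAbs := by
  have h := abs_coeff_T_mul_pow_le zero_le_one j k
  norm_num at h
  exact h

theorem summable_exp_mul_abs_coeff_T {t : ℝ} (ht : 0 < t) (k : ℕ) :
    Summable fun j : ℤ ↦ exp (-(t * j ^ 2)) * |(T ℝ j).coeff k| :=
  (summable_exp_neg_mul_sq_mul_pow ht three_pos).of_nonneg_of_le (fun _ ↦ by positivity)
    fun j ↦ mul_le_mul_of_nonneg_left (abs_coeff_T_le j k) (exp_pos _).le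

theorem hasSum_coeff_mul_pow (p : Polynomial ℝ) (x : ℝ) :
    HasSum (fun k ↦ p.coeff k * x ^ k) (p.eval x) := by
  rw [Polynomial.eval_eq_sum, Polynomial.sum]
  exact hasSum_sum_of_ne_finset_zero fun k hk ↦ by
    rw [Polynomial.notMem_support_iff.1 hk, zero_mul]

theorem hasSum_tsum_of_hasSum {α β : Type*} {f : α → β → ℝ} {a : α → ℝ} {b : β → ℝ}
    (hf : Summable fun p : α × β ↦ f p.1 p.2) (ha : ∀ i, HasSum (f i) (a i))
    (hb : ∀ j, HasSum (fun i ↦ f i j) (b j)) : HasSum b (∑' i, a i) := by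
  rw [(hf.hasSum.prod_fiberwise ha).tsum_eq]
  exact ((Equiv.prodComm β α).hasSum_iff.2 hf.hasSum).prod_fiberwise hb

theorem hasSum_chebyshevThetaCoeff_mul_pow {t : ℝ} (ht : 0 < t) (x : ℝ) :
    HasSum (fun k ↦ chebyshevThetaCoeff t k * x ^ k) (chebyshevTheta t x) := by
  refine hasSum_tsum_of_hasSum (summable_exp_mul_coeff_T_mul_pow ht x)
    (fun j ↦ (hasSum_coeff_mul_pow (T ℝ j) x).mul_left _) fun k ↦ ?_
  have hcoeff : Summable fun j : ℤ ↦ exp (-(t * j ^ 2)) * (T ℝ j).coeff k :=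
    (summable_exp_mul_abs_coeff_T ht k).of_norm_bounded fun j ↦ by simp
  simpa only [mul_assoc, chebyshevThetaCoeff] using hcoeff.hasSum.mul_right (x ^ k)

end ChebyshevTheta

section TripleProduct

/-- The finite `q`-Pochhammer symbol `(q; q)ₙ`. -/
noncomputable def qPochhammer (q : ℝ) (n : ℕ) : ℝ := ∏ i ∈ Finset.range n, (1 - q ^ (i + 1))

theorem qPochhammer_succ (q : ℝ) (n : ℕ) :
    qPochhammer q (n + 1) = qPochhammer q n * (1 - q ^ (n + 1)) :=
  Finset.prod_range_succ _ _

theorem qPochhammer_pos {q : ℝ} (h0 : 0 ≤ q) (h1 : q < 1) (n : ℕ) : 0 < qPochhammer q n :=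
  Finset.prod_pos fun i _ ↦ sub_pos.2 (pow_lt_one₀ h0 h1 i.succ_ne_zero)

theorem qPochhammer_antitone {q : ℝ} (h0 : 0 ≤ q) (h1 : q < 1) : Antitone (qPochhammer q) :=
  antitone_nat_of_succ_le fun n ↦ by
    rw [qPochhammer_succ]
    exact mul_le_of_le_one_right (qPochhammer_pos h0 h1 n).le (sub_le_self _ (by positivity))

theorem exists_pos_tendsto_qPochhammer {q : ℝ} (h0 : 0 ≤ q) (h1 : q < 1) :
    ∃ P > 0, Tendsto (qPochhammer q) atTop (𝓝 P) := by
  have hs : Summable fun i : ℕ ↦ ‖-q ^ (i + 1)‖ := by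
    simpa [abs_of_nonneg h0] using (summable_nat_add_iff 1).2 (summable_geometric_of_lt_one h0 h1)
  have hlim : Tendsto (qPochhammer q) atTop (𝓝 (∏' i : ℕ, (1 + -q ^ (i + 1)))) :=
    ((multipliable_one_add_of_summable hs).hasProd.tendsto_prod_nat).congr fun n ↦ by
      simp only [qPochhammer, sub_eq_add_neg]
  have hne : ∏' i : ℕ, (1 + -q ^ (i + 1)) ≠ 0 :=
    tprod_one_add_ne_zero_of_summable
      (fun i ↦ (sub_pos.2 (pow_lt_one₀ h0 h1 i.succ_ne_zero)).ne') hs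
  exact ⟨_, (ge_of_tendsto' hlim fun n ↦ (qPochhammer_pos h0 h1 n).le).lt_of_ne' hne, hlim⟩

/-- The reciprocal `1 / (q; q)ₘ`, extended by `0` to `m < 0` so that
`invQPochhammer_sub_one` holds for every integer `m`. -/
noncomputable def invQPochhammer (q : ℝ) (m : ℤ) : ℝ :=
  if m < 0 then 0 else (qPochhammer q m.toNat)⁻¹

theorem invQPochhammer_natCast (q : ℝ) (n : ℕ) : invQPochhammer q n = (qPochhammer q n)⁻¹ := by
  simp [invQPochhammer]

theorem invQPochhammer_sub_one {q : ℝ} (h0 : 0 ≤ q) (h1 : q < 1) (m : ℤ) :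
    invQPochhammer q (m - 1) = (1 - q ^ m) * invQPochhammer q m := by
  rcases lt_trichotomy m 0 with hm | rfl | hm
  · simp [invQPochhammer, hm, hm.trans one_pos]
  · simp [invQPochhammer]
  · obtain ⟨n, rfl⟩ : ∃ n : ℕ, m = (n + 1 : ℕ) := ⟨(m - 1).toNat, by lia⟩
    have hn : 1 - q ^ (n + 1) ≠ 0 := (sub_pos.2 (pow_lt_one₀ h0 h1 n.succ_ne_zero)).ne'
    rw [invQPochhammer_natCast, qPochhammer_succ, zpow_natCast, Nat.cast_succ, add_sub_cancel_right,
      invQPochhammer_natCast]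
    field_simp

theorem invQPochhammer_nonneg {q : ℝ} (h0 : 0 ≤ q) (h1 : q < 1) (m : ℤ) :
    0 ≤ invQPochhammer q m := by
  unfold invQPochhammer
  split_ifs
  exacts [le_rfl, (inv_pos.2 (qPochhammer_pos h0 h1 _)).le]

theorem tendsto_invQPochhammer {q P : ℝ} (hP : P ≠ 0)
    (h : Tendsto (qPochhammer q) atTop (𝓝 P)) :
    Tendsto (invQPochhammer q) atTop (𝓝 P⁻¹) := by
  have htoNat : Tendsto Int.toNat atTop atTop :=
    tendsto_atTop_atTop.2 fun b ↦ ⟨b, fun a ha ↦ by lia⟩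
  refine ((h.comp htoNat).inv₀ hP).congr' ?_
  filter_upwards [eventually_ge_atTop 0] with m hm
  simp [invQPochhammer, hm.not_gt]

/-- The coefficient `q^(j²) [2n choose n+j]` (a Gaussian binomial in base `q²`) of `xʲ` in the
finite triple product `∏_{i < n} (1 + q^(2i+1) x) (1 + q^(2i+1) x⁻¹)`. -/
noncomputable def tripleProductCoeff (q : ℝ) (n : ℕ) (j : ℤ) : ℝ :=
  qPochhammer (q ^ 2) (2 * n) * q ^ j ^ 2 *
    (invQPochhammer (q ^ 2) (n + j) * invQPochhammer (q ^ 2) (n - j))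

theorem tripleProductCoeff_zero (q : ℝ) {j : ℤ} (hj : j ≠ 0) : tripleProductCoeff q 0 j = 0 := by
  rcases hj.lt_or_gt with h | h <;> simp [tripleProductCoeff, invQPochhammer, h]

theorem tripleProductCoeff_eq_zero (q : ℝ) {n : ℕ} {j : ℤ} (hj : j ∉ Finset.Icc (-n : ℤ) n) :
    tripleProductCoeff q n j = 0 := by
  rcases lt_or_ge j (-n) with h | h
  · rw [tripleProductCoeff, invQPochhammer, if_pos (by lia), zero_mul, mul_zero]
  · have : (n : ℤ) < j := by simpa [h] using hj
    rw [tripleProductCoeff, invQPochhammer, invQPochhammer, if_pos (by lia : (n : ℤ) - j < 0),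
      mul_zero, mul_zero]

theorem pow_mul_zpow_add_one_sq {q : ℝ} (hq : q ≠ 0) (n : ℕ) (j : ℤ) :
    q ^ (2 * n + 1) * q ^ (j + 1) ^ 2 = (q ^ 2) ^ (n + j) * q ^ 2 * q ^ j ^ 2 := by
  simp only [← zpow_natCast, ← zpow_mul, ← zpow_add₀ hq]
  congr 1
  push_cast
  ring

theorem tripleProductCoeff_succ {q : ℝ} (h0 : 0 < q) (h1 : q < 1) (n : ℕ) (j : ℤ) :
    tripleProductCoeff q (n + 1) j = (1 + q ^ (4 * n + 2)) * tripleProductCoeff q n j +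
      q ^ (2 * n + 1) * (tripleProductCoeff q n (j - 1) + tripleProductCoeff q n (j + 1)) := by
  have hQ0 : 0 < q ^ 2 := by positivity
  have hQ1 : q ^ 2 < 1 := pow_lt_one₀ h0.le h1 two_ne_zero
  have hrec := invQPochhammer_sub_one hQ0.le hQ1
  set a := invQPochhammer (q ^ 2) (n + 1 + j) with ha
  set b := invQPochhammer (q ^ 2) (n + 1 - j) with hb
  set x := (q ^ 2) ^ (n + j) with hx
  set y := (q ^ 2) ^ (n - j) with hy
  have ha0 : invQPochhammer (q ^ 2) (n + j) = (1 - x * q ^ 2) * a := by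
    rw [hx, ← zpow_add_one₀ hQ0.ne', add_right_comm, ha, ← hrec, add_right_comm,
      add_sub_cancel_right]
  have hb0 : invQPochhammer (q ^ 2) (n - j) = (1 - y * q ^ 2) * b := by
    rw [hy, ← zpow_add_one₀ hQ0.ne', sub_add_eq_add_sub, hb, ← hrec, ← sub_add_eq_add_sub,
      add_sub_cancel_right]
  have ha1 : invQPochhammer (q ^ 2) (n + (j - 1)) = (1 - x) * ((1 - x * q ^ 2) * a) := by
    rw [← add_sub_assoc, hrec, ha0]
  have hb1 : invQPochhammer (q ^ 2) (n - (j + 1)) = (1 - y) * ((1 - y * q ^ 2) * b) := by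
    rw [← sub_sub, hrec, hb0]
  have hxy : (q ^ 2) ^ (2 * n) = x * y := by
    rw [hx, hy, ← zpow_add₀ hQ0.ne', ← zpow_natCast]
    congr 1
    push_cast
    ring
  have hqx : q ^ (2 * n + 1) * q ^ (j + 1) ^ 2 = x * q ^ 2 * q ^ j ^ 2 :=
    pow_mul_zpow_add_one_sq h0.ne' n j
  have hqy : q ^ (2 * n + 1) * q ^ (j - 1) ^ 2 = y * q ^ 2 * q ^ j ^ 2 := by
    have h := pow_mul_zpow_add_one_sq h0.ne' n (-j)
    rwa [neg_sq, ← sub_eq_add_neg, neg_add_eq_sub, sub_sq_comm] at h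
  have hqq : q ^ (4 * n + 2) = x * y * q ^ 2 := by
    rw [← hxy]
    ring
  have hP : qPochhammer (q ^ 2) (2 * (n + 1)) =
      qPochhammer (q ^ 2) (2 * n) * (1 - x * y * q ^ 2) * (1 - x * y * q ^ 2 * q ^ 2) := by
    rw [mul_add_one, qPochhammer_succ, qPochhammer_succ, ← hxy, ← pow_succ, ← pow_succ]
  unfold tripleProductCoeff
  rw [ha0, hb0, ha1, hb1, show (n : ℤ) + (j + 1) = n + 1 + j by ring,
    show (n : ℤ) - (j - 1) = n + 1 - j by ring, Nat.cast_succ, ← ha, ← hb, hP, hqq]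
  linear_combination -(qPochhammer (q ^ 2) (2 * n) * ((1 - x) * ((1 - x * q ^ 2) * a) * b)) * hqy -
    qPochhammer (q ^ 2) (2 * n) * (a * ((1 - y) * ((1 - y * q ^ 2) * b))) * hqx

open Polynomial

/-- The finite triple product `∏_{i < n} (1 + q^(2i+1) x) (1 + q^(2i+1) x⁻¹)` as a polynomial in
`X = (x + x⁻¹) / 2`. -/
noncomputable def tripleProduct (q : ℝ) (n : ℕ) : ℝ[X] :=
  ∏ i ∈ Finset.range n, (C (1 + q ^ (4 * i + 2)) + C (2 * q ^ (2 * i + 1)) * X)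

theorem tripleProduct_succ (q : ℝ) (n : ℕ) : tripleProduct q (n + 1) =
    (1 + q ^ (4 * n + 2)) • tripleProduct q n + q ^ (2 * n + 1) • (2 * X * tripleProduct q n) := by
  rw [tripleProduct, Finset.prod_range_succ, ← tripleProduct, smul_eq_C_mul, smul_eq_C_mul, C_mul,
    C_ofNat]
  ring

theorem coeff_tripleProduct_nonneg {q : ℝ} (h0 : 0 ≤ q) (n k : ℕ) :
    0 ≤ (tripleProduct q n).coeff k := by
  induction n generalizing k with
  | zero =>
    rw [tripleProduct, Finset.prod_range_zero, coeff_one]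
    positivity
  | succ n ih =>
    rw [tripleProduct_succ, mul_assoc, ← C_ofNat]
    simp only [coeff_add, coeff_smul, coeff_C_mul, smul_eq_mul]
    have hX : 0 ≤ (X * tripleProduct q n).coeff k := by
      cases k with
      | zero => simp
      | succ k => simpa using ih k
    have := ih k
    positivity

theorem hasSum_tripleProductCoeff_mul {q : ℝ} (h0 : 0 < q) (h1 : q < 1) (n : ℕ)
    (φ : ℝ[X] →ₗ[ℝ] ℝ) :
    HasSum (fun j ↦ tripleProductCoeff q n j * φ (Chebyshev.T ℝ j)) (φ (tripleProduct q n)) := by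
  induction n generalizing φ with
  | zero =>
    have h0 : tripleProductCoeff q 0 0 * φ (Chebyshev.T ℝ 0) = φ (tripleProduct q 0) := by
      simp [tripleProduct, tripleProductCoeff, qPochhammer, invQPochhammer]
    exact h0 ▸ hasSum_single 0 fun j hj ↦ by rw [tripleProductCoeff_zero q hj, zero_mul]
  | succ n ih =>
    have hsummable (g : ℤ → ℝ) : Summable fun j ↦ tripleProductCoeff q n j * g j :=
      summable_of_ne_finset_zero fun j hj ↦ by rw [tripleProductCoeff_eq_zero q hj, zero_mul]
    have hup := (hsummable fun j ↦ φ (Chebyshev.T ℝ (j + 1))).hasSum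
    have hdown := (hsummable fun j ↦ φ (Chebyshev.T ℝ (j - 1))).hasSum
    have hX : (∑' j, tripleProductCoeff q n j * φ (Chebyshev.T ℝ (j + 1))) +
        ∑' j, tripleProductCoeff q n j * φ (Chebyshev.T ℝ (j - 1)) =
        φ (2 * X * tripleProduct q n) := by
      refine (hup.add hdown).unique ((ih (φ ∘ₗ LinearMap.mulLeft ℝ (2 * X))).congr_fun fun j ↦ ?_)
      rw [LinearMap.comp_apply, LinearMap.mulLeft_apply, ← mul_add, ← map_add, Chebyshev.T_add_one,
        sub_add_cancel]
    have hshift := ((Equiv.subRight 1).hasSum_iff.2 hup).add ((Equiv.addRight 1).hasSum_iff.2 hdown)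
    rw [hX] at hshift
    rw [tripleProduct_succ, map_add, map_smul, map_smul, smul_eq_mul, smul_eq_mul]
    refine (((ih φ).mul_left _).add (hshift.mul_left _)).congr_fun fun j ↦ ?_
    simp only [tripleProductCoeff_succ h0 h1, Function.comp_apply, Equiv.subRight_apply,
      Equiv.coe_addRight, sub_add_cancel, add_sub_cancel_right]
    ring

theorem tendsto_tripleProductCoeff {q P : ℝ} (hP : P ≠ 0)
    (h : Tendsto (qPochhammer (q ^ 2)) atTop (𝓝 P)) (j : ℤ) :
    Tendsto (fun n ↦ tripleProductCoeff q n j) atTop (𝓝 (P⁻¹ * q ^ j ^ 2)) := by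
  have hinv := tendsto_invQPochhammer hP h
  have hadd := hinv.comp (tendsto_atTop_add_const_right _ j tendsto_natCast_atTop_atTop)
  have hsub := hinv.comp (tendsto_atTop_add_const_right _ (-j) tendsto_natCast_atTop_atTop)
  have htwo := h.comp (tendsto_id.const_mul_atTop' two_pos)
  refine ((htwo.mul_const (q ^ j ^ 2)).mul (hadd.mul hsub)).trans_eq ?_
  congr 1
  field_simp

theorem invQPochhammer_le {q P : ℝ} (h0 : 0 ≤ q) (h1 : q < 1) (hP : 0 < P)
    (h : Tendsto (qPochhammer q) atTop (𝓝 P)) (m : ℤ) : invQPochhammer q m ≤ P⁻¹ := by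
  unfold invQPochhammer
  split_ifs
  · positivity
  · exact inv_anti₀ hP ((qPochhammer_antitone h0 h1).le_of_tendsto h _)

theorem abs_tripleProductCoeff_le {q P : ℝ} (h0 : 0 < q) (h1 : q < 1) (hP : 0 < P)
    (h : Tendsto (qPochhammer (q ^ 2)) atTop (𝓝 P)) (n : ℕ) (j : ℤ) :
    |tripleProductCoeff q n j| ≤ P⁻¹ * P⁻¹ * q ^ j ^ 2 := by
  have hQ0 : 0 ≤ q ^ 2 := by positivity
  have hQ1 : q ^ 2 < 1 := pow_lt_one₀ h0.le h1 two_ne_zero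
  have hone : qPochhammer (q ^ 2) (2 * n) ≤ 1 := by
    simpa [qPochhammer] using qPochhammer_antitone hQ0 hQ1 (Nat.zero_le (2 * n))
  have hpos := qPochhammer_pos hQ0 hQ1 (2 * n)
  have hnonneg := invQPochhammer_nonneg hQ0 hQ1
  have hle := invQPochhammer_le hQ0 hQ1 hP h
  rw [tripleProductCoeff, abs_of_nonneg (mul_nonneg (by positivity)
    (mul_nonneg (hnonneg _) (hnonneg _))), mul_comm]
  have hq : 0 < q ^ j ^ 2 := zpow_pos h0 _
  gcongr ?_ * ?_
  · have := hnonneg (n - j)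
    gcongr
    exacts [hle _, hle _]
  · exact mul_le_of_le_one_left hq.le hone

end TripleProduct

theorem exp_neg_zpow_sq (t : ℝ) (j : ℤ) : exp (-t) ^ j ^ 2 = exp (-(t * j ^ 2)) := by
  rw [← rpow_intCast, ← exp_mul]
  congr 1
  push_cast
  ring

theorem chebyshevThetaCoeff_nonneg {t : ℝ} (ht : 0 < t) (k : ℕ) : 0 ≤ chebyshevThetaCoeff t k := by
  have h0 : 0 < exp (-t) := exp_pos _
  have h1 : exp (-t) < 1 := exp_lt_one_iff.2 (neg_lt_zero.2 ht)
  obtain ⟨P, hP, hlim⟩ := exists_pos_tendsto_qPochhammer (sq_nonneg (exp (-t)))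
    (pow_lt_one₀ h0.le h1 two_ne_zero)
  have hsum (n : ℕ) : HasSum (fun j ↦ tripleProductCoeff (exp (-t)) n j *
      (Polynomial.Chebyshev.T ℝ j).coeff k) ((tripleProduct (exp (-t)) n).coeff k) :=
    hasSum_tripleProductCoeff_mul h0 h1 n (Polynomial.lcoeff ℝ k)
  have htendsto := tendsto_tsum_of_dominated_convergence (𝓕 := atTop)
    (f := fun (n : ℕ) (j : ℤ) ↦
      tripleProductCoeff (exp (-t)) n j * (Polynomial.Chebyshev.T ℝ j).coeff k)
    ((summable_exp_mul_abs_coeff_T ht k).mul_left (P⁻¹ * P⁻¹))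
    (fun j ↦ (tendsto_tripleProductCoeff hP.ne' hlim j).mul_const _)
    (.of_forall fun n j ↦ by
      rw [norm_mul, Real.norm_eq_abs, Real.norm_eq_abs, ← mul_assoc, ← exp_neg_zpow_sq]
      gcongr
      exact abs_tripleProductCoeff_le h0 h1 hP hlim n j)
  have hnonneg : 0 ≤ P⁻¹ * chebyshevThetaCoeff t k := by
    rw [chebyshevThetaCoeff, ← tsum_mul_left]
    simp only [exp_neg_zpow_sq, mul_assoc] at htendsto
    refine ge_of_tendsto' htendsto fun n ↦ ?_
    exact (hsum n).tsum_eq.symm ▸ coeff_tripleProduct_nonneg h0.le n k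
  exact nonneg_of_mul_nonneg_right hnonneg (inv_pos.2 hP)

/-! ### The heat kernel on the horizontal axis -/

theorem two_mul_coeff_T_succ (n l : ℕ) :
    2 * (Polynomial.Chebyshev.T ℝ ((n + 1 + 2 * l : ℕ) : ℤ)).coeff (n + 1) =
      (-1) ^ l * 2 ^ (n + 1) * ((n + 1 + 2 * l) * (n + l).factorial /
        ((n + 1).factorial * l.factorial)) := by
  rw [two_mul_coeff_T]
  congr 1
  cases l with
  | zero =>
    simp [Nat.factorial_succ]
    field_simp
  | succ l =>
    rw [Nat.cast_choose ℝ (by lia), Nat.cast_choose ℝ (by lia),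
      show n + 1 + (l + 1) - (l + 1) = n + 1 by lia,
      show n + 1 + (l + 1) - 1 - (n + 1) = l by lia,
      show n + 1 + (l + 1) - 1 = n + (l + 1) by lia,
      show n + 1 + (l + 1) = n + (l + 1) + 1 by lia]
    simp only [Nat.factorial_succ]
    push_cast
    field_simp
    ring

theorem hasSum_chebyshevThetaCoeff {t : ℝ} (ht : 0 < t) {k : ℕ} (hk : k ≠ 0) :
    HasSum (fun l : ℕ ↦ 2 * (Polynomial.Chebyshev.T ℝ ((k + 2 * l : ℕ) : ℤ)).coeff k *
      exp (-(t * (k + 2 * l : ℕ) ^ 2))) (chebyshevThetaCoeff t k) := by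
  have hcoeff : Summable fun j : ℤ ↦
      exp (-(t * j ^ 2)) * (Polynomial.Chebyshev.T ℝ j).coeff k :=
    (summable_exp_mul_abs_coeff_T ht k).of_norm_bounded fun j ↦ by simp
  have hfold := hcoeff.hasSum.nat_add_neg
  have hinj : Function.Injective fun l : ℕ ↦ k + 2 * l := fun a b hab ↦ by simpa using hab
  rw [← hinj.hasSum_iff fun n hn ↦ ?_] at hfold
  · refine (hfold.congr_fun fun l ↦ ?_).trans_eq ?_
    · simp only [Function.comp_apply, Polynomial.Chebyshev.T_neg]
      push_cast
      rw [neg_sq]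
      ring
    · simp [chebyshevThetaCoeff, Polynomial.coeff_one, hk]
  · have hzero : (Polynomial.Chebyshev.T ℝ (n : ℤ)).coeff k = 0 :=
      coeff_T_eq_zero fun l hl ↦ hn ⟨l, hl.symm⟩
    simp [Polynomial.Chebyshev.T_neg, hzero]

/-- The weight of `exp((m+3)² t) (cos r)^(m+2i)` in the expansion of `pOct t r 0` obtained by
summing over the Jacobi index first; see `pOct_zero_right_eq_tsum`. -/
noncomputable def horizontalWeight (m i : ℕ) : ℝ :=
  (m + 3) * (m + 5).choose 5 * ((m + i + 4) * (m + i + 5) * (m + i + 6) * (m + i + 7)) *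
    ((m + 2 * i + 7).choose i / 2 ^ (m + 2 * i + 7))

theorem alphOct_mul_choose_mul_choose (m i l : ℕ) :
    alphOct (i + l) m * ((-1) ^ l * (m + 3 + (i + l)).choose l *
      (m + 3 + (i + l) - l + (i + l + 3)).choose (i + l - l)) =
    16 / π ^ 8 * horizontalWeight m i * (2 *
      (Polynomial.Chebyshev.T ℝ ((m + 2 * i + 7 + 2 * l : ℕ) : ℤ)).coeff (m + 2 * i + 7)) := by
  rw [two_mul_coeff_T_succ (m + 2 * i + 6), alphOct, horizontalWeight,
    Nat.choose_symm_of_eq_add (by lia : m + 5 = m + 5), Nat.add_sub_cancel,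
    Nat.cast_choose ℝ (by lia : i + l + m + 3 ≤ _), Nat.cast_choose ℝ (by lia : l ≤ _),
    Nat.cast_choose ℝ (by lia : i ≤ m + 3 + (i + l) - l + (i + l + 3)),
    Nat.cast_choose ℝ (by lia : i ≤ m + 2 * i + 7),
    show i + l + m + 6 - (i + l + m + 3) = 3 by lia,
    show m + 3 + (i + l) - l = m + i + 3 by lia, show m + 3 + (i + l) = i + l + m + 3 by lia,
    show m + i + 3 + (i + l + 3) - i = i + l + m + 6 by lia,
    show m + i + 3 + (i + l + 3) = m + 2 * i + 6 + l by lia,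
    show m + 2 * i + 7 - i = m + i + 3 + 4 by lia]
  simp only [Nat.factorial_succ]
  push_cast
  field_simp
  ring

theorem hasSum_tsum_sum_range {f : ℕ → ℕ → ℝ} {g : ℕ → ℝ}
    (hf : Summable fun p : ℕ × ℕ ↦ f p.1 p.2) (hg : ∀ i, HasSum (fun l ↦ f l i) (g i)) :
    HasSum g (∑' k, ∑ l ∈ Finset.range (k + 1), f l (k - l)) := by
  have hdiag : HasSum (fun k ↦ ∑ l ∈ Finset.range (k + 1), f l (k - l))
      (∑' p : ℕ × ℕ, f p.1 p.2) := by
    refine (Finset.HasAntidiagonal.sigmaAntidiagonalEquivProd.hasSum_iff.2 hf.hasSum).sigma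
      fun k ↦ ?_
    rw [← Finset.Nat.sum_antidiagonal_eq_sum_range_succ]
    exact (Finset.HasAntidiagonal.antidiagonal k).hasSum fun p : ℕ × ℕ ↦ f p.1 p.2
  rw [hdiag.tsum_eq]
  exact ((Equiv.prodComm ℕ ℕ).hasSum_iff.2 hf.hasSum).prod_fiberwise hg

theorem exists_exp_neg_mul_sq_mul_pow_le {t A : ℝ} (ht : 0 < t) (hA : 0 < A) :
    ∃ M, ∀ n : ℕ, exp (-(t * n ^ 2)) * A ^ n ≤ M * (1 / 2) ^ n := by
  have hs := summable_exp_neg_mul_sq_mul_pow ht (show 0 < 2 * A by positivity)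
  refine ⟨∑' j : ℤ, exp (-(t * j ^ 2)) * (2 * A) ^ j.natAbs, fun n ↦ ?_⟩
  have hn := hs.le_tsum (n : ℤ) fun j _ ↦ by positivity
  rw [one_div, inv_pow, ← div_eq_mul_inv, le_div_iff₀ (by positivity), mul_assoc, ← mul_pow,
    mul_comm A]
  simpa using hn

theorem horizontalWeight_pos (m i : ℕ) : 0 < horizontalWeight m i := by
  have h5 : 0 < (m + 5).choose 5 := Nat.choose_pos (by lia)
  have hi : 0 < (m + 2 * i + 7).choose i := Nat.choose_pos (by lia)
  unfold horizontalWeight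
  positivity

theorem horizontalWeight_le (m i : ℕ) : horizontalWeight m i ≤
    ((m + 2 * i + 7 : ℕ) : ℝ) ^ 10 * ((m + 2 * i + 7).choose i / 2 ^ (m + 2 * i + 7)) := by
  have hchoose : ((m + 5).choose 5 : ℝ) ≤ ((m + 2 * i + 7 : ℕ) : ℝ) ^ 5 := by
    exact_mod_cast (Nat.choose_le_pow (m + 5) 5).trans (Nat.pow_le_pow_left (by lia) 5)
  have : (0 : ℝ) ≤ i := i.cast_nonneg
  unfold horizontalWeight
  gcongr
  rw [show ((m + 2 * i + 7 : ℕ) : ℝ) ^ 10 = (m + 2 * i + 7 : ℕ) * (m + 2 * i + 7 : ℕ) ^ 5 *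
    ((m + 2 * i + 7 : ℕ) * (m + 2 * i + 7 : ℕ) * (m + 2 * i + 7 : ℕ) * (m + 2 * i + 7 : ℕ)) by ring]
  gcongr <;> push_cast <;> linarith

theorem horizontalWeight_le_exp (m i : ℕ) :
    horizontalWeight m i ≤ (10).factorial * exp 1 ^ (m + 2 * i + 7) := by
  have hpow := pow_div_factorial_le_exp ((m + 2 * i + 7 : ℕ) : ℝ) (Nat.cast_nonneg _) 10
  rw [div_le_iff₀' (by positivity), ← mul_one ((m + 2 * i + 7 : ℕ) : ℝ), exp_nat_mul] at hpow
  refine (horizontalWeight_le m i).trans (le_trans ?_ hpow)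
  rw [mul_one]
  refine mul_le_of_le_one_right (by positivity) ((div_le_one (by positivity)).2 ?_)
  exact_mod_cast Nat.choose_le_two_pow _ _

/-- The `(m, i)` term of the expansion `pOct_zero_right_eq_tsum` of `pOct t r 0`, with
`ρ = cos r`. -/
noncomputable def horizontalTerm (t ρ : ℝ) (m i : ℕ) : ℝ :=
  16 / π ^ 8 * exp (40 * t) * exp (t * (m + 3) ^ 2) * horizontalWeight m i * ρ ^ (m + 2 * i) *
    chebyshevThetaCoeff t (m + 2 * i + 7)

theorem horizontalTerm_nonneg {t ρ : ℝ} (ht : 0 < t) (hρ : 0 ≤ ρ) (m i : ℕ) :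
    0 ≤ horizontalTerm t ρ m i := by
  have hW := (horizontalWeight_pos m i).le
  have hC := chebyshevThetaCoeff_nonneg ht (m + 2 * i + 7)
  unfold horizontalTerm
  positivity

theorem summable_horizontalWeight_mul_coeff_T {t ρ : ℝ} (ht : 0 < t) (h0 : 0 ≤ ρ) (h1 : ρ ≤ 1)
    (m : ℕ) : Summable fun p : ℕ × ℕ ↦ horizontalWeight m p.2 * ρ ^ (m + 2 * p.2) *
      (2 * (Polynomial.Chebyshev.T ℝ ((m + 2 * p.2 + 7 + 2 * p.1 : ℕ) : ℤ)).coeff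
        (m + 2 * p.2 + 7) * exp (-(t * (m + 2 * p.2 + 7 + 2 * p.1 : ℕ) ^ 2))) := by
  obtain ⟨M, hM⟩ := exists_exp_neg_mul_sq_mul_pow_le ht (show 0 < 3 * exp 1 by positivity)
  have hM0 : 0 ≤ M := by simpa using zero_le_one.trans (by simpa using hM 0)
  refine .of_norm_bounded ((summable_geometric_two.mul_of_nonneg summable_geometric_two
    (fun _ ↦ by positivity) fun _ ↦ by positivity).mul_left ((10).factorial * 2 * M)) ?_
  rintro ⟨l, i⟩
  set n := m + 2 * i + 7 + 2 * l
  have hW : horizontalWeight m i ≤ (10).factorial * exp 1 ^ n :=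
    (horizontalWeight_le_exp m i).trans (by gcongr <;> [exact one_le_exp zero_le_one; lia])
  have hρ : ρ ^ (m + 2 * i) ≤ 1 := pow_le_one₀ h0 h1
  have hT := abs_coeff_T_le n (m + 2 * i + 7)
  rw [Int.natAbs_natCast] at hT
  simp only [norm_mul, norm_pow, Real.norm_eq_abs, abs_exp, abs_two, abs_of_nonneg h0,
    abs_of_pos (horizontalWeight_pos m i)]
  calc _ ≤ (10).factorial * exp 1 ^ n * 1 * (2 * 3 ^ n * exp (-(t * n ^ 2))) := by gcongr
    _ = (10).factorial * 2 * (exp (-(t * n ^ 2)) * (3 * exp 1) ^ n) := by ring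
    _ ≤ (10).factorial * 2 * (M * (1 / 2) ^ (l + i)) := by
      refine mul_le_mul_of_nonneg_left ((hM n).trans ?_) (by positivity)
      exact mul_le_mul_of_nonneg_left
        (pow_le_pow_of_le_one (by norm_num) (by norm_num) (by lia)) hM0
    _ = _ := by ring

theorem alphOct_mul_jacP_eq_sum (t r : ℝ) (m k : ℕ) :
    alphOct k m * hOct m 0 * exp (-(4 * ((k * (k + m + 7) + 2 * m : ℕ) : ℝ)) * t) * cos r ^ m *
      (jacP k (m + 3)).eval (cos (2 * r)) =
    ∑ l ∈ Finset.range (k + 1), 16 / π ^ 8 * exp (40 * t) * exp (t * (m + 3) ^ 2) *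
      (horizontalWeight m (k - l) * cos r ^ (m + 2 * (k - l)) *
        (2 * (Polynomial.Chebyshev.T ℝ ((m + 2 * (k - l) + 7 + 2 * l : ℕ) : ℤ)).coeff
          (m + 2 * (k - l) + 7) * exp (-(t * (m + 2 * (k - l) + 7 + 2 * l : ℕ) ^ 2)))) := by
  rw [jacP_eval_cos_two_mul, hOct_zero, Finset.mul_sum]
  refine Finset.sum_congr rfl fun l hl ↦ ?_
  obtain ⟨i, rfl⟩ : ∃ i, k = i + l := ⟨k - l, by have := Finset.mem_range.1 hl; lia⟩
  have hα := alphOct_mul_choose_mul_choose m i l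
  have hexp : exp (-(4 * (((i + l) * (i + l + m + 7) + 2 * m : ℕ) : ℝ)) * t) =
      exp (40 * t) * exp (t * (m + 3) ^ 2) *
        exp (-(t * (m + 2 * i + 7 + 2 * l : ℕ) ^ 2)) := by
    rw [← exp_add, ← exp_add]
    congr 1
    push_cast
    ring
  rw [Nat.add_sub_cancel] at hα ⊢
  rw [hexp, pow_add (cos r) m, pow_mul]
  linear_combination exp (40 * t) * exp (t * (m + 3) ^ 2) *
    exp (-(t * (m + 2 * i + 7 + 2 * l : ℕ) ^ 2)) * cos r ^ m * (cos r ^ 2) ^ i * hα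

theorem hasSum_horizontalTerm {t r : ℝ} (ht : 0 < t) (hr : 0 ≤ cos r) (m : ℕ) :
    HasSum (horizontalTerm t (cos r) m) (∑' k : ℕ, alphOct k m * hOct m 0 *
      exp (-(4 * ((k * (k + m + 7) + 2 * m : ℕ) : ℝ)) * t) * cos r ^ m *
        (jacP k (m + 3)).eval (cos (2 * r))) := by
  simp only [alphOct_mul_jacP_eq_sum]
  refine hasSum_tsum_sum_range (f := fun l i ↦ 16 / π ^ 8 * exp (40 * t) * exp (t * (m + 3) ^ 2) *
    (horizontalWeight m i * cos r ^ (m + 2 * i) *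
      (2 * (Polynomial.Chebyshev.T ℝ ((m + 2 * i + 7 + 2 * l : ℕ) : ℤ)).coeff
        (m + 2 * i + 7) * exp (-(t * (m + 2 * i + 7 + 2 * l : ℕ) ^ 2)))))
    ((summable_horizontalWeight_mul_coeff_T ht hr (cos_le_one r) m).mul_left _) fun i ↦ ?_
  have hC := hasSum_chebyshevThetaCoeff ht (show m + 2 * i + 7 ≠ 0 by lia)
  exact ((hC.mul_left _).mul_left _).trans_eq
    (congrArg 𝓝 (by rw [horizontalTerm]; ring))

theorem pOct_zero_right_eq_tsum {t r : ℝ} (ht : 0 < t) (hr : 0 ≤ cos r) :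
    pOct t r 0 = ∑' m : ℕ, ∑' i : ℕ, horizontalTerm t (cos r) m i :=
  tsum_congr fun m ↦ (hasSum_horizontalTerm ht hr m).tsum_eq.symm

/-! ### Bounds for the Chebyshev theta series -/

theorem summable_cexp_neg_mul_sq_add {t : ℝ} (ht : 0 < t) (w : ℂ) :
    Summable fun j : ℤ ↦ Complex.exp (-(t * j ^ 2) + w * j) := by
  have hs := (summable_jacobiTheta₂_term_iff (w / (2 * π * Complex.I)) (t / π * Complex.I)).2
    (by simpa [← Complex.ofReal_div] using by positivity)
  refine hs.congr fun j ↦ ?_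
  rw [jacobiTheta₂_term]
  congr 1
  field_simp
  linear_combination (t : ℂ) * j ^ 2 * Complex.I_sq

theorem chebyshevTheta_eq_tsum_cexp {t : ℝ} (ht : 0 < t) {x : ℝ} {w : ℂ}
    (hx : (x : ℂ) = Complex.cosh w) :
    (chebyshevTheta t x : ℂ) = ∑' j : ℤ, Complex.exp (-(t * j ^ 2) + w * j) := by
  have hs := (summable_cexp_neg_mul_sq_add ht w).hasSum
  have hsymm := (hs.add ((Equiv.neg ℤ).hasSum_iff.2 hs)).div_const 2
  rw [add_self_div_two] at hsymm
  rw [← hsymm.tsum_eq, chebyshevTheta, Complex.ofReal_tsum]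
  refine tsum_congr fun j ↦ ?_
  rw [Complex.ofReal_mul, Polynomial.Chebyshev.complex_ofReal_eval_T, hx,
    Polynomial.Chebyshev.T_complex_cosh, Complex.cosh, Function.comp_apply, Equiv.neg_apply,
    Complex.exp_add, Complex.exp_add]
  push_cast
  ring_nf

theorem chebyshevTheta_eq_tsum_cexp_sq {t : ℝ} (ht : 0 < t) {x : ℝ} {w : ℂ}
    (hx : (x : ℂ) = Complex.cosh w) : (chebyshevTheta t x : ℂ) =
      √(π / t) * ∑' n : ℤ, Complex.exp ((w - 2 * π * Complex.I * n) ^ 2 / (4 * t)) := by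
  have hpoisson := Complex.tsum_exp_neg_quadratic (a := ((t / π : ℝ) : ℂ))
    (by rw [Complex.ofReal_re]; positivity) (w / (2 * π))
  rw [chebyshevTheta_eq_tsum_cexp ht hx]
  refine (tsum_congr fun j ↦ ?_).trans (hpoisson.trans ?_)
  · congr 1
    push_cast
    field_simp
  · rw [one_div, ← Complex.cpow_neg, ← Complex.ofReal_ofNat 2, ← Complex.ofReal_one,
      ← Complex.ofReal_div, ← Complex.ofReal_neg, ← Complex.ofReal_cpow (by positivity),
      rpow_neg (by positivity), ← sqrt_eq_rpow, ← sqrt_inv, inv_div]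
    congr 1
    refine tsum_congr fun n ↦ ?_
    congr 1
    push_cast
    field_simp
    linear_combination (-(4 * w ^ 2 + 16 * π ^ 2 * n ^ 2) / t : ℂ) * Complex.I_sq

/-- The constant `∑ₙ exp(-n²)`, which bounds the nonprincipal terms of the Poisson sums. -/
noncomputable def gaussianLatticeSum : ℝ := ∑' n : ℤ, exp (-(n : ℝ) ^ 2)

theorem summable_exp_neg_int_sq : Summable fun n : ℤ ↦ exp (-(n : ℝ) ^ 2) := by
  simpa using summable_exp_neg_mul_sq_mul_pow one_pos one_pos

theorem chebyshevTheta_mono {t x y : ℝ} (ht : 0 < t) (hx : 0 ≤ x) (hxy : x ≤ y) :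
    chebyshevTheta t x ≤ chebyshevTheta t y :=
  hasSum_le (fun k ↦ mul_le_mul_of_nonneg_left (by gcongr) (chebyshevThetaCoeff_nonneg ht k))
    (hasSum_chebyshevThetaCoeff_mul_pow ht x) (hasSum_chebyshevThetaCoeff_mul_pow ht y)

theorem chebyshevTheta_cosh_le {t : ℝ} (ht : 0 < t) (ht1 : t ≤ 1) (u : ℝ) :
    chebyshevTheta t (cosh u) ≤ gaussianLatticeSum * √(π / t) * exp (u ^ 2 / (4 * t)) := by
  have h := congrArg norm (chebyshevTheta_eq_tsum_cexp_sq ht (Complex.ofReal_cosh u))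
  rw [Complex.norm_real, norm_mul, Complex.norm_real, Real.norm_of_nonneg (sqrt_nonneg _)] at h
  refine (le_norm_self _).trans (h.trans_le ?_)
  rw [mul_comm gaussianLatticeSum, mul_assoc √(π / t), gaussianLatticeSum, ← tsum_mul_right]
  refine mul_le_mul_of_nonneg_left ?_ (sqrt_nonneg _)
  refine tsum_of_norm_bounded (summable_exp_neg_int_sq.mul_right _).hasSum fun n ↦ ?_
  have hre : ((u - 2 * π * Complex.I * n) ^ 2 / (4 * t) : ℂ).re =
      (u ^ 2 - 4 * π ^ 2 * n ^ 2) / (4 * t) := by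
    have hsq : ((u - 2 * π * Complex.I * n) ^ 2 / (4 * t) : ℂ) =
        ((u ^ 2 - 4 * π ^ 2 * n ^ 2) / (4 * t) : ℝ) - (u * π * n / t : ℝ) * Complex.I := by
      push_cast
      linear_combination (4 * π ^ 2 * n ^ 2 / (4 * t) : ℂ) * Complex.I_sq
    rw [hsq, Complex.sub_re, Complex.ofReal_re, Complex.re_ofReal_mul, Complex.I_re, mul_zero,
      sub_zero]
  have hn : t * (n : ℝ) ^ 2 ≤ π ^ 2 * n ^ 2 := by
    gcongr
    nlinarith [pi_gt_three]
  rw [Complex.norm_exp, hre, ← exp_add]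
  gcongr
  rw [div_le_iff₀ (by positivity), add_mul, div_mul_cancel₀ _ (by positivity)]
  linarith

theorem exp_neg_sub_sq_div_le {t δ : ℝ} (ht : 0 < t) (ht1 : t ≤ 1) (h0 : 0 ≤ δ) (h1 : δ ≤ π / 2)
    (n : ℤ) :
    exp (-(δ - 2 * π * n) ^ 2 / (4 * t)) ≤ exp (-(n : ℝ) ^ 2) * exp (-δ ^ 2 / (4 * t)) := by
  have hn : |(n : ℝ)| ≤ (n : ℝ) ^ 2 := by
    exact_mod_cast Int.natAbs_le_self_sq n
  have hδ : δ * n ≤ π / 2 * (n : ℝ) ^ 2 :=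
    (mul_le_mul_of_nonneg_left (le_abs_self _) h0).trans (by gcongr)
  have htn : t * (n : ℝ) ^ 2 ≤ 1 * n ^ 2 := by gcongr
  have hπ : 4 * (n : ℝ) ^ 2 ≤ 2 * π ^ 2 * n ^ 2 := by
    gcongr
    nlinarith [pi_gt_three]
  rw [← exp_add]
  gcongr
  rw [div_le_iff₀ (by positivity), add_mul, div_mul_cancel₀ _ (by positivity)]
  nlinarith [mul_le_mul_of_nonneg_left hδ pi_pos.le]

theorem hasSum_chebyshevTheta_cos {t δ : ℝ} (ht : 0 < t) (ht1 : t ≤ 1) (h0 : 0 ≤ δ)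
    (h1 : δ ≤ π / 2) : HasSum (fun n : ℤ ↦ √(π / t) * exp (-(δ - 2 * π * n) ^ 2 / (4 * t)))
      (chebyshevTheta t (cos δ)) := by
  have hs : Summable fun n : ℤ ↦ exp (-(δ - 2 * π * n) ^ 2 / (4 * t)) :=
    (summable_exp_neg_int_sq.mul_right _).of_nonneg_of_le (fun _ ↦ (exp_pos _).le)
      (exp_neg_sub_sq_div_le ht ht1 h0 h1)
  have h := chebyshevTheta_eq_tsum_cexp_sq ht (x := cos δ) (w := δ * Complex.I)
    (by rw [Complex.cosh_mul_I, Complex.ofReal_cos])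
  have hterm (n : ℤ) : (δ * Complex.I - 2 * π * Complex.I * n) ^ 2 / (4 * t) =
      ((-(δ - 2 * π * n) ^ 2 / (4 * t) : ℝ) : ℂ) := by
    push_cast
    linear_combination (δ - 2 * π * n : ℂ) ^ 2 / (4 * t) * Complex.I_sq
  simp only [hterm, ← Complex.ofReal_exp] at h
  exact (hs.hasSum.mul_left _).trans_eq (congrArg 𝓝 (by exact_mod_cast h.symm))

theorem le_chebyshevTheta_cos {t δ : ℝ} (ht : 0 < t) (ht1 : t ≤ 1) (h0 : 0 ≤ δ)
    (h1 : δ ≤ π / 2) : √(π / t) * exp (-δ ^ 2 / (4 * t)) ≤ chebyshevTheta t (cos δ) := by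
  simpa using le_hasSum (hasSum_chebyshevTheta_cos ht ht1 h0 h1) 0 fun n _ ↦ by positivity

theorem chebyshevTheta_cos_le {t δ : ℝ} (ht : 0 < t) (ht1 : t ≤ 1) (h0 : 0 ≤ δ)
    (h1 : δ ≤ π / 2) :
    chebyshevTheta t (cos δ) ≤ gaussianLatticeSum * √(π / t) * exp (-δ ^ 2 / (4 * t)) := by
  refine hasSum_le (fun n ↦ mul_le_mul_of_nonneg_left (exp_neg_sub_sq_div_le ht ht1 h0 h1 n)
    (sqrt_nonneg _)) (hasSum_chebyshevTheta_cos ht ht1 h0 h1) ?_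
  exact ((summable_exp_neg_int_sq.hasSum.mul_right _).mul_left _).trans_eq
    (congrArg 𝓝 (by rw [gaussianLatticeSum]; ring))

theorem sinh_le_self_mul_cosh {y : ℝ} (hy : 0 ≤ y) : sinh y ≤ y * cosh y := by
  have h := (convex_Icc 0 y).image_sub_le_mul_sub_of_deriv_le (f := sinh) (C := cosh y)
    (by fun_prop) (by fun_prop) (fun x hx ↦ ?_) 0 (Set.left_mem_Icc.2 hy) y
    (Set.right_mem_Icc.2 hy) hy
  · simpa [mul_comm] using h
  · rw [interior_Icc] at hx
    rw [Real.deriv_sinh, cosh_le_cosh, abs_of_pos hx.1, abs_of_nonneg hy]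
    exact hx.2.le

theorem self_mul_cos_le_sin {x : ℝ} (h0 : 0 ≤ x) (h1 : x < π / 2) : x * cos x ≤ sin x := by
  have hc : 0 < cos x := cos_pos_of_mem_Ioo ⟨by linarith [pi_pos], h1⟩
  simpa [tan_eq_sin_div_cos, le_div_iff₀ hc] using le_tan h0 h1

theorem hasDerivAt_sqrt_sq_add_sq (d : ℝ) {z : ℝ} (hz : 0 < z) :
    HasDerivAt (fun z ↦ √(d ^ 2 + z ^ 2)) (z / √(d ^ 2 + z ^ 2)) z := by
  refine (((hasDerivAt_pow 2 z).const_add (d ^ 2)).sqrt (by positivity)).congr_deriv ?_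
  field_simp
  norm_num

theorem cos_mul_cosh_le_cos {r y : ℝ} (hy : 0 ≤ y) (hyr : y ≤ r) (hr : r < π / 2) :
    cos r * cosh y ≤ cos √(r ^ 2 - y ^ 2) := by
  set d := √(r ^ 2 - y ^ 2)
  have hd : d ^ 2 = r ^ 2 - y ^ 2 := sq_sqrt (by nlinarith)
  have hderiv : ∀ z ∈ Set.Ioo 0 y, HasDerivAt (fun z ↦ cos √(d ^ 2 + z ^ 2) * cosh z)
      (-sin √(d ^ 2 + z ^ 2) * (z / √(d ^ 2 + z ^ 2)) * cosh z +
        cos √(d ^ 2 + z ^ 2) * sinh z) z :=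
    fun z hz ↦ (hasDerivAt_sqrt_sq_add_sq d hz.1).cos.mul (hasDerivAt_cosh z)
  have hanti : AntitoneOn (fun z ↦ cos √(d ^ 2 + z ^ 2) * cosh z) (Set.Icc 0 y) := by
    refine antitoneOn_of_hasDerivWithinAt_nonpos (convex_Icc 0 y) (by fun_prop)
      (fun z hz ↦ (hderiv z (by simpa only [interior_Icc] using hz)).hasDerivWithinAt) fun z hz ↦ ?_
    rw [interior_Icc] at hz
    have hz0 := hz.1
    have hR : 0 < √(d ^ 2 + z ^ 2) := by positivity
    have hRr : √(d ^ 2 + z ^ 2) ≤ r := sqrt_le_iff.2 ⟨by linarith, by nlinarith [hz.2]⟩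
    set R := √(d ^ 2 + z ^ 2)
    have hcos : cos R ≤ sin R / R := by
      rw [le_div_iff₀' hR]
      exact self_mul_cos_le_sin hR.le (by linarith)
    have hcos0 : 0 ≤ cos R := cos_nonneg_of_mem_Icc ⟨by linarith, by linarith⟩
    calc -sin R * (z / R) * cosh z + cos R * sinh z
        ≤ -sin R * (z / R) * cosh z + sin R / R * (z * cosh z) := by
          gcongr
          · exact hcos0.trans hcos
          · exact sinh_le_self_mul_cosh hz0.le
      _ = 0 := by ring
  have h := hanti (Set.left_mem_Icc.2 hy) (Set.right_mem_Icc.2 hy) hy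
  simpa [hd, sqrt_sq (hy.trans hyr), sqrt_sq (sqrt_nonneg (r ^ 2 - y ^ 2))] using h

theorem cos_mul_cosh_le_cosh {r y : ℝ} (h0 : 0 ≤ r) (hr : r < π / 2) (hry : r ≤ y) :
    cos r * cosh y ≤ cosh √(y ^ 2 - r ^ 2) := by
  set d := √(y ^ 2 - r ^ 2)
  have hd : d ^ 2 = y ^ 2 - r ^ 2 := sq_sqrt (by nlinarith)
  have hderiv : ∀ z ∈ Set.Ioo 0 r, HasDerivAt (fun z ↦ cos z * cosh √(d ^ 2 + z ^ 2))
      (-sin z * cosh √(d ^ 2 + z ^ 2) +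
        cos z * (sinh √(d ^ 2 + z ^ 2) * (z / √(d ^ 2 + z ^ 2)))) z :=
    fun z hz ↦ (hasDerivAt_cos z).mul (hasDerivAt_sqrt_sq_add_sq d hz.1).cosh
  have hanti : AntitoneOn (fun z ↦ cos z * cosh √(d ^ 2 + z ^ 2)) (Set.Icc 0 r) := by
    refine antitoneOn_of_hasDerivWithinAt_nonpos (convex_Icc 0 r) (by fun_prop)
      (fun z hz ↦ (hderiv z (by simpa only [interior_Icc] using hz)).hasDerivWithinAt) fun z hz ↦ ?_
    rw [interior_Icc] at hz
    have hz0 := hz.1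
    have hR : 0 < √(d ^ 2 + z ^ 2) := by positivity
    set R := √(d ^ 2 + z ^ 2)
    have hsinh : sinh R / R ≤ cosh R := by
      rw [div_le_iff₀' hR]
      exact sinh_le_self_mul_cosh hR.le
    have hcos0 : 0 ≤ cos z := cos_nonneg_of_mem_Icc ⟨by linarith, by linarith [hz.2]⟩
    calc -sin z * cosh R + cos z * (sinh R * (z / R))
        = -sin z * cosh R + z * cos z * (sinh R / R) := by ring
      _ ≤ -sin z * cosh R + sin z * cosh R := by
          gcongr
          · exact (mul_nonneg hz0.le hcos0).trans
              (self_mul_cos_le_sin hz0.le (by linarith [hz.2]))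
          · exact self_mul_cos_le_sin hz0.le (by linarith [hz.2])
      _ = 0 := by ring
  have h := hanti (Set.left_mem_Icc.2 h0) (Set.right_mem_Icc.2 h0) h0
  simpa [hd, sqrt_sq (h0.trans hry), sqrt_sq (sqrt_nonneg (y ^ 2 - r ^ 2))] using h

theorem chebyshevTheta_cos_mul_cosh_le {t r y : ℝ} (ht : 0 < t) (ht1 : t ≤ 1) (h0 : 0 ≤ r)
    (hr : r < π / 2) (hy : 0 ≤ y) : chebyshevTheta t (cos r * cosh y) ≤
      gaussianLatticeSum * √(π / t) * exp ((y ^ 2 - r ^ 2) / (4 * t)) := by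
  have hcos : 0 ≤ cos r := cos_nonneg_of_mem_Icc ⟨by linarith, hr.le⟩
  have hx : 0 ≤ cos r * cosh y := mul_nonneg hcos (cosh_pos y).le
  rcases le_total y r with hyr | hry
  · have hd : √(r ^ 2 - y ^ 2) ≤ π / 2 := sqrt_le_iff.2 ⟨by linarith, by nlinarith⟩
    calc chebyshevTheta t (cos r * cosh y)
        ≤ chebyshevTheta t (cos √(r ^ 2 - y ^ 2)) :=
          chebyshevTheta_mono ht hx (cos_mul_cosh_le_cos hy hyr hr)
      _ ≤ _ := chebyshevTheta_cos_le ht ht1 (sqrt_nonneg _) hd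
      _ = _ := by rw [sq_sqrt (by nlinarith), neg_sub]
  · calc chebyshevTheta t (cos r * cosh y)
        ≤ chebyshevTheta t (cosh √(y ^ 2 - r ^ 2)) :=
          chebyshevTheta_mono ht hx (cos_mul_cosh_le_cosh h0 hr hry)
      _ ≤ _ := chebyshevTheta_cosh_le ht ht1 _
      _ = _ := by rw [sq_sqrt (by nlinarith)]

/-! ### Short-time asymptotics on the horizontal axis -/

theorem choose_div_two_pow_le (p i : ℕ) (a : ℝ) :
    ((p + 2 * i).choose i : ℝ) / 2 ^ (p + 2 * i) ≤ cosh a ^ (p + 2 * i) * exp (-(a * p)) := by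
  have hterm : exp (-a) ^ i * exp a ^ (p + 2 * i - i) * (p + 2 * i).choose i ≤
      (exp (-a) + exp a) ^ (p + 2 * i) := by
    rw [add_pow]
    exact Finset.single_le_sum (f := fun j ↦
      exp (-a) ^ j * exp a ^ (p + 2 * i - j) * ((p + 2 * i).choose j : ℝ))
      (fun _ _ ↦ by positivity) (Finset.mem_range.2 (by lia))
  have hexp : exp (-a) ^ i * exp a ^ (p + 2 * i - i) = exp (a * p) := by
    rw [show p + 2 * i - i = p + i by lia, ← exp_nat_mul, ← exp_nat_mul, ← exp_add]
    push_cast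
    ring_nf
  rw [cosh_eq, div_pow, exp_neg (a * p), ← div_eq_mul_inv, div_div, mul_comm (2 ^ _), ← div_div]
  gcongr
  rw [le_div_iff₀ (exp_pos _), mul_comm, ← hexp, add_comm (exp a)]
  exact hterm

theorem exists_natCast_pow_mul_pow_le (k : ℕ) {σ : ℝ} (h0 : 0 ≤ σ) (h1 : σ < 1) :
    ∃ D, ∀ n : ℕ, (n : ℝ) ^ k * σ ^ n ≤ D := by
  obtain ⟨D, hD⟩ := (tendsto_pow_const_mul_const_pow_of_abs_lt_one k
    (by rwa [abs_of_nonneg h0])).bddAbove_range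
  exact ⟨D, fun n ↦ hD ⟨n, rfl⟩⟩

theorem injective_add_two_mul_add (m n : ℕ) : Function.Injective fun i ↦ m + 2 * i + n :=
  fun i j hij ↦ by
    simp only at hij
    lia

theorem horizontalTerm_le {t ρ ρ' σ D : ℝ} (ht : 0 < t) (ht1 : t ≤ 1) (hρ' : 0 ≤ ρ')
    (hσ : 0 ≤ σ) (hσ1 : σ ≤ 1) (hρ : 0 < ρ) (hρσ : ρ = ρ' * σ ^ 2)
    (hD : ∀ n : ℕ, (n : ℝ) ^ 10 * σ ^ n ≤ D) (m i : ℕ) :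
    horizontalTerm t ρ m i ≤ 16 / π ^ 8 * exp 40 * (D / ρ ^ 7) * σ ^ m * exp (-(t * (m + 3) ^ 2)) *
      (chebyshevThetaCoeff t (m + 2 * i + 7) *
        (ρ' * cosh (2 * t * (m + 3))) ^ (m + 2 * i + 7)) := by
  set N := m + 2 * i + 7 with hN
  set a := 2 * t * (m + 3) with ha
  have hC := chebyshevThetaCoeff_nonneg ht N
  have hD0 : 0 ≤ D := by simpa using hD 0
  have hW : horizontalWeight m i ≤ (N : ℝ) ^ 10 * (cosh a ^ N * exp (-(a * (m + 7 : ℕ)))) := by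
    refine (horizontalWeight_le m i).trans (mul_le_mul_of_nonneg_left ?_ (by positivity))
    simpa only [show m + 7 + 2 * i = N by lia] using choose_div_two_pow_le (m + 7) i a
  have hpow : (N : ℝ) ^ 10 * ρ ^ (m + 2 * i) ≤ D / ρ ^ 7 * σ ^ m * ρ' ^ N := by
    calc (N : ℝ) ^ 10 * ρ ^ (m + 2 * i) = N ^ 10 * σ ^ N * σ ^ N * ρ' ^ N / ρ ^ 7 := by
          rw [eq_div_iff (by positivity), mul_assoc, ← pow_add, ← hN, hρσ]
          ring
      _ ≤ D * σ ^ m * ρ' ^ N / ρ ^ 7 := by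
          gcongr ?_ * ?_ * _ / _
          · exact hD N
          · exact pow_le_pow_of_le_one hσ hσ1 (by lia)
      _ = _ := by ring
  have hexp : exp (t * (m + 3) ^ 2) * exp (-(a * (m + 7 : ℕ))) ≤ exp (-(t * (m + 3) ^ 2)) := by
    rw [← exp_add, exp_le_exp, ha]
    push_cast
    nlinarith [mul_nonneg ht.le (m.cast_nonneg (α := ℝ))]
  calc horizontalTerm t ρ m i
      ≤ 16 / π ^ 8 * exp (40 * t) * exp (t * (m + 3) ^ 2) *
          (N ^ 10 * (cosh a ^ N * exp (-(a * (m + 7 : ℕ))))) * ρ ^ (m + 2 * i) *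
          chebyshevThetaCoeff t N := by
        unfold horizontalTerm
        gcongr
    _ = 16 / π ^ 8 * exp (40 * t) * (N ^ 10 * ρ ^ (m + 2 * i)) *
          (exp (t * (m + 3) ^ 2) * exp (-(a * (m + 7 : ℕ)))) *
          (chebyshevThetaCoeff t N * cosh a ^ N) := by ring
    _ ≤ 16 / π ^ 8 * exp 40 * (D / ρ ^ 7 * σ ^ m * ρ' ^ N) * exp (-(t * (m + 3) ^ 2)) *
          (chebyshevThetaCoeff t N * cosh a ^ N) := by
        have := cosh_pos a
        gcongr
        linarith
    _ = _ := by ring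

theorem tsum_comp_le_chebyshevTheta {t x : ℝ} (ht : 0 < t) (hx : 0 ≤ x) {φ : ℕ → ℕ}
    (hφ : φ.Injective) : ∑' i, chebyshevThetaCoeff t (φ i) * x ^ φ i ≤ chebyshevTheta t x := by
  have htheta := hasSum_chebyshevThetaCoeff_mul_pow ht x
  rw [← htheta.tsum_eq]
  exact tsum_comp_le_tsum_of_inj htheta.summable
    (fun k ↦ mul_nonneg (chebyshevThetaCoeff_nonneg ht k) (pow_nonneg hx k)) hφ

theorem tsum_horizontalTerm_le {t r r' σ D : ℝ} (ht : 0 < t) (ht1 : t ≤ 1) (h0 : 0 ≤ r')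
    (h1 : r' < π / 2) (hσ : 0 ≤ σ) (hσ1 : σ ≤ 1) (hr : 0 < cos r)
    (hrσ : cos r = cos r' * σ ^ 2) (hD : ∀ n : ℕ, (n : ℝ) ^ 10 * σ ^ n ≤ D) (m : ℕ) :
    ∑' i, horizontalTerm t (cos r) m i ≤ 16 / π ^ 8 * exp 40 * (D / cos r ^ 7) *
      gaussianLatticeSum * √(π / t) * exp (-r' ^ 2 / (4 * t)) * σ ^ m := by
  have hD0 : 0 ≤ D := by simpa using hD 0
  have hcos : 0 ≤ cos r' := cos_nonneg_of_mem_Icc ⟨by linarith, h1.le⟩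
  set a := 2 * t * (m + 3 : ℝ) with ha
  have hx : 0 ≤ cos r' * cosh a := mul_nonneg hcos (cosh_pos a).le
  have hsub : Summable fun i ↦ chebyshevThetaCoeff t (m + 2 * i + 7) *
      (cos r' * cosh a) ^ (m + 2 * i + 7) :=
    (hasSum_chebyshevThetaCoeff_mul_pow ht _).summable.comp_injective
      (injective_add_two_mul_add m 7)
  have hexp : exp (-(t * (m + 3) ^ 2)) * exp ((a ^ 2 - r' ^ 2) / (4 * t)) =
      exp (-r' ^ 2 / (4 * t)) := by
    rw [← exp_add, ha]
    congr 1
    field_simp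
    ring
  calc ∑' i, horizontalTerm t (cos r) m i
      ≤ 16 / π ^ 8 * exp 40 * (D / cos r ^ 7) * σ ^ m * exp (-(t * (m + 3) ^ 2)) *
          ∑' i, chebyshevThetaCoeff t (m + 2 * i + 7) *
            (cos r' * cosh a) ^ (m + 2 * i + 7) := by
        rw [← tsum_mul_left]
        exact (hasSum_horizontalTerm ht hr.le m).summable.tsum_le_tsum
          (fun i ↦ horizontalTerm_le ht ht1 hcos hσ hσ1 hr hrσ hD m i) (hsub.mul_left _)
    _ ≤ 16 / π ^ 8 * exp 40 * (D / cos r ^ 7) * σ ^ m * exp (-(t * (m + 3) ^ 2)) *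
          (gaussianLatticeSum * √(π / t) * exp ((a ^ 2 - r' ^ 2) / (4 * t))) := by
        gcongr
        exact (tsum_comp_le_chebyshevTheta ht hx (injective_add_two_mul_add m 7)).trans
          (chebyshevTheta_cos_mul_cosh_le ht ht1 h0 h1 (by positivity))
    _ = _ := by
        rw [← hexp]
        ring

theorem exists_tsum_horizontalTerm_le {r r' : ℝ} (h0 : 0 ≤ r') (hr'r : r' < r) (hr : r < π / 2) :
    ∃ C σ : ℝ, 0 ≤ σ ∧ σ < 1 ∧ ∀ t, 0 < t → t ≤ 1 → ∀ m, ∑' i, horizontalTerm t (cos r) m i ≤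
      C * √(π / t) * exp (-r' ^ 2 / (4 * t)) * σ ^ m := by
  have hcos : 0 < cos r := cos_pos_of_mem_Ioo ⟨by linarith, hr⟩
  have hlt : cos r < cos r' := cos_lt_cos_of_nonneg_of_le_pi_div_two h0 hr.le hr'r
  have hσ1 : √(cos r / cos r') < 1 :=
    (sqrt_lt' one_pos).2 (by rwa [one_pow, div_lt_one (hcos.trans hlt)])
  have hrσ : cos r = cos r' * √(cos r / cos r') ^ 2 := by
    rw [sq_sqrt (div_nonneg hcos.le (hcos.trans hlt).le), mul_div_cancel₀ _ (hcos.trans hlt).ne']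
  obtain ⟨D, hD⟩ := exists_natCast_pow_mul_pow_le 10 (sqrt_nonneg _) hσ1
  exact ⟨_, _, sqrt_nonneg _, hσ1, fun t ht ht1 m ↦
    tsum_horizontalTerm_le ht ht1 h0 (hr'r.trans hr) (sqrt_nonneg _) hσ1.le hcos hrσ hD m⟩

theorem summable_tsum_horizontalTerm {t r : ℝ} (ht : 0 < t) (ht1 : t ≤ 1) (h0 : 0 < r)
    (hr : r < π / 2) : Summable fun m ↦ ∑' i, horizontalTerm t (cos r) m i := by
  obtain ⟨C, σ, hσ, hσ1, hC⟩ := exists_tsum_horizontalTerm_le le_rfl h0 hr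
  have hcos : 0 ≤ cos r := cos_nonneg_of_mem_Icc ⟨by linarith, hr.le⟩
  exact .of_nonneg_of_le (fun m ↦ tsum_nonneg (horizontalTerm_nonneg ht hcos m)) (hC t ht ht1)
    ((summable_geometric_of_lt_one hσ hσ1).mul_left _)

theorem exists_pOct_zero_right_le {r r' : ℝ} (h0 : 0 ≤ r') (hr'r : r' < r) (hr : r < π / 2) :
    ∃ C, ∀ t, 0 < t → t ≤ 1 → pOct t r 0 ≤ C * √(π / t) * exp (-r' ^ 2 / (4 * t)) := by
  obtain ⟨C, σ, hσ, hσ1, hC⟩ := exists_tsum_horizontalTerm_le h0 hr'r hr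
  refine ⟨C * (1 - σ)⁻¹, fun t ht ht1 ↦ ?_⟩
  have hcos : 0 ≤ cos r := cos_nonneg_of_mem_Icc ⟨by linarith, hr.le⟩
  have hgeom := (hasSum_geometric_of_lt_one hσ hσ1).mul_left (C * √(π / t) *
    exp (-r' ^ 2 / (4 * t)))
  calc pOct t r 0 ≤ C * √(π / t) * exp (-r' ^ 2 / (4 * t)) * (1 - σ)⁻¹ := by
        rw [pOct_zero_right_eq_tsum ht hcos]
        exact hasSum_le (hC t ht ht1)
          (summable_tsum_horizontalTerm ht ht1 (h0.trans_lt hr'r) hr).hasSum hgeom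
    _ = _ := by ring

theorem two_pow_le_succ_mul_choose_div_two (n : ℕ) : 2 ^ n ≤ (n + 1) * n.choose (n / 2) := by
  rw [← Nat.sum_range_choose]
  simpa using Finset.sum_le_card_nsmul (Finset.range (n + 1)) _ _ fun i _ ↦
    Nat.choose_le_middle i n

theorem one_le_mul_horizontalWeight {m : ℕ} (hm : m ≤ 1) (i : ℕ) :
    1 ≤ 128 * (m + 2 * i + 1 : ℕ) * horizontalWeight m i := by
  have hchoose : (2 : ℝ) ^ (m + 2 * i) ≤
      (m + 2 * i + 1 : ℕ) * ((m + 2 * i + 7).choose i : ℝ) := by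
    have h := two_pow_le_succ_mul_choose_div_two (m + 2 * i)
    rw [show (m + 2 * i) / 2 = i by lia] at h
    exact_mod_cast h.trans (Nat.mul_le_mul_left _ (Nat.choose_le_choose i (by lia)))
  have h5 : (1 : ℝ) ≤ (m + 5).choose 5 := by exact_mod_cast Nat.choose_pos (by lia)
  have hfactor : (1 : ℝ) ≤ (m + 3) * (m + 5).choose 5 *
      ((m + i + 4) * (m + i + 5) * (m + i + 6) * (m + i + 7)) := by
    have : (0 : ℝ) ≤ m := m.cast_nonneg
    have : (0 : ℝ) ≤ i := i.cast_nonneg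
    refine one_le_mul_of_one_le_of_one_le (one_le_mul_of_one_le_of_one_le (by linarith) h5) ?_
    refine one_le_mul_of_one_le_of_one_le (one_le_mul_of_one_le_of_one_le
      (one_le_mul_of_one_le_of_one_le ?_ ?_) ?_) ?_ <;> linarith
  calc (1 : ℝ) ≤ (m + 2 * i + 1 : ℕ) * ((m + 2 * i + 7).choose i : ℝ) / 2 ^ (m + 2 * i) :=
        (one_le_div (by positivity)).2 hchoose
    _ = 128 * (m + 2 * i + 1 : ℕ) * (1 * ((m + 2 * i + 7).choose i / 2 ^ (m + 2 * i + 7))) := by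
        rw [pow_add _ _ 7]
        ring
    _ ≤ _ := by
        unfold horizontalWeight
        gcongr

theorem chebyshevThetaCoeff_mul_pow_le_horizontalTerm {t ρ ρ₁ D : ℝ} (ht : 0 < t) (hρ : 0 < ρ)
    (hρ1 : ρ ≤ 1) (hρ₁ : 0 ≤ ρ₁) (hD : ∀ n : ℕ, (n : ℝ) ^ 1 * (ρ₁ / ρ) ^ n ≤ D) {m : ℕ}
    (hm : m ≤ 1) (i : ℕ) : chebyshevThetaCoeff t (m + 2 * i + 7) * ρ₁ ^ (m + 2 * i + 7) ≤
      8 * π ^ 8 * D * horizontalTerm t ρ m i := by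
  set N := m + 2 * i + 7 with hN
  have hC := chebyshevThetaCoeff_nonneg ht N
  have hD0 : 0 ≤ D := by simpa using hD 0
  have hW := (horizontalWeight_pos m i).le
  have hpow : (m + 2 * i + 1 : ℕ) * ρ₁ ^ N ≤ D * ρ ^ (m + 2 * i) := by
    calc ((m + 2 * i + 1 : ℕ) : ℝ) * ρ₁ ^ N ≤ N * ρ₁ ^ N := by
          gcongr
          lia
      _ = (N : ℝ) ^ 1 * (ρ₁ / ρ) ^ N * ρ ^ N := by
          rw [pow_one, mul_assoc, ← mul_pow, div_mul_cancel₀ _ hρ.ne']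
      _ ≤ D * ρ ^ (m + 2 * i) :=
          mul_le_mul (hD N) (pow_le_pow_of_le_one hρ.le hρ1 (by lia)) (by positivity) hD0
  have hexp : 1 ≤ exp (40 * t) * exp (t * (m + 3) ^ 2) :=
    one_le_mul_of_one_le_of_one_le (one_le_exp (by positivity)) (one_le_exp (by positivity))
  calc chebyshevThetaCoeff t N * ρ₁ ^ N
      ≤ chebyshevThetaCoeff t N * ρ₁ ^ N *
          (128 * (m + 2 * i + 1 : ℕ) * horizontalWeight m i) :=
        le_mul_of_one_le_right (by positivity) (one_le_mul_horizontalWeight hm i)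
    _ = 128 * chebyshevThetaCoeff t N * horizontalWeight m i * 1 *
          ((m + 2 * i + 1 : ℕ) * ρ₁ ^ N) := by ring
    _ ≤ 128 * chebyshevThetaCoeff t N * horizontalWeight m i *
          (exp (40 * t) * exp (t * (m + 3) ^ 2)) * (D * ρ ^ (m + 2 * i)) := by gcongr
    _ = _ := by
        rw [horizontalTerm, ← hN]
        field_simp
        ring

theorem tsum_chebyshevThetaCoeff_mul_pow_le_tsum_horizontalTerm {t r ρ₁ D : ℝ} (ht : 0 < t)
    (hr : 0 < cos r) (hρ₁ : 0 ≤ ρ₁) (hD : ∀ n : ℕ, (n : ℝ) ^ 1 * (ρ₁ / cos r) ^ n ≤ D)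
    {m : ℕ} (hm : m ≤ 1) :
    ∑' i, chebyshevThetaCoeff t (m + 2 * i + 7) * ρ₁ ^ (m + 2 * i + 7) ≤
      8 * π ^ 8 * D * ∑' i, horizontalTerm t (cos r) m i := by
  have hs : Summable fun i ↦ chebyshevThetaCoeff t (m + 2 * i + 7) * ρ₁ ^ (m + 2 * i + 7) :=
    (hasSum_chebyshevThetaCoeff_mul_pow ht ρ₁).summable.comp_injective
      (injective_add_two_mul_add m 7)
  rw [← tsum_mul_left]
  exact hs.tsum_le_tsum
    (chebyshevThetaCoeff_mul_pow_le_horizontalTerm ht hr (cos_le_one r) hρ₁ hD hm)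
    ((hasSum_horizontalTerm ht hr.le m).summable.mul_left _)

theorem sum_range_le_div_pow_mul_chebyshevTheta {t ρ₁ ρ₂ : ℝ} (ht : 0 < t) (hρ₂ : 0 < ρ₂)
    (hρ : ρ₂ ≤ ρ₁) (n : ℕ) : ∑ k ∈ Finset.range n, chebyshevThetaCoeff t k * ρ₁ ^ k ≤
      (ρ₁ / ρ₂) ^ n * chebyshevTheta t ρ₂ := by
  have hone : 1 ≤ ρ₁ / ρ₂ := (one_le_div hρ₂).2 hρ
  have htheta := hasSum_chebyshevThetaCoeff_mul_pow ht ρ₂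
  calc ∑ k ∈ Finset.range n, chebyshevThetaCoeff t k * ρ₁ ^ k
      = ∑ k ∈ Finset.range n, (ρ₁ / ρ₂) ^ k * (chebyshevThetaCoeff t k * ρ₂ ^ k) :=
        Finset.sum_congr rfl fun k _ ↦ by rw [div_pow]; field_simp
    _ ≤ ∑ k ∈ Finset.range n, (ρ₁ / ρ₂) ^ n * (chebyshevThetaCoeff t k * ρ₂ ^ k) := by
        gcongr with k hk
        · exact mul_nonneg (chebyshevThetaCoeff_nonneg ht k) (by positivity)
        · exact (Finset.mem_range.1 hk).le
    _ ≤ (ρ₁ / ρ₂) ^ n * chebyshevTheta t ρ₂ := by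
        rw [← Finset.mul_sum]
        gcongr
        exact sum_le_hasSum _
          (fun k _ ↦ mul_nonneg (chebyshevThetaCoeff_nonneg ht k) (by positivity)) htheta

theorem tsum_horizontalTerm_add_le_pOct {t r : ℝ} (ht : 0 < t) (ht1 : t ≤ 1) (h0 : 0 < r)
    (hr : r < π / 2) : (∑' i, horizontalTerm t (cos r) 0 i) + ∑' i, horizontalTerm t (cos r) 1 i ≤
      pOct t r 0 := by
  have hcos : 0 ≤ cos r := cos_nonneg_of_mem_Icc ⟨by linarith, hr.le⟩
  rw [pOct_zero_right_eq_tsum ht hcos, ← Finset.sum_range_one fun m ↦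
    ∑' i, horizontalTerm t (cos r) m i, ← Finset.sum_range_succ]
  exact (summable_tsum_horizontalTerm ht ht1 h0 hr).sum_le_tsum _
    fun m _ ↦ tsum_nonneg (horizontalTerm_nonneg ht hcos m)

theorem exists_chebyshevTheta_cos_le_pOct {r r₁ r₂ : ℝ} (h0 : 0 < r) (h1 : r < r₁) (h2 : r₁ < r₂)
    (hr₂ : r₂ < π / 2) : ∃ A B : ℝ, 0 ≤ B ∧ ∀ t, 0 < t → t ≤ 1 →
      chebyshevTheta t (cos r₁) ≤ B * chebyshevTheta t (cos r₂) + A * pOct t r 0 := by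
  have hcos₂ : 0 < cos r₂ := cos_pos_of_mem_Ioo ⟨by linarith, hr₂⟩
  have hlt₂ : cos r₂ < cos r₁ := cos_lt_cos_of_nonneg_of_le_pi_div_two (by linarith) hr₂.le h2
  have hlt₁ : cos r₁ < cos r := cos_lt_cos_of_nonneg_of_le_pi_div_two h0.le (by linarith) h1
  have hcos₁ : 0 < cos r₁ := hcos₂.trans hlt₂
  have hcos : 0 < cos r := hcos₁.trans hlt₁
  obtain ⟨D, hD⟩ := exists_natCast_pow_mul_pow_le 1 (div_pos hcos₁ hcos).le
    ((div_lt_one hcos).2 hlt₁)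
  refine ⟨8 * π ^ 8 * D, (cos r₁ / cos r₂) ^ 7, by positivity, fun t ht ht1 ↦ ?_⟩
  have hD0 : 0 ≤ D := by simpa using hD 0
  set f := fun k ↦ chebyshevThetaCoeff t k * cos r₁ ^ k
  have htheta : HasSum f (chebyshevTheta t (cos r₁)) := hasSum_chebyshevThetaCoeff_mul_pow ht _
  have hrow (m : ℕ) (hm : m ≤ 1) := tsum_chebyshevThetaCoeff_mul_pow_le_tsum_horizontalTerm
    ht hcos hcos₁.le hD hm
  have hs (m : ℕ) : Summable fun i ↦ f (m + 2 * i + 7) :=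
    htheta.summable.comp_injective (injective_add_two_mul_add m 7)
  have hle₀ := hrow 0 zero_le_one
  have hle₁ := hrow 1 le_rfl
  have htail : ∑' i, f (i + 7) = ∑' i, f (0 + 2 * i + 7) + ∑' i, f (1 + 2 * i + 7) := by
    have hs₀ := hs 0
    have hs₁ := hs 1
    simp only [zero_add, add_comm 1] at hs₀ hs₁ ⊢
    exact (hs₀.hasSum.even_add_odd (f := fun i ↦ f (i + 7)) hs₁.hasSum).tsum_eq
  calc chebyshevTheta t (cos r₁) = ∑ k ∈ Finset.range 7, f k + ∑' i, f (i + 7) := by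
        rw [htheta.summable.sum_add_tsum_nat_add, htheta.tsum_eq]
    _ ≤ (cos r₁ / cos r₂) ^ 7 * chebyshevTheta t (cos r₂) + (8 * π ^ 8 * D *
          (∑' i, horizontalTerm t (cos r) 0 i) + 8 * π ^ 8 * D *
          ∑' i, horizontalTerm t (cos r) 1 i) := by
        rw [htail]
        gcongr
        exact sum_range_le_div_pow_mul_chebyshevTheta ht hcos₂ hlt₂.le 7
    _ ≤ _ := by
        rw [← mul_add]
        gcongr
        exact tsum_horizontalTerm_add_le_pOct ht ht1 h0 (h1.trans (h2.trans hr₂))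

theorem pOct_zero_right_nonneg {t r : ℝ} (ht : 0 < t) (hr : 0 ≤ cos r) : 0 ≤ pOct t r 0 := by
  rw [pOct_zero_right_eq_tsum ht hr]
  exact tsum_nonneg fun m ↦ tsum_nonneg (horizontalTerm_nonneg ht hr m)

theorem eventually_exp_le_pOct_zero_right {r ε : ℝ} (h0 : 0 < r) (hr : r < π / 2) (hε : 0 < ε) :
    ∀ᶠ t in 𝓝[>] (0 : ℝ), exp (-(r ^ 2 + ε) / (4 * t)) ≤ pOct t r 0 := by
  have hcont : ∀ᶠ x in 𝓝[>] r, x ^ 2 < r ^ 2 + ε :=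
    (continuousAt_id.pow 2).continuousWithinAt.eventually_lt_const (lt_add_of_pos_right _ hε)
  obtain ⟨r₁, hr₁ε, h1, hr₁⟩ := (hcont.and (Ioo_mem_nhdsGT hr)).exists
  obtain ⟨r₂, h2, hr₂⟩ := exists_between hr₁
  obtain ⟨A, B, hB, hAB⟩ := exists_chebyshevTheta_cos_le_pOct h0 h1 h2 hr₂
  have hcos : 0 ≤ cos r := cos_nonneg_of_mem_Icc ⟨by linarith, hr.le⟩
  filter_upwards [Ioo_mem_nhdsGT one_pos,
    eventually_mul_pow_le_exp (2 * B * gaussianLatticeSum) 0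
      (show 0 < r₂ ^ 2 - r₁ ^ 2 by nlinarith),
    eventually_mul_pow_le_exp (2 * A) 0 (sub_pos.2 hr₁ε)] with t ⟨ht, ht1⟩ hBt hAt
  rw [pow_zero, mul_one] at hBt hAt
  have hshift : ∀ a b : ℝ, exp ((a - b) / (4 * t)) * exp (-a / (4 * t)) = exp (-b / (4 * t)) :=
    fun a b ↦ by
      rw [← exp_add]
      ring_nf
  have hsqrt : 1 ≤ √(π / t) :=
    one_le_sqrt.2 ((one_le_div ht).2 (by linarith [pi_gt_three]))
  have hlower := le_chebyshevTheta_cos ht ht1.le (by linarith : 0 ≤ r₁) (by linarith)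
  have hupper := chebyshevTheta_cos_le ht ht1.le (by linarith : 0 ≤ r₂) hr₂.le
  have hmain : √(π / t) * exp (-r₁ ^ 2 / (4 * t)) ≤ 2 * A * pOct t r 0 := by
    have hB' := mul_le_mul_of_nonneg_right hBt (exp_pos (-r₂ ^ 2 / (4 * t))).le
    rw [hshift] at hB'
    have := mul_le_mul_of_nonneg_left hB' (sqrt_nonneg (π / t))
    linarith [hAB t ht ht1.le, mul_le_mul_of_nonneg_left hupper hB]
  have hle : exp (-r₁ ^ 2 / (4 * t)) ≤ exp ((r ^ 2 + ε - r₁ ^ 2) / (4 * t)) * pOct t r 0 :=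
    (le_mul_of_one_le_left (exp_pos _).le hsqrt).trans (hmain.trans
      (mul_le_mul_of_nonneg_right hAt (pOct_zero_right_nonneg ht hcos)))
  rwa [← hshift, mul_le_mul_iff_right₀ (exp_pos _)] at hle

theorem eventually_pOct_zero_right_le_exp {r ε : ℝ} (h0 : 0 < r) (hr : r < π / 2) (hε : 0 < ε) :
    ∀ᶠ t in 𝓝[>] (0 : ℝ), pOct t r 0 ≤ exp (-(r ^ 2 - ε) / (4 * t)) := by
  have hcont : ∀ᶠ x in 𝓝[<] r, r ^ 2 - ε < x ^ 2 :=
    (continuousAt_id.pow 2).continuousWithinAt.eventually_const_lt (sub_lt_self _ hε)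
  obtain ⟨r', hr'ε, hr'0, hr'r⟩ := (hcont.and (Ioo_mem_nhdsLT h0)).exists
  obtain ⟨C, hC⟩ := exists_pOct_zero_right_le hr'0.le hr'r hr
  filter_upwards [Ioo_mem_nhdsGT one_pos,
    eventually_mul_pow_le_exp (|C| * (4 * π)) 1 (sub_pos.2 hr'ε)] with t ⟨ht, ht1⟩ hCt
  have hsqrt : √(π / t) ≤ π / t :=
    sqrt_le_self_iff.2 (.inr ((one_le_div ht).2 (by linarith [pi_gt_three])))
  calc pOct t r 0 ≤ |C| * (π / t) * exp (-r' ^ 2 / (4 * t)) := by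
        refine (hC t ht ht1.le).trans ?_
        gcongr
        exact le_abs_self C
    _ = |C| * (4 * π) * (1 / (4 * t)) ^ 1 * exp (-r' ^ 2 / (4 * t)) := by
        field_simp
    _ ≤ exp ((r' ^ 2 - (r ^ 2 - ε)) / (4 * t)) * exp (-r' ^ 2 / (4 * t)) := by gcongr
    _ = _ := by
        rw [← exp_add]
        ring_nf

theorem tendsto_neg_log_pOct_zero_right {r : ℝ} (h0 : 0 ≤ r) (hr : r < π / 2) :
    Tendsto (fun t ↦ -(4 * t) * log (pOct t r 0)) (𝓝[>] 0) (𝓝 (r ^ 2)) := by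
  rcases h0.eq_or_lt with rfl | h0
  · simpa using tendsto_neg_log_pOct_zero_zero
  · exact tendsto_neg_four_mul_mul_log_of_le
      (fun ε hε ↦ eventually_exp_le_pOct_zero_right h0 hr hε)
      fun ε hε ↦ eventually_pOct_zero_right_le_exp h0 hr hε

/-- The squared sub-Riemannian distance of the octonionic Hopf fibration is recovered from the
subelliptic heat kernel by `d²(r,η) = −lim_{t→0⁺} 4t ln p_t(r,η)`; in particular
`d²(0,η) = 2πη − η²` for `η ∈ [0,π)` and `d²(r,0) = r²` for `r ∈ [0,π/2)`. -/
theorem pOct_subRiemannian_distance :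
    (∀ η ∈ Set.Ico (0 : ℝ) π,
        Filter.Tendsto (fun t => -(4 * t) * Real.log (pOct t 0 η)) (𝓝[>] 0)
          (𝓝 (2 * π * η - η ^ 2))) ∧
    (∀ r ∈ Set.Ico (0 : ℝ) (π / 2),
        Filter.Tendsto (fun t => -(4 * t) * Real.log (pOct t r 0)) (𝓝[>] 0)
          (𝓝 (r ^ 2))) :=
  ⟨fun _ hη ↦ tendsto_neg_log_pOct_zero_left hη.1 hη.2,
    fun _ hr ↦ tendsto_neg_log_pOct_zero_right hr.1 hr.2⟩
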